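/- Let ε > 0, let d ∈ {3,4} and n ∈ {5,6,7,8}, and let F ∈ ℤ[X_0,…,X_n] be a non-singular form of degree d, defining the non-singular hypersurface X ⊂ P^n. Then N_X(B) = O_{d,ε,n}(B^{n−1+ε}); that is, there is a constant depending only on d, ε and n such that for every B ≥ 1 the number of rational points on X of height at most B is at most that constant times B^{n−1+ε}. -/

import Mathlib

noncomputable section

abbrev KK : Type := AlgebraicClosure ℚ

/-- A primitive integer vector: the gcd of its coordinates is 1. -/
def IsPrimitiveVec {n : ℕ} (x : Fin n → ℤ) : Prop := Finset.univ.gcd x = 1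

/-- Height of an integer vector: the maximum modulus of its coordinates. -/
def heightVec {n : ℕ} (x : Fin n → ℤ) : ℝ :=
  ((Finset.univ.sup fun i => (x i).natAbs : ℕ) : ℝ)

/-- An integer form is non-singular if its partial derivatives have no common
non-trivial zero over the algebraic closure of ℚ, so that the hypersurface it
defines is non-singular. -/
def NonsingularZ {n : ℕ} (F : MvPolynomial (Fin (n + 1)) ℤ) : Prop :=
  ∀ z : Fin (n + 1) → KK,
    (∀ i, MvPolynomial.aeval z (MvPolynomial.pderiv i F) = 0) → z = 0

namespace HB

open Finset

variable {s r : ℕ}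

/-- maximal minors of an integer tuple -/
def mnr (b : Fin r → Fin s → ℤ) (J : Fin r → Fin s) : ℤ :=
  Matrix.det (Matrix.of fun k l => b k (J l))

/-- largest minor -/
def TT (b : Fin r → Fin s → ℤ) : ℕ := univ.sup fun J => (mnr b J).natAbs

/-- cast of an integer vector -/
def toQ (x : Fin s → ℤ) : Fin s → ℚ := fun i => (x i : ℚ)

theorem toQ_add (x y : Fin s → ℤ) : toQ (x + y) = toQ x + toQ y := by
  ext i; simp [toQ]

theorem toQ_sub (x y : Fin s → ℤ) : toQ (x - y) = toQ x - toQ y := by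
  ext i; simp [toQ]

theorem toQ_smul (z : ℤ) (x : Fin s → ℤ) : toQ (z • x) = (z : ℚ) • toQ x := by
  ext i; simp [toQ]

theorem toQ_sum {ι : Type*} (t : Finset ι) (f : ι → Fin s → ℤ) :
    toQ (∑ i ∈ t, f i) = ∑ i ∈ t, toQ (f i) := by
  ext i; simp [toQ]

theorem toQ_inj {x y : Fin s → ℤ} (h : toQ x = toQ y) : x = y := by
  ext i
  have := congrFun h i
  simpa [toQ] using this

theorem mnr_le_TT (b : Fin r → Fin s → ℤ) (J : Fin r → Fin s) : (mnr b J).natAbs ≤ TT b :=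
  Finset.le_sup (f := fun J => (mnr b J).natAbs) (mem_univ J)

theorem abs_mnr_le_TT (b : Fin r → Fin s → ℤ) (J : Fin r → Fin s) : |mnr b J| ≤ (TT b : ℤ) := by
  rw [Int.abs_eq_natAbs]; exact_mod_cast mnr_le_TT b J

theorem exists_mnr_eq_TT {b : Fin r → Fin s → ℤ} (h : TT b ≠ 0) :
    ∃ J, (mnr b J).natAbs = TT b := by
  have hne : (univ : Finset (Fin r → Fin s)).Nonempty := by
    by_contra hc
    rw [not_nonempty_iff_eq_empty] at hc
    apply h; simp [TT, hc]
  obtain ⟨J, -, hJ⟩ := exists_mem_eq_sup univ hne (fun J => (mnr b J).natAbs)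
  exact ⟨J, hJ.symm⟩

theorem TT_ne_zero_of_mnr {b : Fin r → Fin s → ℤ} {J} (h : mnr b J ≠ 0) : TT b ≠ 0 := by
  intro h0
  have := mnr_le_TT b J
  rw [h0] at this
  apply h; simpa using this

theorem TT_le {b : Fin r → Fin s → ℤ} {m : ℕ} (h : ∀ J, |mnr b J| ≤ (m : ℤ)) : TT b ≤ m := by
  apply Finset.sup_le
  intro J _
  have := h J
  rw [Int.abs_eq_natAbs] at this
  exact_mod_cast this

theorem mnr_comb (b c : Fin r → Fin s → ℤ) (U : Matrix (Fin r) (Fin r) ℤ)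
    (h : ∀ k, c k = ∑ l, U k l • b l) (J) : mnr c J = U.det * mnr b J := by
  unfold mnr
  rw [← Matrix.det_mul]
  congr 1
  ext k l
  simp [Matrix.mul_apply, h k]

theorem TT_comb (b c : Fin r → Fin s → ℤ) (U : Matrix (Fin r) (Fin r) ℤ)
    (h : ∀ k, c k = ∑ l, U k l • b l) : TT c = U.det.natAbs * TT b := by
  unfold TT
  simp_rw [mnr_comb b c U h, Int.natAbs_mul]
  exact (Finset.apply_sup_eq_sup_comp_of_linearOrder (fun t : ℕ => U.det.natAbs * t)
    (fun a b hab => Nat.mul_le_mul_left _ hab) (by simp)).symm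

theorem cast_mnr (b : Fin r → Fin s → ℤ) (J) :
    (mnr b J : ℚ) = (Matrix.of fun k l => ((b k (J l) : ℤ) : ℚ)).det := by
  unfold mnr
  exact (Int.castRingHom ℚ).map_det _

theorem det_updateRow_one {R : Type*} [CommRing R] (k : Fin r) (v : Fin r → R) :
    ((1 : Matrix (Fin r) (Fin r) R).updateRow k v).det = v k := by
  have h1 : v = ∑ l, v l • (1 : Matrix (Fin r) (Fin r) R) l := by
    ext l; simp [Matrix.one_apply]
  conv_lhs => rw [h1, Matrix.det_updateRow_sum]
  simp

/-- rational combinations -/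
theorem mnr_combQ (b c : Fin r → Fin s → ℤ) (U : Matrix (Fin r) (Fin r) ℚ)
    (h : ∀ k, toQ (c k) = ∑ l, U k l • toQ (b l)) (J) :
    (mnr c J : ℚ) = U.det * mnr b J := by
  rw [cast_mnr, cast_mnr, ← Matrix.det_mul]
  congr 1
  ext k l
  have := congrFun (h k) (J l)
  simpa [Matrix.mul_apply, toQ] using this

/-- a tuple with a nonzero minor is independent -/
theorem linInd_of_TT {b : Fin r → Fin s → ℤ} (h : TT b ≠ 0) :
    LinearIndependent ℚ (fun k => toQ (b k)) := by
  obtain ⟨J, hJ⟩ := exists_mnr_eq_TT h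
  rw [Fintype.linearIndependent_iff]
  intro g hg
  have hdet : (Matrix.of fun k l => ((b k (J l) : ℤ) : ℚ)).det ≠ 0 := by
    rw [← cast_mnr]
    have : mnr b J ≠ 0 := by
      intro h0; rw [h0] at hJ; exact h (by simpa using hJ.symm)
    exact_mod_cast this
  have h2 := Matrix.eq_zero_of_vecMul_eq_zero hdet (v := g) (by
    ext l
    have := congrFun hg (J l)
    simpa [Matrix.vecMul, dotProduct, toQ] using this)
  intro i; rw [h2]; rfl

theorem TT_of_linInd {b : Fin r → Fin s → ℤ} (h : LinearIndependent ℚ (fun k => toQ (b k))) :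
    TT b ≠ 0 := by
  -- columns span
  let A : Matrix (Fin r) (Fin s) ℚ := Matrix.of fun k => toQ (b k)
  have hrank : A.rank = r := by
    have := LinearIndependent.rank_matrix (M := A) h
    simpa using this
  rw [Matrix.rank_eq_finrank_span_cols] at hrank
  obtain ⟨f, hf, -, hli⟩ := Submodule.exists_fun_fin_finrank_span_eq ℚ (Set.range A.col)
  choose J hJ using hf
  have hli' : LinearIndependent ℚ (fun l : Fin r => A.col (J (Fin.cast hrank.symm l))) := by
    have := hli.comp (Fin.cast hrank.symm) (Fin.cast_injective _)
    have he : f ∘ Fin.cast hrank.symm = fun l : Fin r => A.col (J (Fin.cast hrank.symm l)) := by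
      funext l; exact (hJ _).symm
    rw [he] at this; exact this
  apply TT_ne_zero_of_mnr (J := fun l => J (Fin.cast hrank.symm l))
  have hu : LinearIndependent ℚ (Matrix.col (Matrix.of fun k l => ((b k (J (Fin.cast hrank.symm l)) : ℤ) : ℚ))) := hli'
  rw [Matrix.linearIndependent_cols_iff_isUnit, Matrix.isUnit_iff_isUnit_det] at hu
  have h1 := cast_mnr b (fun l => J (Fin.cast hrank.symm l))
  rw [← h1] at hu
  intro h0; rw [h0] at hu; simp at hu

/-- `b` is a ℤ-basis of the integer points of `W` -/
def ZB (W : Submodule ℚ (Fin s → ℚ)) (b : Fin r → Fin s → ℤ) : Prop :=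
  TT b ≠ 0 ∧ (∀ k, toQ (b k) ∈ W) ∧
    ∀ x : Fin s → ℤ, toQ x ∈ W → ∃ z : Fin r → ℤ, x = ∑ k, z k • b k

/-- height of a rational subspace of dimension `r` -/
def ht (r : ℕ) (W : Submodule ℚ (Fin s → ℚ)) : ℕ :=
  sInf {t | ∃ b : Fin r → Fin s → ℤ, (∀ k, toQ (b k) ∈ W) ∧ TT b = t ∧ t ≠ 0}

theorem ht_le {W : Submodule ℚ (Fin s → ℚ)} {b : Fin r → Fin s → ℤ} (h : ∀ k, toQ (b k) ∈ W)
    (h0 : TT b ≠ 0) : ht r W ≤ TT b :=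
  Nat.sInf_le ⟨b, h, rfl, h0⟩

theorem ZB.ht_eq {W : Submodule ℚ (Fin s → ℚ)} {b : Fin r → Fin s → ℤ} (h : ZB W b) :
    TT b = ht r W := by
  apply le_antisymm _ (ht_le h.2.1 h.1)
  have hmem := Nat.sInf_mem (s := {t | ∃ b : Fin r → Fin s → ℤ, (∀ k, toQ (b k) ∈ W) ∧ TT b = t ∧ t ≠ 0})
    ⟨TT b, b, h.2.1, rfl, h.1⟩
  obtain ⟨c, hc, hT, h0⟩ := hmem
  change _ = ht r W at hT
  change ht r W ≠ 0 at h0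
  rw [← hT]
  choose U hU using fun k => h.2.2 (c k) (hc k)
  have := TT_comb b c U hU
  rw [this]
  apply Nat.le_mul_of_pos_left
  apply Nat.pos_of_ne_zero
  intro hz
  rw [hz] at this
  omega

theorem exists_int_mul (x : Fin s → ℚ) : ∃ (m : ℤ) (y : Fin s → ℤ), m ≠ 0 ∧ toQ y = (m : ℚ) • x := by
  refine ⟨∏ i, ((x i).den : ℤ), fun i => (∏ j ∈ univ.erase i, ((x j).den : ℤ)) * (x i).num, ?_, ?_⟩
  · rw [Finset.prod_ne_zero_iff]; intro i _; exact_mod_cast (x i).den_nz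
  · ext i
    simp only [toQ, Pi.smul_apply, smul_eq_mul]
    rw [← Finset.mul_prod_erase univ _ (mem_univ i)]
    push_cast
    have := Rat.mul_den_eq_num (x i)
    rw [← this]; ring

/-- every subspace contains an independent integer tuple -/
theorem exists_tuple {W : Submodule ℚ (Fin s → ℚ)} (hW : Module.finrank ℚ W = r) :
    ∃ b : Fin r → Fin s → ℤ, (∀ k, toQ (b k) ∈ W) ∧ TT b ≠ 0 := by
  let B := Module.finBasisOfFinrankEq ℚ W hW
  choose m y hm hy using fun k => exists_int_mul ((B k : W) : Fin s → ℚ)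
  refine ⟨y, fun k => ?_, ?_⟩
  · rw [hy]; exact W.smul_mem _ (B k).2
  · apply TT_of_linInd
    have h1 : LinearIndependent ℚ (fun k => ((B k : W) : Fin s → ℚ)) :=
      B.linearIndependent.map' W.subtype W.ker_subtype
    have h2 := h1.units_smul (fun k => Units.mk0 (m k : ℚ) (by exact_mod_cast hm k))
    convert h2 using 1
    ext k i
    rw [hy]; rfl

/-- span of a full tuple -/
theorem span_eq {W : Submodule ℚ (Fin s → ℚ)} (hW : Module.finrank ℚ W = r)
    {b : Fin r → Fin s → ℤ} (hb : ∀ k, toQ (b k) ∈ W) (h0 : TT b ≠ 0) :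
    Submodule.span ℚ (Set.range fun k => toQ (b k)) = W := by
  apply Submodule.eq_of_le_of_finrank_eq
  · rw [Submodule.span_le]; rintro _ ⟨k, rfl⟩; exact hb k
  · rw [finrank_span_eq_card (linInd_of_TT h0), hW]; simp

theorem ZB_of_min {W : Submodule ℚ (Fin s → ℚ)} (hW : Module.finrank ℚ W = r)
    {b : Fin r → Fin s → ℤ} (hb : ∀ k, toQ (b k) ∈ W) (h0 : TT b ≠ 0) (hm : TT b = ht r W) :
    ZB W b := by
  refine ⟨h0, hb, fun x hx => ?_⟩
  rw [← span_eq hW hb h0, Submodule.mem_span_range_iff_exists_fun] at hx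
  obtain ⟨q, hq⟩ := hx
  -- all coefficients are integers
  have hfract : ∀ k, Int.fract (q k) = 0 := by
    intro k
    by_contra hne
    let y : Fin s → ℤ := x - ∑ l, ⌊q l⌋ • b l
    have hy : toQ y = ∑ l, Int.fract (q l) • toQ (b l) := by
      simp only [y, toQ_sub, toQ_sum, toQ_smul, ← hq, ← Finset.sum_sub_distrib, ← sub_smul, Int.fract]
    let c := Function.update b k y
    have hdet := det_updateRow_one (R := ℚ) k (fun l => Int.fract (q l))
    have hc : ∀ J, (mnr c J : ℚ) = Int.fract (q k) * mnr b J := by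
      intro J
      rw [← hdet]
      apply mnr_combQ
      intro l
      by_cases hl : l = k
      · subst hl; simp [c, hy]
      · simp [c, hl, Matrix.one_apply]
    obtain ⟨J, hJ⟩ := exists_mnr_eq_TT h0
    have hcT : TT c ≠ 0 := by
      apply TT_ne_zero_of_mnr (J := J)
      have : (mnr c J : ℚ) ≠ 0 := by
        rw [hc]; apply mul_ne_zero hne
        intro h; rw [Int.cast_eq_zero] at h; rw [h] at hJ; exact h0 (by simpa using hJ.symm)
      exact_mod_cast this
    have hlt : TT c < TT b := by
      obtain ⟨J, hJ⟩ := exists_mnr_eq_TT hcT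
      have h2 := hc J
      have h3 : |(mnr c J : ℚ)| < TT b := by
        have hb' : |(mnr b J : ℚ)| ≤ TT b := by exact_mod_cast abs_mnr_le_TT b J
        rw [h2, abs_mul, abs_of_nonneg (Int.fract_nonneg _)]
        have hTp : (0 : ℚ) < TT b := by exact_mod_cast Nat.pos_of_ne_zero h0
        have hf := Int.fract_lt_one (q k)
        have hf0 := Int.fract_nonneg (q k)
        nlinarith
      rw [← hJ]
      have h4 : |mnr c J| < (TT b : ℤ) := by exact_mod_cast h3
      rw [Int.abs_eq_natAbs] at h4
      exact_mod_cast h4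
    have : ht r W ≤ TT c := by
      apply ht_le _ hcT
      intro l
      by_cases hl : l = k
      · subst hl; simp only [c, Function.update_self, hy]
        exact W.sum_mem fun i _ => W.smul_mem _ (hb i)
      · simp only [c, Function.update_of_ne hl]; exact hb l
    omega
  refine ⟨fun k => ⌊q k⌋, toQ_inj ?_⟩
  simp only [toQ_sum, toQ_smul, ← hq]
  apply Finset.sum_congr rfl
  intro k _
  have := hfract k
  congr 1
  rw [← Int.floor_add_fract (q k), this]; simp

theorem exists_ZB {W : Submodule ℚ (Fin s → ℚ)} (hW : Module.finrank ℚ W = r) :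
    ∃ b : Fin r → Fin s → ℤ, ZB W b := by
  obtain ⟨b, hb, h0⟩ := exists_tuple hW
  have hmem := Nat.sInf_mem (s := {t | ∃ b : Fin r → Fin s → ℤ, (∀ k, toQ (b k) ∈ W) ∧ TT b = t ∧ t ≠ 0})
    ⟨TT b, b, hb, rfl, h0⟩
  obtain ⟨c, hc, hT, h0⟩ := hmem
  exact ⟨c, ZB_of_min hW hc (by rw [hT]; exact h0) hT⟩

theorem ZB.span_eq {W : Submodule ℚ (Fin s → ℚ)} {b : Fin r → Fin s → ℤ} (h : ZB W b) :
    Submodule.span ℚ (Set.range fun k => toQ (b k)) = W := by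
  apply le_antisymm
  · rw [Submodule.span_le]; rintro _ ⟨k, rfl⟩; exact h.2.1 k
  · intro x hx
    obtain ⟨m, y, hm, hy⟩ := exists_int_mul x
    have hyW : toQ y ∈ W := by rw [hy]; exact W.smul_mem _ hx
    obtain ⟨z, hz⟩ := h.2.2 y hyW
    have hmQ : (m : ℚ) ≠ 0 := by exact_mod_cast hm
    have : x = (m : ℚ)⁻¹ • toQ y := by rw [hy, smul_smul, inv_mul_cancel₀ hmQ, one_smul]
    rw [this, hz, toQ_sum]
    apply Submodule.smul_mem
    apply Submodule.sum_mem
    intro k _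
    rw [toQ_smul]
    exact Submodule.smul_mem _ _ (Submodule.subset_span ⟨k, rfl⟩)

theorem ZB.finrank {W : Submodule ℚ (Fin s → ℚ)} {b : Fin r → Fin s → ℤ} (h : ZB W b) :
    Module.finrank ℚ W = r := by
  rw [← h.span_eq, finrank_span_eq_card (linInd_of_TT h.1)]; simp

theorem ht_pos {W : Submodule ℚ (Fin s → ℚ)} (hW : Module.finrank ℚ W = r) : 1 ≤ ht r W := by
  obtain ⟨b, hb⟩ := exists_ZB hW
  rw [← hb.ht_eq]; exact Nat.pos_of_ne_zero hb.1

/-- a ℤ-basis of `W` extends to one of `W'` -/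
theorem ZB.extend {W W' : Submodule ℚ (Fin s → ℚ)} (hle : W ≤ W')
    (hW' : Module.finrank ℚ W' = r + 1) {b : Fin r → Fin s → ℤ} (h : ZB W b) :
    ∃ w : Fin s → ℤ, ZB W' (Fin.cons w b : Fin (r + 1) → Fin s → ℤ) := by
  let C : (Fin s → ℤ) → Fin (r + 1) → Fin s → ℤ := fun w => Fin.cons w b
  have hCmem : ∀ w, toQ w ∈ W' → ∀ k, toQ (C w k) ∈ W' := by
    intro w hw k
    refine Fin.cases ?_ (fun k => ?_) k
    · exact hw
    · exact hle (h.2.1 k)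
  -- some extension exists
  have hex : ∃ w : Fin s → ℤ, toQ w ∈ W' ∧ TT (C w) ≠ 0 := by
    obtain ⟨c, hc, hc0⟩ := exists_tuple hW'
    have : ∃ k, toQ (c k) ∉ W := by
      by_contra hcon
      push Not at hcon
      have h1 := HB.span_eq hW' hc hc0
      have h2 : W' ≤ W := by
        rw [← h1, Submodule.span_le]; rintro _ ⟨k, rfl⟩; exact hcon k
      have h3 := Submodule.finrank_mono h2
      rw [hW', h.finrank] at h3
      omega
    obtain ⟨k, hk⟩ := this
    refine ⟨c k, hc k, TT_of_linInd ?_⟩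
    have he : (fun i => toQ (C (c k) i)) = Fin.cons (toQ (c k)) (fun i => toQ (b i)) := by
      ext i j
      refine Fin.cases ?_ (fun i => ?_) i <;> rfl
    rw [he, linearIndependent_finCons]
    refine ⟨linInd_of_TT h.1, ?_⟩
    rw [h.span_eq]; exact hk
  have hmem := Nat.sInf_mem (s := {t | ∃ w : Fin s → ℤ, toQ w ∈ W' ∧ TT (C w) = t ∧ t ≠ 0})
    (by obtain ⟨w, h1, h2⟩ := hex; exact ⟨_, w, h1, rfl, h2⟩)
  obtain ⟨w, hw, hT, h0⟩ := hmem
  set m := sInf {t | ∃ w : Fin s → ℤ, toQ w ∈ W' ∧ TT (C w) = t ∧ t ≠ 0} with hm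
  have hmin : ∀ y : Fin s → ℤ, toQ y ∈ W' → TT (C y) ≠ 0 → m ≤ TT (C y) := fun y h1 h2 =>
    Nat.sInf_le ⟨y, h1, rfl, h2⟩
  rw [← hT] at h0
  refine ⟨w, h0, hCmem w hw, fun x hx => ?_⟩
  have hx' := hx
  rw [← HB.span_eq hW' (hCmem w hw) h0, Submodule.mem_span_range_iff_exists_fun] at hx'
  obtain ⟨q, hq⟩ := hx'
  have hq' : toQ x = q 0 • toQ w + ∑ k, q (Fin.succ k) • toQ (b k) := by
    rw [← hq, Fin.sum_univ_succ]; rfl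
  let y : Fin s → ℤ := x - ⌊q 0⌋ • w
  have hy : toQ y = Int.fract (q 0) • toQ w + ∑ k, q (Fin.succ k) • toQ (b k) := by
    simp only [y, toQ_sub, toQ_smul, hq', Int.fract, sub_smul]
    abel
  have hyW : toQ y ∈ W' := by
    simp only [y, toQ_sub, toQ_smul]
    exact W'.sub_mem hx (W'.smul_mem _ hw)
  have hc : ∀ J, (mnr (C y) J : ℚ) = Int.fract (q 0) * mnr (C w) J := by
    intro J
    have hdet := det_updateRow_one (R := ℚ) (0 : Fin (r + 1))
      (Fin.cons (Int.fract (q 0)) (fun k => q (Fin.succ k)))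
    rw [Fin.cons_zero] at hdet
    rw [← hdet]
    apply mnr_combQ
    intro l
    refine Fin.cases ?_ (fun l => ?_) l
    · rw [Fin.sum_univ_succ]; simp [C, hy]
    · simp [Matrix.one_apply, C, Fin.succ_ne_zero]
  have hfr : Int.fract (q 0) = 0 := by
    by_contra hne
    obtain ⟨J, hJ⟩ := exists_mnr_eq_TT h0
    have hcT : TT (C y) ≠ 0 := by
      apply TT_ne_zero_of_mnr (J := J)
      have : (mnr (C y) J : ℚ) ≠ 0 := by
        rw [hc]; apply mul_ne_zero hne
        intro h; rw [Int.cast_eq_zero] at h; rw [h] at hJ; exact h0 (by simpa using hJ.symm)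
      exact_mod_cast this
    have hlt : TT (C y) < TT (C w) := by
      obtain ⟨J, hJ⟩ := exists_mnr_eq_TT hcT
      have h2 := hc J
      have h3 : |(mnr (C y) J : ℚ)| < TT (C w) := by
        have hb' : |(mnr (C w) J : ℚ)| ≤ TT (C w) := by exact_mod_cast abs_mnr_le_TT (C w) J
        rw [h2, abs_mul, abs_of_nonneg (Int.fract_nonneg _)]
        have hTp : (0 : ℚ) < TT (C w) := by exact_mod_cast Nat.pos_of_ne_zero h0
        have hf := Int.fract_lt_one (q 0)
        have hf0 := Int.fract_nonneg (q 0)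
        nlinarith
      rw [← hJ]
      have h4 : |mnr (C y) J| < (TT (C w) : ℤ) := by exact_mod_cast h3
      rw [Int.abs_eq_natAbs] at h4
      exact_mod_cast h4
    have := hmin y hyW hcT
    omega
  have hyW2 : toQ y ∈ W := by
    rw [hy, hfr, zero_smul, zero_add]
    exact W.sum_mem fun i _ => W.smul_mem _ (h.2.1 i)
  obtain ⟨z, hz⟩ := h.2.2 y hyW2
  refine ⟨Fin.cons ⌊q 0⌋ z, ?_⟩
  rw [Fin.sum_univ_succ]
  simp only [Fin.cons_zero, Fin.cons_succ]
  rw [← hz]; simp [y]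

end HB

namespace HB

open Finset

variable {s r : ℕ}

theorem card_quot (M : Matrix (Fin r) (Fin r) ℤ) (h : M.det ≠ 0) :
    Nat.card ((Fin r → ℤ) ⧸ LinearMap.range (Matrix.toLin' M)) = M.det.natAbs := by
  have hinj : Function.Injective (Matrix.toLin' M) := by
    intro x y hxy
    simp only [Matrix.toLin'_apply] at hxy
    exact Matrix.mulVec_injective_of_det_ne_zero h hxy
  rw [← Submodule.natAbs_det_equiv (LinearMap.range (Matrix.toLin' M))
    (LinearEquiv.ofInjective (Matrix.toLin' M) hinj)]
  congr 1
  rw [← LinearMap.det_toLin']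
  congr 1

/-- the vector of minors `(j, I)` -/
def uv (b : Fin r → Fin s → ℤ) (I : Fin r → Fin s) (w : Fin s → ℤ) : Fin s → ℤ :=
  fun j => mnr (Fin.cons w b : Fin (r + 1) → Fin s → ℤ) (Fin.cons j I)

theorem mnr_cons_row (b : Fin r → Fin s → ℤ) (w : Fin s → ℤ) (J : Fin (r + 1) → Fin s) :
    mnr (Fin.cons w b : Fin (r + 1) → Fin s → ℤ) J =
      ∑ j : Fin (r + 1), (-1) ^ (j : ℕ) * w (J j) * mnr b (fun l => J (j.succAbove l)) := by
  unfold mnr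
  rw [Matrix.det_succ_row_zero]
  rfl

theorem uv_sub (b : Fin r → Fin s → ℤ) (I : Fin r → Fin s) (w w' : Fin s → ℤ) :
    uv b I (w - w') = uv b I w - uv b I w' := by
  ext j
  simp only [uv, mnr_cons_row, Pi.sub_apply, ← Finset.sum_sub_distrib]
  exact Finset.sum_congr rfl fun i _ => by ring

theorem uv_comb (b : Fin r → Fin s → ℤ) (I : Fin r → Fin s) (z : Fin r → ℤ) :
    uv b I (∑ k, z k • b k) = 0 := by
  ext j
  have h1 : uv b I (∑ k, z k • b k) j = ∑ k, z k * uv b I (b k) j := by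
    simp only [uv, mnr_cons_row, Finset.sum_apply, Pi.smul_apply, smul_eq_mul, Finset.mul_sum,
      Finset.sum_mul]
    rw [Finset.sum_comm]
    exact Finset.sum_congr rfl fun i _ => Finset.sum_congr rfl fun i _ => by ring
  rw [h1]
  apply Finset.sum_eq_zero
  intro k _
  have : uv b I (b k) j = 0 := by
    unfold uv mnr
    apply Matrix.det_zero_of_row_eq (i := 0) (j := k.succ) (Fin.succ_ne_zero k).symm
    ext l; simp
  rw [this, mul_zero]

theorem uv_of_zero (b : Fin r → Fin s → ℤ) (I : Fin r → Fin s) (w : Fin s → ℤ)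
    (h : ∀ l, w (I l) = 0) (j) : uv b I w j = w j * mnr b I := by
  simp only [uv, mnr_cons_row]
  rw [Fin.sum_univ_succ]
  simp [h]

theorem uv_eq (b : Fin r → Fin s → ℤ) (I : Fin r → Fin s) (w : Fin s → ℤ) :
    ∃ κ : Fin r → ℤ, uv b I w = mnr b I • w + ∑ k, κ k • b k := by
  refine ⟨fun k => (-1) ^ ((k.succ : Fin (r+1)) : ℕ) * Matrix.det (Matrix.of fun i l =>
    (Fin.cons w b : Fin (r + 1) → Fin s → ℤ) (k.succ.succAbove i) (I l)), ?_⟩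
  ext j
  unfold uv
  conv_lhs => unfold mnr
  rw [Matrix.det_succ_column_zero, Fin.sum_univ_succ]
  simp only [Pi.add_apply, Finset.sum_apply, Pi.smul_apply, smul_eq_mul]
  congr 1
  · have : (Matrix.submatrix (Matrix.of fun k l => (Fin.cons w b : Fin (r + 1) → Fin s → ℤ) k
      ((Fin.cons j I : Fin (r+1) → Fin s) l)) (Fin.succAbove 0) Fin.succ) =
      Matrix.of fun k l => b k (I l) := by ext k l; simp
    rw [this]
    simp only [mnr, Matrix.of_apply, Fin.cons_zero, Fin.val_zero, pow_zero, one_mul]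
    ring
  · apply Finset.sum_congr rfl
    intro k _
    have : (Matrix.submatrix (Matrix.of fun k l => (Fin.cons w b : Fin (r + 1) → Fin s → ℤ) k
      ((Fin.cons j I : Fin (r+1) → Fin s) l)) (Fin.succAbove k.succ) Fin.succ) =
      Matrix.of fun i l =>
    (Fin.cons w b : Fin (r + 1) → Fin s → ℤ) (k.succ.succAbove i) (I l) := by
      ext k l; simp
    rw [this]
    simp only [Matrix.of_apply, Fin.cons_zero, Fin.cons_succ]
    ring

theorem abs_uv_le {W' : Submodule ℚ (Fin s → ℚ)} {b : Fin r → Fin s → ℤ} {w : Fin s → ℤ}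
    (h : ZB W' (Fin.cons w b : Fin (r + 1) → Fin s → ℤ)) (I : Fin r → Fin s) (j : Fin s) :
    |uv b I w j| ≤ ht (r + 1) W' := by
  rw [← h.ht_eq]; exact abs_mnr_le_TT _ _

/-- Tube lemma -/
theorem tube {W : Submodule ℚ (Fin s → ℚ)} (hW : Module.finrank ℚ W = r) (ρ : ℕ)
    (S : Finset (Submodule ℚ (Fin s → ℚ)))
    (hS : ∀ W' ∈ S, W ≤ W' ∧ Module.finrank ℚ W' = r + 1 ∧ ht (r + 1) W' ≤ ρ * ht r W) :
    #S ≤ ht r W * (2 * ρ + 1) ^ s := by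
  classical
  obtain ⟨b, hb⟩ := exists_ZB hW
  obtain ⟨I, hI⟩ := exists_mnr_eq_TT hb.1
  rw [hb.ht_eq] at hI
  have hH : 1 ≤ ht r W := ht_pos hW
  have hD : mnr b I ≠ 0 := by intro h; rw [h] at hI; simp at hI; omega
  let M : Matrix (Fin r) (Fin r) ℤ := Matrix.of fun l k => b k (I l)
  have hM : M.det = mnr b I := by
    unfold mnr; rw [← Matrix.det_transpose]; rfl
  have hcard := card_quot M (by rw [hM]; exact hD)
  rw [hM, hI] at hcard
  let Q := (Fin r → ℤ) ⧸ LinearMap.range (Matrix.toLin' M)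
  have hfin : Finite Q := Nat.finite_of_card_ne_zero (by rw [hcard]; omega)
  have : Fintype Q := Fintype.ofFinite Q
  have hex : ∀ W' : Submodule ℚ (Fin s → ℚ), ∃ w : Fin s → ℤ, W' ∈ S →
      ZB W' (Fin.cons w b : Fin (r + 1) → Fin s → ℤ) := by
    intro W'
    by_cases h : W' ∈ S
    · obtain ⟨h1, h2, -⟩ := hS W' h
      obtain ⟨w, hw⟩ := hb.extend h1 h2
      exact ⟨w, fun _ => hw⟩
    · exact ⟨0, fun h' => absurd h' h⟩
  choose w hw using hex
  let f : Submodule ℚ (Fin s → ℚ) → Q × (Fin s → ℤ) := fun W' =>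
    (Submodule.Quotient.mk (fun l => w W' (I l)), fun j => uv b I (w W') j / (ht r W : ℤ))
  have hHz : (0 : ℤ) < ht r W := by exact_mod_cast hH
  have hmaps : ∀ W' ∈ S, f W' ∈ (univ : Finset Q) ×ˢ Fintype.piFinset (fun _ : Fin s => Icc (-(ρ : ℤ)) ρ) := by
    intro W' h
    rw [Finset.mem_product, Fintype.mem_piFinset]
    refine ⟨mem_univ _, fun j => ?_⟩
    have h1 := abs_uv_le (hw W' h) I j
    have h2 : (ht (r + 1) W' : ℤ) ≤ ρ * ht r W := by exact_mod_cast (hS W' h).2.2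
    rw [abs_le] at h1
    rw [Finset.mem_Icc]
    constructor
    · apply (Int.le_ediv_iff_mul_le hHz).2; nlinarith
    · apply Int.ediv_le_of_le_mul hHz; linarith
  have hspan : ∀ W' ∈ S, W' = W ⊔ Submodule.span ℚ {toQ (uv b I (w W'))} := by
    intro W' h
    have hz := hw W' h
    obtain ⟨κ, hκ⟩ := uv_eq b I (w W')
    have hDQ : (mnr b I : ℚ) ≠ 0 := by exact_mod_cast hD
    have hc : toQ (uv b I (w W')) = (mnr b I : ℚ) • toQ (w W') + ∑ k, (κ k : ℚ) • toQ (b k) := by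
      rw [hκ, toQ_add, toQ_smul, toQ_sum]; simp only [toQ_smul]
    have hsum : ∑ k, (κ k : ℚ) • toQ (b k) ∈ W :=
      W.sum_mem fun i _ => W.smul_mem _ (hb.2.1 i)
    have hw0 : toQ (w W') ∈ W' := hz.2.1 0
    apply le_antisymm
    · refine le_trans hz.span_eq.ge ?_
      rw [Submodule.span_le]
      rintro _ ⟨k, rfl⟩
      refine Fin.cases ?_ (fun k => ?_) k
      · simp only [Fin.cons_zero]
        have : toQ (w W') = (mnr b I : ℚ)⁻¹ • (toQ (uv b I (w W')) - ∑ k, (κ k : ℚ) • toQ (b k)) := by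
          rw [hc, add_sub_cancel_right, smul_smul, inv_mul_cancel₀ hDQ, one_smul]
        rw [this]
        apply Submodule.smul_mem
        apply Submodule.sub_mem
        · exact Submodule.mem_sup_right (Submodule.mem_span_singleton_self _)
        · exact Submodule.mem_sup_left hsum
      · exact Submodule.mem_sup_left (hb.2.1 k)
    · apply sup_le (hS W' h).1
      rw [Submodule.span_singleton_le_iff_mem, hc]
      exact W'.add_mem (W'.smul_mem _ hw0) ((hS W' h).1 hsum)
  have hinj : Set.InjOn f S := by
    intro W1 h1 W2 h2 h12
    simp only [f, Prod.mk.injEq] at h12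
    obtain ⟨hq, hu⟩ := h12
    rw [Submodule.Quotient.eq] at hq
    obtain ⟨z, hz⟩ := hq
    let v : Fin s → ℤ := w W1 - w W2 - ∑ k, z k • b k
    have hv : ∀ l, v (I l) = 0 := by
      intro l
      have := congrFun hz l
      simp only [Matrix.toLin'_apply, Matrix.mulVec, dotProduct, M, Matrix.of_apply, Pi.sub_apply] at this
      simp only [v, Pi.sub_apply, Finset.sum_apply, Pi.smul_apply, smul_eq_mul]
      rw [← this, sub_eq_zero]
      exact Finset.sum_congr rfl fun i _ => by ring
    have huv : ∀ j, uv b I (w W1) j - uv b I (w W2) j = v j * mnr b I := by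
      intro j
      rw [← uv_of_zero b I v hv]
      simp only [v, uv_sub, uv_comb, Pi.sub_apply, Pi.zero_apply, sub_zero]
    have heq : uv b I (w W1) = uv b I (w W2) := by
      ext j
      have h3 := huv j
      have h4 := congrFun hu j

      have e1 := Int.emod_add_mul_ediv (uv b I (w W1) j) (ht r W)
      have e2 := Int.emod_add_mul_ediv (uv b I (w W2) j) (ht r W)
      have l1 := Int.emod_nonneg (uv b I (w W1) j) hHz.ne'
      have l2 := Int.emod_nonneg (uv b I (w W2) j) hHz.ne'
      have l3 := Int.emod_lt_of_pos (uv b I (w W1) j) hHz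
      have l4 := Int.emod_lt_of_pos (uv b I (w W2) j) hHz
      rw [h4] at e1
      have h5 : |uv b I (w W1) j - uv b I (w W2) j| < |mnr b I| := by
        rw [Int.abs_eq_natAbs (mnr b I), hI, abs_lt]; constructor <;> linarith
      rw [h3, abs_mul] at h5
      have h6 : |v j| < 1 := by
        by_contra hc
        push Not at hc
        nlinarith [abs_nonneg (mnr b I)]
      rw [Int.abs_lt_one_iff] at h6
      rw [h6, zero_mul, sub_eq_zero] at h3
      exact h3
    rw [hspan W1 h1, hspan W2 h2, heq]
  have := Finset.card_le_card_of_injOn f hmaps hinj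
  rw [Finset.card_product, Finset.card_univ, Fintype.card_piFinset] at this
  rw [← Nat.card_eq_fintype_card, hcard] at this
  simp only [Int.card_Icc, prod_const, card_univ, Fintype.card_fin] at this
  convert this using 3
  omega

end HB

namespace HB

open Finset

variable {s r : ℕ}

theorem mnr_cons_comb (X : Fin r → Fin s → ℤ) (w : Fin s → ℤ) (m : ℤ) (z : Fin r → ℤ) (J) :
    mnr (Fin.cons (m • w + ∑ k, z k • X k) X : Fin (r + 1) → Fin s → ℤ) J =
      m * mnr (Fin.cons w X : Fin (r + 1) → Fin s → ℤ) J := by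
  have hdet := det_updateRow_one (R := ℤ) (0 : Fin (r + 1)) (Fin.cons m z)
  rw [Fin.cons_zero] at hdet
  refine (mnr_comb _ _ _ (fun l => ?_) J).trans (by rw [hdet])
  refine Fin.cases ?_ (fun l => ?_) l
  · rw [Fin.sum_univ_succ]; simp
  · rw [Fin.sum_univ_succ]; simp [Matrix.one_apply, Fin.succ_ne_zero, Fin.cons_succ]

theorem abs_mnr_cons_le (b : Fin r → Fin s → ℤ) (w : Fin s → ℤ) (J : Fin (r + 1) → Fin s)
    (A B : ℤ) (hw : ∀ j, |w j| ≤ A) (hb : ∀ J, |mnr b J| ≤ B) :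
    |mnr (Fin.cons w b : Fin (r + 1) → Fin s → ℤ) J| ≤ (r + 1) * (A * B) := by
  rw [mnr_cons_row]
  refine (Finset.abs_sum_le_sum_abs _ _).trans ?_
  have : ∀ j ∈ (univ : Finset (Fin (r + 1))),
      |(-1) ^ (j : ℕ) * w (J j) * mnr b (fun l => J (j.succAbove l))| ≤ A * B := by
    intro j _
    rw [abs_mul, abs_mul, abs_pow, abs_neg, abs_one, one_pow, one_mul]
    exact mul_le_mul (hw _) (hb _) (abs_nonneg _) ((abs_nonneg _).trans (hw (J j)))
  refine (Finset.sum_le_card_nsmul _ _ _ this).trans ?_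
  simp

theorem submod {Θ W W' : Submodule ℚ (Fin s → ℚ)} (hΘ : Module.finrank ℚ Θ = r)
    (hW : Module.finrank ℚ W = r + 1) (hW' : Module.finrank ℚ W' = r + 1) (h1 : Θ ≤ W)
    (h2 : Θ ≤ W') (hne : W ≠ W') :
    ht (r + 2) (W ⊔ W') * ht r Θ ≤ (r + 2) * (r + 1) * (ht (r + 1) W * ht (r + 1) W') := by
  obtain ⟨β, hβ⟩ := exists_ZB hΘ
  obtain ⟨I, hI⟩ := exists_mnr_eq_TT hβ.1
  rw [hβ.ht_eq] at hI
  have hH : 1 ≤ ht r Θ := ht_pos hΘ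
  obtain ⟨w, hw⟩ := hβ.extend h1 hW
  obtain ⟨w', hw'⟩ := hβ.extend h2 hW'
  set X : Fin (r + 1) → Fin s → ℤ := Fin.cons w β with hX
  let c : Fin (r + 2) → Fin s → ℤ := Fin.cons w' X
  have hw'W : toQ w' ∉ W := by
    intro hc
    apply hne
    symm
    apply Submodule.eq_of_le_of_finrank_eq
    · rw [← hw'.span_eq, Submodule.span_le]
      rintro _ ⟨k, rfl⟩
      refine Fin.cases ?_ (fun k => ?_) k
      · exact hc
      · exact h1 (hβ.2.1 k)
    · rw [hW, hW']
  have hTc : TT c ≠ 0 := by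
    apply TT_of_linInd
    have he : (fun i => toQ (c i)) = Fin.cons (toQ w') (fun i => toQ (X i)) := by
      ext i j
      refine Fin.cases ?_ (fun i => ?_) i <;> rfl
    rw [he, linearIndependent_finCons]
    refine ⟨linInd_of_TT hw.1, ?_⟩
    rw [hw.span_eq]; exact hw'W
  have hcm : ∀ k, toQ (c k) ∈ W ⊔ W' := by
    intro k
    refine Fin.cases ?_ (fun k => ?_) k
    · exact Submodule.mem_sup_right (hw'.2.1 0)
    · exact Submodule.mem_sup_left (hw.2.1 k)
  have hle := ht_le hcm hTc
  -- the vectors u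
  obtain ⟨κ, hκ⟩ := uv_eq β I w
  obtain ⟨κ', hκ'⟩ := uv_eq β I w'
  set D := mnr β I with hD
  set H := ht r Θ with hHdef
  let Y : Fin (r + 1) → Fin s → ℤ := Fin.cons (uv β I w) β
  have hY : ∀ J, mnr Y J = D * mnr X J := by
    intro J; simp only [Y, hκ]; exact mnr_cons_comb _ _ _ _ _
  have hYle : ∀ J, |mnr Y J| ≤ (r + 1) * ((ht (r + 1) W : ℤ) * H) := by
    intro J
    apply abs_mnr_cons_le
    · intro j; exact abs_uv_le hw I j
    · intro J; rw [hHdef, ← hβ.ht_eq]; exact abs_mnr_le_TT _ _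
  have hZ : ∀ J, mnr (Fin.cons (uv β I w') Y : Fin (r + 2) → Fin s → ℤ) J = D * D * mnr c J := by
    intro J
    have e1 : uv β I w' = D • w' + ∑ k, (Fin.cons 0 κ' : Fin (r + 1) → ℤ) k • Y k := by
      rw [hκ', Fin.sum_univ_succ]; simp [Y]
    rw [e1, mnr_cons_comb, mnr_cons_row, mnr_cons_row, Finset.mul_sum, Finset.mul_sum]
    apply Finset.sum_congr rfl
    intro j _
    rw [hY]; ring
  have hZle : ∀ J, |D * D * mnr c J| ≤ (r + 2) * ((ht (r + 1) W' : ℤ) * ((r + 1) * ((ht (r + 1) W : ℤ) * H))) := by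
    intro J
    rw [← hZ]
    have := abs_mnr_cons_le Y (uv β I w') J _ _ (abs_uv_le hw' I) hYle
    push_cast at this
    refine this.trans (le_of_eq ?_)
    ring
  have hDD : |D| = H := by rw [Int.abs_eq_natAbs, hI]
  have hHz : (0 : ℤ) < H := by exact_mod_cast hH
  obtain ⟨J, hJ⟩ := exists_mnr_eq_TT hTc
  have h3 := hZle J
  rw [abs_mul, abs_mul, hDD, Int.abs_eq_natAbs (mnr c J), hJ] at h3
  have h4 : (H : ℤ) * TT c ≤ (r + 2) * (r + 1) * (ht (r + 1) W * ht (r + 1) W') := by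
    have : (H : ℤ) * (H * TT c) ≤ H * ((r + 2) * (r + 1) * (ht (r + 1) W * ht (r + 1) W')) := by
      linarith
    exact le_of_mul_le_mul_left this hHz
  have h5 : H * TT c ≤ (r + 2) * (r + 1) * (ht (r + 1) W * ht (r + 1) W') := by exact_mod_cast h4
  calc ht (r + 2) (W ⊔ W') * H ≤ TT c * H := Nat.mul_le_mul_right _ hle
    _ = H * TT c := mul_comm _ _
    _ ≤ _ := h5

end HB

namespace HB

open Finset

variable {s q : ℕ}

/-- square submatrix -/
def BM (b : Fin q → Fin s → ℤ) (I : Fin q → Fin s) : Matrix (Fin q) (Fin q) ℤ :=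
  Matrix.of fun k l => b k (I l)

theorem BM_det (b : Fin q → Fin s → ℤ) (I : Fin q → Fin s) : (BM b I).det = mnr b I := rfl

/-- the integral vector `D a` -/
def mv (b : Fin q → Fin s → ℤ) (I : Fin q → Fin s) (v : Fin q → ℤ) : Fin q → ℤ :=
  (BM b I).adjugate.mulVec v

theorem BM_mv (b : Fin q → Fin s → ℤ) (I : Fin q → Fin s) (v : Fin q → ℤ) :
    (BM b I).mulVec (mv b I v) = mnr b I • v := by
  unfold mv
  rw [Matrix.mulVec_mulVec, Matrix.mul_adjugate, BM_det, Matrix.smul_mulVec, Matrix.one_mulVec]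

theorem mv_BM (b : Fin q → Fin s → ℤ) (I : Fin q → Fin s) (v : Fin q → ℤ) :
    mv b I ((BM b I).mulVec v) = mnr b I • v := by
  unfold mv
  rw [Matrix.mulVec_mulVec, Matrix.adjugate_mul, BM_det, Matrix.smul_mulVec, Matrix.one_mulVec]

theorem mv_add (b : Fin q → Fin s → ℤ) (I : Fin q → Fin s) (v w : Fin q → ℤ) :
    mv b I (v + w) = mv b I v + mv b I w := Matrix.mulVec_add _ _ _

theorem mv_sub (b : Fin q → Fin s → ℤ) (I : Fin q → Fin s) (v w : Fin q → ℤ) :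
    mv b I (v - w) = mv b I v - mv b I w := Matrix.mulVec_sub _ _ _

theorem mv_smul (b : Fin q → Fin s → ℤ) (I : Fin q → Fin s) (j : ℤ) (v : Fin q → ℤ) :
    mv b I (j • v) = j • mv b I v := Matrix.mulVec_smul _ _ _

theorem mv_inj {b : Fin q → Fin s → ℤ} {I : Fin q → Fin s} (hD : mnr b I ≠ 0) {v w : Fin q → ℤ}
    (h : mv b I v = mv b I w) : v = w := by
  have h1 := BM_mv b I v
  rw [h, BM_mv] at h1
  exact (smul_right_injective _ hD h1).symm

/-- upper count of lattice points in a box -/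
theorem box_upper {b : Fin q → Fin s → ℤ} {I : Fin q → Fin s} {H : ℕ} (hH : (mnr b I).natAbs = H)
    (h0 : H ≠ 0) (u t : ℤ) (S : Finset (Fin q → ℤ))
    (hS : ∀ v ∈ S, ∀ l, u * H ≤ mv b I v l ∧ mv b I v l < t * H) :
    #S ≤ H * (t - u).toNat ^ q := by
  classical
  have hD : mnr b I ≠ 0 := by intro h; rw [h] at hH; simp at hH; omega
  have hcard := card_quot (BM b I) (by rw [BM_det]; exact hD)
  rw [BM_det, hH] at hcard
  let Q := (Fin q → ℤ) ⧸ LinearMap.range (Matrix.toLin' (BM b I))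
  have hfin : Finite Q := Nat.finite_of_card_ne_zero (by rw [hcard]; omega)
  have : Fintype Q := Fintype.ofFinite Q
  have hHz : (0 : ℤ) < H := by exact_mod_cast Nat.pos_of_ne_zero h0
  let f : (Fin q → ℤ) → Q × (Fin q → ℤ) := fun v =>
    (Submodule.Quotient.mk v, fun j => mv b I v j / (H : ℤ))
  have hmaps : ∀ v ∈ S, f v ∈ (univ : Finset Q) ×ˢ Fintype.piFinset (fun _ : Fin q => Ico u t) := by
    intro v h
    rw [Finset.mem_product, Fintype.mem_piFinset]
    refine ⟨mem_univ _, fun j => ?_⟩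
    obtain ⟨h1, h2⟩ := hS v h j
    rw [Finset.mem_Ico]
    constructor
    · apply (Int.le_ediv_iff_mul_le hHz).2; exact h1
    · exact Int.ediv_lt_of_lt_mul hHz h2
  have hinj : Set.InjOn f S := by
    intro v1 _ v2 _ h12
    simp only [f, Prod.mk.injEq] at h12
    obtain ⟨hq, hu⟩ := h12
    rw [Submodule.Quotient.eq] at hq
    obtain ⟨z, hz⟩ := hq
    rw [Matrix.toLin'_apply] at hz
    have h3 := mv_BM b I z
    rw [hz, mv_sub] at h3
    apply mv_inj hD
    ext j
    have h3 := congrFun h3 j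
    simp only [Pi.sub_apply, Pi.smul_apply, smul_eq_mul] at h3
    have h4 := congrFun hu j
    have e1 := Int.emod_add_mul_ediv (mv b I v1 j) H
    have e2 := Int.emod_add_mul_ediv (mv b I v2 j) H
    have l1 := Int.emod_nonneg (mv b I v1 j) hHz.ne'
    have l2 := Int.emod_nonneg (mv b I v2 j) hHz.ne'
    have l3 := Int.emod_lt_of_pos (mv b I v1 j) hHz
    have l4 := Int.emod_lt_of_pos (mv b I v2 j) hHz
    rw [h4] at e1
    have h5 : |mv b I v1 j - mv b I v2 j| < |mnr b I| := by
      rw [Int.abs_eq_natAbs (mnr b I), hH, abs_lt]; constructor <;> linarith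
    rw [h3, abs_mul] at h5
    have h6 : |z j| < 1 := by
      by_contra hc
      push Not at hc
      nlinarith [abs_nonneg (mnr b I)]
    rw [Int.abs_lt_one_iff] at h6
    rw [h6, mul_zero, sub_eq_zero] at h3
    exact h3
  have := Finset.card_le_card_of_injOn f hmaps hinj
  rw [Finset.card_product, Finset.card_univ, Fintype.card_piFinset] at this
  rw [← Nat.card_eq_fintype_card, hcard] at this
  simpa using this

/-- the lattice points in the box `[0, tH)^q` -/
theorem box_lower {b : Fin q → Fin s → ℤ} {I : Fin q → Fin s} {H : ℕ} (hH : (mnr b I).natAbs = H)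
    (h0 : H ≠ 0) (t : ℕ) :
    ∃ S : Finset (Fin q → ℤ), (∀ v, v ∈ S ↔ ∀ l, 0 ≤ mv b I v l ∧ mv b I v l < t * H) ∧
      H * t ^ q ≤ #S := by
  classical
  have hD : mnr b I ≠ 0 := by intro h; rw [h] at hH; simp at hH; omega
  have hcard := card_quot (BM b I) (by rw [BM_det]; exact hD)
  rw [BM_det, hH] at hcard
  let Q := (Fin q → ℤ) ⧸ LinearMap.range (Matrix.toLin' (BM b I))
  have hfinQ : Finite Q := Nat.finite_of_card_ne_zero (by rw [hcard]; omega)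
  have : Fintype Q := Fintype.ofFinite Q
  have hHz : (0 : ℤ) < H := by exact_mod_cast Nat.pos_of_ne_zero h0
  let A : Set (Fin q → ℤ) := {v | ∀ l, 0 ≤ mv b I v l ∧ mv b I v l < t * H}
  have hfin : A.Finite := by
    have : A ⊆ (mv b I) ⁻¹' (Fintype.piFinset (fun _ : Fin q => Ico (0 : ℤ) (t * H)) : Finset _) := by
      intro v hv
      simp only [Set.mem_preimage, Finset.mem_coe, Fintype.mem_piFinset, Finset.mem_Ico]
      exact hv
    refine Set.Finite.subset (Set.Finite.preimage ?_ (Finset.finite_toSet _)) this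
    intro x _ y _ h; exact mv_inj hD h
  refine ⟨hfin.toFinset, fun v => by simp [A], ?_⟩
  let σ : ℤ := (mnr b I).sign
  have hσ : mnr b I * σ = H := by
    simp only [σ]; rw [mul_comm, Int.sign_mul_self_eq_natAbs, hH]
  let y : Q × (Fin q → ℤ) → Fin q → ℤ := fun p l => σ * (p.2 l - mv b I p.1.out l / H)
  let f : Q × (Fin q → ℤ) → Fin q → ℤ := fun p => p.1.out + (BM b I).mulVec (y p)
  have hf : ∀ p l, mv b I (f p) l = mv b I p.1.out l % H + p.2 l * H := by
    intro p l
    simp only [f, mv_add, mv_BM, Pi.add_apply, Pi.smul_apply, smul_eq_mul, y]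
    rw [← mul_assoc, hσ]
    have e1 := Int.emod_add_mul_ediv (mv b I p.1.out l) H
    linarith
  have hfq : ∀ p, (Submodule.Quotient.mk (f p) : Q) = p.1 := by
    intro p
    have h1 : (Submodule.Quotient.mk (p.1.out) : Q) = p.1 := Quotient.out_eq _
    rw [← h1]
    apply (Submodule.Quotient.eq _).2
    refine ⟨y p, ?_⟩
    rw [Matrix.toLin'_apply]
    simp [f]
  have hmaps : ∀ p ∈ (univ : Finset Q) ×ˢ Fintype.piFinset (fun _ : Fin q => Ico (0 : ℤ) t),
      f p ∈ hfin.toFinset := by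
    intro p hp
    rw [Finset.mem_product, Fintype.mem_piFinset] at hp
    simp only [Set.Finite.mem_toFinset, A, Set.mem_ofPred_eq]
    intro l
    rw [hf]
    have h2 := hp.2 l
    rw [Finset.mem_Ico] at h2
    have l2 := Int.emod_nonneg (mv b I p.1.out l) hHz.ne'
    have l3 := Int.emod_lt_of_pos (mv b I p.1.out l) hHz
    constructor <;> nlinarith
  have hinj : Set.InjOn f ((univ : Finset Q) ×ˢ Fintype.piFinset (fun _ : Fin q => Ico (0 : ℤ) t) : Finset _) := by
    intro p _ p' _ h
    have h1 : p.1 = p'.1 := by rw [← hfq p, ← hfq p', h]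
    refine Prod.ext h1 ?_
    ext l
    have h2 := hf p l
    rw [h, hf p' l, h1] at h2
    have : p'.2 l * (H : ℤ) = p.2 l * H := by linarith
    exact (mul_right_cancel₀ hHz.ne' this).symm
  have := Finset.card_le_card_of_injOn f hmaps hinj
  rw [Finset.card_product, Finset.card_univ, Fintype.card_piFinset] at this
  rw [← Nat.card_eq_fintype_card, hcard] at this
  simpa using this

/-- functional attached to a vector -/
def fn (I : Fin q → Fin s) (m : Fin q → ℤ) : (Fin s → ℚ) →ₗ[ℚ] ℚ :=
  ∑ l, (m l : ℚ) • LinearMap.proj (I l)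

theorem fn_apply (I : Fin q → Fin s) (m : Fin q → ℤ) (x : Fin s → ℤ) :
    fn I m (toQ x) = ((∑ l, m l * x (I l) : ℤ) : ℚ) := by
  simp [fn, toQ]

/-- hyperplane section -/
def Th (W : Submodule ℚ (Fin s → ℚ)) (b : Fin q → Fin s → ℤ) (I : Fin q → Fin s) (v : Fin q → ℤ) :
    Submodule ℚ (Fin s → ℚ) := W ⊓ LinearMap.ker (fn I (mv b I v))

theorem fn_comb (b : Fin q → Fin s → ℤ) (I : Fin q → Fin s) (v z : Fin q → ℤ) :
    ∑ l, mv b I v l * (∑ k, z k • b k) (I l) = mnr b I * ∑ k, z k * v k := by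
  have h := BM_mv b I v
  have h2 : ∀ k, ∑ l, b k (I l) * mv b I v l = mnr b I * v k := by
    intro k
    have := congrFun h k
    simpa [Matrix.mulVec, dotProduct, BM] using this
  simp only [Finset.sum_apply, Pi.smul_apply, smul_eq_mul, Finset.mul_sum]
  rw [Finset.sum_comm]
  apply Finset.sum_congr rfl
  intro k _
  have h3 : mnr b I * (z k * v k) = z k * (mnr b I * v k) := by ring
  rw [h3, ← h2, Finset.mul_sum]
  exact Finset.sum_congr rfl fun l _ => by ring

theorem mem_Th {W : Submodule ℚ (Fin s → ℚ)} {b : Fin q → Fin s → ℤ} (hb : ZB W b)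
    {I : Fin q → Fin s} (hD : mnr b I ≠ 0) (v z : Fin q → ℤ) :
    toQ (∑ k, z k • b k) ∈ Th W b I v ↔ ∑ k, z k * v k = 0 := by
  have hW : toQ (∑ k, z k • b k) ∈ W := by
    rw [toQ_sum]
    exact W.sum_mem fun i _ => by rw [toQ_smul]; exact W.smul_mem _ (hb.2.1 i)
  unfold Th
  rw [Submodule.mem_inf, LinearMap.mem_ker, fn_apply, fn_comb, Int.cast_eq_zero, mul_eq_zero]
  exact ⟨fun h => h.2.resolve_left hD, fun h => ⟨hW, Or.inr h⟩⟩

theorem finrank_Th {W : Submodule ℚ (Fin s → ℚ)} {b : Fin (q + 1) → Fin s → ℤ} (hb : ZB W b)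
    {I : Fin (q + 1) → Fin s} (hD : mnr b I ≠ 0) {v : Fin (q + 1) → ℤ} (hv : v ≠ 0) :
    Module.finrank ℚ (Th W b I v) = q := by
  obtain ⟨k, hk⟩ := Function.ne_iff.1 hv
  let φ : W →ₗ[ℚ] ℚ := (fn I (mv b I v)).comp W.subtype
  have hφ : φ ≠ 0 := by
    intro h0
    have h1 : toQ (∑ l, (Pi.single k 1 : Fin (q + 1) → ℤ) l • b l) ∈ Th W b I v := by
      have h2 : toQ (∑ l, (Pi.single k 1 : Fin (q + 1) → ℤ) l • b l) ∈ W := by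
        rw [toQ_sum]
        exact W.sum_mem fun i _ => by rw [toQ_smul]; exact W.smul_mem _ (hb.2.1 i)
      refine ⟨h2, ?_⟩
      have := LinearMap.congr_fun h0 ⟨_, h2⟩
      exact this
    rw [mem_Th hb hD] at h1
    simp [Pi.single_apply] at h1
    exact hk h1
  have h1 := Module.Dual.finrank_ker_add_one_of_ne_zero (f := φ) hφ
  rw [hb.finrank] at h1
  have h2 : Th W b I v = (LinearMap.ker φ).map W.subtype := by
    ext x
    simp [Th, φ, and_comm]
  rw [h2, Submodule.finrank_map_subtype_eq]
  omega

end HB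

namespace HB

open Finset

variable {s q : ℕ}

/-- expansion of minors of `β` with respect to the columns `I` -/
theorem mnr_le_of_cols (β : Fin q → Fin s → ℤ) (I : Fin (q + 1) → Fin s) (g : ℕ)
    (hg : ∀ l : Fin (q + 1), |mnr β (fun i => I (l.succAbove i))| ≤ (g : ℤ))
    (C : Fin s → Fin (q + 1) → ℚ) (hC : ∀ j l, |C j l| ≤ 1)
    (hβ : ∀ k j, (β k j : ℚ) = ∑ l, C j l * (β k (I l) : ℚ)) (J) :
    |mnr β J| ≤ (((q + 1) ^ q * g : ℕ) : ℤ) := by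
  have hsub : ∀ L : Fin q → Fin (q + 1), |mnr β (fun i => I (L i))| ≤ (g : ℤ) := by
    intro L
    by_cases hL : Function.Injective L
    · obtain ⟨l, hl⟩ : ∃ l, ∀ i, L i ≠ l := by
        by_contra hc
        push Not at hc
        have hsurj : Function.Surjective L := hc
        have := Fintype.card_le_of_surjective L hsurj
        simp at this
      choose σ hσ using fun i => Fin.exists_succAbove_eq (hl i)
      have hσi : Function.Injective σ := by
        intro i j h; apply hL; rw [← hσ i, ← hσ j, h]
      let e : Equiv.Perm (Fin q) := Equiv.ofBijective σ (Finite.injective_iff_bijective.1 hσi)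
      have h1 : mnr β (fun i => I (L i)) = (Equiv.Perm.sign e : ℤ) * mnr β (fun i => I (l.succAbove i)) := by
        have h2 := Matrix.det_permute' e (Matrix.of fun k i => β k (I (l.succAbove i)))
        rw [Int.cast_id] at h2
        unfold mnr
        rw [← h2]
        congr 1
        ext k i
        simp only [Matrix.submatrix_apply, Matrix.of_apply, id]
        rw [← hσ i]; rfl
      rw [h1, abs_mul]
      have : |((Equiv.Perm.sign e : ℤˣ) : ℤ)| = 1 := by
        rcases Int.units_eq_one_or (Equiv.Perm.sign e) with h | h <;> simp [h]
      rw [this, one_mul]; exact hg l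
    · rw [Function.Injective] at hL
      push Not at hL
      obtain ⟨i, j, hij, hne⟩ := hL
      have : mnr β (fun i => I (L i)) = 0 := by
        unfold mnr
        apply Matrix.det_zero_of_column_eq hne
        intro k; simp [hij]
      rw [this]; simp
  have hexp : (mnr β J : ℚ) = ∑ L : Fin q → Fin (q + 1), (∏ i, C (J i) (L i)) * (mnr β (fun i => I (L i)) : ℚ) := by
    rw [cast_mnr, ← Matrix.det_transpose]
    have h1 : (Matrix.of fun k l => ((β k (J l) : ℤ) : ℚ)).transpose =
        fun i => ∑ l, C (J i) l • (fun k => ((β k (I l) : ℤ) : ℚ)) := by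
      ext i k
      simp only [Matrix.transpose_apply, Matrix.of_apply, hβ k (J i), Finset.sum_apply, Pi.smul_apply, smul_eq_mul]
    rw [h1]
    have h2 := (Matrix.detRowAlternating (R := ℚ) (n := Fin q)).toMultilinearMap.map_sum
      (fun i (l : Fin (q + 1)) => C (J i) l • (fun k => ((β k (I l) : ℤ) : ℚ)))
    refine (Eq.trans ?_ h2).trans ?_
    · rfl
    · apply Finset.sum_congr rfl
      intro L _
      rw [MultilinearMap.map_smul_univ, cast_mnr, ← Matrix.det_transpose, smul_eq_mul]
      rfl
  have : |(mnr β J : ℚ)| ≤ ((q + 1) ^ q * g : ℕ) := by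
    rw [hexp]
    refine (Finset.abs_sum_le_sum_abs _ _).trans ?_
    have : ∀ L ∈ (univ : Finset (Fin q → Fin (q + 1))),
        |(∏ i, C (J i) (L i)) * (mnr β (fun i => I (L i)) : ℚ)| ≤ g := by
      intro L _
      rw [abs_mul, Finset.abs_prod]
      have h1 : ∏ i, |C (J i) (L i)| ≤ 1 :=
        Finset.prod_le_one (fun _ _ => abs_nonneg _) (fun _ _ => hC _ _)
      have h2 : |(mnr β (fun i => I (L i)) : ℚ)| ≤ g := by exact_mod_cast hsub L
      calc _ ≤ 1 * (g : ℚ) := mul_le_mul h1 h2 (abs_nonneg _) zero_le_one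
        _ = g := one_mul _
    refine (Finset.sum_le_card_nsmul _ _ _ this).trans ?_
    simp
  exact_mod_cast this

/-- primitive vector of a hyperplane -/
theorem exists_prim {W Θ : Submodule ℚ (Fin s → ℚ)} {b : Fin (q + 1) → Fin s → ℤ} (hb : ZB W b)
    {I : Fin (q + 1) → Fin s} (hI : (mnr b I).natAbs = ht (q + 1) W)
    (hΘW : Θ ≤ W) (hΘ : Module.finrank ℚ Θ = q) :
    ∃ v' : Fin (q + 1) → ℤ, v' ≠ 0 ∧ Th W b I v' = Θ ∧
      (∀ v, Th W b I v = Θ → ∃ j : ℤ, v = j • v') ∧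
      (∀ l, |mv b I v' l| ≤ ht q Θ) ∧
      (∀ g : ℕ, (∀ l, |mv b I v' l| ≤ (g : ℤ)) → ht q Θ ≤ (q + 1) ^ q * g) := by
  have hH : 1 ≤ ht (q + 1) W := ht_pos hb.finrank
  have hD : mnr b I ≠ 0 := by intro h; rw [h] at hI; simp at hI; omega
  obtain ⟨β, hβ⟩ := exists_ZB hΘ
  -- divisibility
  let E : (Fin s → ℤ) → Fin (q + 1) → Fin s → ℤ := fun x => Fin.cons x β
  have hEW : ∀ x, toQ x ∈ W → ∀ k, toQ (E x k) ∈ W := by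
    intro x hx k
    refine Fin.cases ?_ (fun k => ?_) k
    · exact hx
    · exact hΘW (hβ.2.1 k)
  have hU : ∀ x, toQ x ∈ W → ∃ e : ℤ, ∀ J, mnr (E x) J = e * mnr b J := by
    intro x hx
    choose U hU using fun k => hb.2.2 (E x k) (hEW x hx k)
    exact ⟨_, fun J => mnr_comb b (E x) U hU J⟩
  choose v' hv' using fun k => hU (b k) (hb.2.1 k)
  let m : Fin (q + 1) → ℤ := fun l => (-1) ^ (l : ℕ) * mnr β (fun i => I (l.succAbove i))
  have hm : ∀ x : Fin s → ℤ, ∑ l, m l * x (I l) = mnr (E x) I := by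
    intro x
    simp only [E, mnr_cons_row, m]
    exact Finset.sum_congr rfl fun i _ => by ring
  have hmv : mv b I v' = m := by
    have h1 : (BM b I).mulVec m = mnr b I • v' := by
      ext k
      have h2 := hm (b k)
      rw [hv' k] at h2
      simp only [Matrix.mulVec, dotProduct, BM, Matrix.of_apply, Pi.smul_apply, smul_eq_mul]
      rw [mul_comm (mnr b I), ← h2]
      exact Finset.sum_congr rfl fun i _ => by ring
    have h3 := mv_BM b I m
    rw [h1, mv_smul] at h3
    exact smul_right_injective _ hD h3
  have habs : ∀ l, |m l| = |mnr β (fun i => I (l.succAbove i))| := by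
    intro l; simp [m, abs_mul, abs_pow]
  -- membership
  have hle : Θ ≤ Th W b I v' := by
    rw [← hβ.span_eq, Submodule.span_le]
    rintro _ ⟨k, rfl⟩
    refine ⟨hΘW (hβ.2.1 k), ?_⟩
    simp only [SetLike.mem_coe, LinearMap.mem_ker]
    rw [hmv, fn_apply, hm]
    have : mnr (E (β k)) I = 0 := by
      unfold mnr
      apply Matrix.det_zero_of_row_eq (i := 0) (j := k.succ) (Fin.succ_ne_zero k).symm
      ext l; simp [E]
    rw [this]; simp
  obtain ⟨x0, hx0⟩ := hβ.extend hΘW hb.finrank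
  have hx0W : toQ x0 ∈ W := hx0.2.1 0
  have hv0 : v' ≠ 0 := by
    intro h0
    have h1 : m = 0 := by rw [← hmv, h0]; exact Matrix.mulVec_zero _
    have h2 := hm x0
    rw [h1] at h2
    obtain ⟨e, he⟩ := hU x0 hx0W
    rw [he I] at h2
    simp only [Pi.zero_apply, zero_mul, Finset.sum_const_zero] at h2
    have he0 : e = 0 := by
      rcases mul_eq_zero.1 h2.symm with h | h
      · exact h
      · exact absurd h hD
    apply hx0.1
    have : TT (E x0) ≤ 0 := TT_le fun J => by rw [he J, he0]; simp
    exact Nat.le_zero.1 this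
  have hTh : Th W b I v' = Θ := by
    symm
    exact Submodule.eq_of_le_of_finrank_eq hle (by rw [hΘ, finrank_Th hb hD hv0])
  refine ⟨v', hv0, hTh, ?_, ?_, ?_⟩
  · intro v hv
    -- dual basis argument
    choose U hU2 using fun k => hx0.2.2 (b k) (hb.2.1 k)
    obtain ⟨z0, hz0⟩ := hb.2.2 x0 hx0W
    have key : ∀ w, Th W b I w = Θ → ∀ k, w k = U k 0 * ∑ i, z0 i * w i := by
      intro w hw k
      -- b k - U k 0 x0 ∈ Θ
      have h1 : toQ (b k - U k 0 • x0) ∈ Θ := by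
        have h2 : b k - U k 0 • x0 = ∑ i, U k i.succ • β i := by
          conv_lhs => rw [hU2 k, Fin.sum_univ_succ]
          simp
        rw [h2, toQ_sum]
        exact Θ.sum_mem fun i _ => by rw [toQ_smul]; exact Θ.smul_mem _ (hβ.2.1 i)
      have h3 : b k - U k 0 • x0 = ∑ i, ((Pi.single k 1 : Fin (q + 1) → ℤ) i - U k 0 * z0 i) • b i := by
        simp only [sub_smul, Finset.sum_sub_distrib, mul_smul, ← Finset.smul_sum, ← hz0]
        congr 1
        rw [Finset.sum_eq_single k]
        · simp
        · intro i _ hik; simp [hik]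
        · simp
      rw [h3, ← hw, mem_Th hb hD] at h1
      simp only [sub_mul, Finset.sum_sub_distrib, mul_assoc, ← Finset.mul_sum] at h1
      rw [Finset.sum_eq_single k (by intro i _ hik; simp [hik]) (by simp)] at h1
      simp at h1
      linarith
    have h1 := key v hv
    have h2 := key v' hTh
    have h3 : IsUnit (∑ i, z0 i * v' i) := by
      have h4 : mnr (E x0) I = mnr b I * ∑ i, z0 i * v' i := by
        rw [← hm, ← hmv]
        conv_lhs => rw [hz0]
        exact fn_comb b I v' z0
      have h5 := mnr_comb (E x0) b U hU2 I
      rw [h4] at h5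
      have h6 : Matrix.det U * ∑ i, z0 i * v' i = 1 := by
        have : mnr b I * (Matrix.det U * ∑ i, z0 i * v' i) = mnr b I * 1 := by
          rw [mul_one]; conv_rhs => rw [h5]
          ring
        exact mul_left_cancel₀ hD this
      exact IsUnit.of_mul_eq_one _ (by rw [mul_comm]; exact h6)
    refine ⟨(∑ i, z0 i * v i) * (∑ i, z0 i * v' i), ?_⟩
    ext k
    simp only [Pi.smul_apply, smul_eq_mul]
    have h7 : (∑ i, z0 i * v' i) * (∑ i, z0 i * v' i) = 1 := by
      rcases Int.isUnit_iff.1 h3 with h | h <;> rw [h] <;> norm_num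
    calc v k = U k 0 * (∑ i, z0 i * v i) * 1 := by rw [mul_one]; exact h1 k
      _ = (∑ i, z0 i * v i) * (∑ i, z0 i * v' i) * (U k 0 * (∑ i, z0 i * v' i)) := by
        rw [← h7]; ring
      _ = _ := by rw [← h2 k]
  · intro l
    rw [hmv, habs, ← hβ.ht_eq]; exact abs_mnr_le_TT _ _
  · intro g hg
    rw [← hβ.ht_eq]
    apply TT_le
    intro J
    have hHpos : (0 : ℚ) < ht (q + 1) W := by exact_mod_cast hH
    -- x_j D = sum
    refine mnr_le_of_cols β I g (fun l => by rw [← habs, ← hmv]; exact hg l)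
      (fun j l => - ((-1) ^ ((l.succ : Fin (q + 2)) : ℕ) *
        mnr b (fun i => (Fin.cons j I : Fin (q + 2) → Fin s) (l.succ.succAbove i)) : ℤ) / (mnr b I : ℚ)) ?_ ?_ J
    · intro j l
      rw [abs_div]
      have h1 : |(mnr b I : ℚ)| = ht (q + 1) W := by
        rw [← hI, Nat.cast_natAbs, Int.cast_abs]
      rw [h1, div_le_one hHpos, abs_neg, ← hb.ht_eq]
      have := abs_mnr_le_TT b (fun i => (Fin.cons j I : Fin (q + 2) → Fin s) (l.succ.succAbove i))
      rw [← Int.cast_abs, abs_mul, abs_pow, abs_neg, abs_one, one_pow, one_mul]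
      exact_mod_cast this
    · intro k j
      have hDQ : (mnr b I : ℚ) ≠ 0 := by exact_mod_cast hD
      obtain ⟨z, hz⟩ := hb.2.2 (β k) (hΘW (hβ.2.1 k))
      have h0 := congrFun (uv_comb b I z) j
      rw [← hz] at h0
      simp only [uv, mnr_cons_row] at h0
      rw [Fin.sum_univ_succ] at h0
      simp only [Fin.val_zero, pow_zero, one_mul, Fin.cons_zero, Fin.cons_succ, Fin.zero_succAbove, Pi.zero_apply] at h0
      have h1 : (β k j : ℚ) * mnr b I = ∑ l : Fin (q + 1), (- ((-1) ^ ((l.succ : Fin (q + 2)) : ℕ) *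
        mnr b (fun i => (Fin.cons j I : Fin (q + 2) → Fin s) (l.succ.succAbove i)) : ℤ) : ℚ) * β k (I l) := by
        have h2 : β k j * mnr b I = ∑ l : Fin (q + 1), (- ((-1) ^ ((l.succ : Fin (q + 2)) : ℕ) *
        mnr b (fun i => (Fin.cons j I : Fin (q + 2) → Fin s) (l.succ.succAbove i)))) * β k (I l) := by
          rw [eq_comm, ← sub_eq_zero, ← neg_eq_zero, ← h0, neg_sub, sub_eq_add_neg, ← Finset.sum_neg_distrib]
          congr 1
          exact Finset.sum_congr rfl fun i _ => by ring
        exact_mod_cast h2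
      rw [eq_comm, ← mul_left_inj' hDQ, h1, Finset.sum_mul]
      apply Finset.sum_congr rfl
      intro l _
      field_simp

end HB

namespace HB

open Finset

variable {s q : ℕ}

theorem upper_count {W : Submodule ℚ (Fin s → ℚ)} (hW : Module.finrank ℚ W = q + 1) (Z : ℕ)
    (S : Finset (Submodule ℚ (Fin s → ℚ)))
    (hS : ∀ Θ ∈ S, Θ ≤ W ∧ Module.finrank ℚ Θ = q ∧ ht q Θ ≤ Z) :
    #S ≤ ht (q + 1) W * (2 * (Z / ht (q + 1) W + 1)) ^ (q + 1) := by
  classical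
  obtain ⟨b, hb⟩ := exists_ZB hW
  obtain ⟨I, hI⟩ := exists_mnr_eq_TT hb.1
  rw [hb.ht_eq] at hI
  have hH : 1 ≤ ht (q + 1) W := ht_pos hW
  set H := ht (q + 1) W with hHdef
  have hex : ∀ Θ, ∃ v' : Fin (q + 1) → ℤ, Θ ∈ S → Th W b I v' = Θ ∧ ∀ l, |mv b I v' l| ≤ ht q Θ := by
    intro Θ
    by_cases h : Θ ∈ S
    · obtain ⟨h1, h2, -⟩ := hS Θ h
      obtain ⟨v', -, h3, -, h4, -⟩ := exists_prim hb hI h1 h2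
      exact ⟨v', fun _ => ⟨h3, h4⟩⟩
    · exact ⟨0, fun h' => absurd h' h⟩
  choose v' hv' using hex
  have hinj : Set.InjOn v' S := by
    intro Θ h Θ' h' he
    rw [← (hv' Θ h).1, ← (hv' Θ' h').1, he]
  rw [← Finset.card_image_of_injOn hinj]
  have hHz : (0 : ℤ) < H := by exact_mod_cast hH
  have hlt : (Z : ℤ) < ((Z / H + 1 : ℕ) : ℤ) * H := by
    have h1 := Nat.lt_mul_of_div_lt (Nat.lt_succ_self (Z / H)) hH
    have h2 : Z < (Z / H + 1) * H := by simpa using h1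
    exact_mod_cast h2
  have := box_upper hI (by omega) (-((Z / H + 1 : ℕ) : ℤ)) ((Z / H + 1 : ℕ) : ℤ) (S.image v') (by
    intro v hv l
    obtain ⟨Θ, hΘ, rfl⟩ := Finset.mem_image.1 hv
    have h1 := (hv' Θ hΘ).2 l
    have h2 : (ht q Θ : ℤ) ≤ Z := by exact_mod_cast (hS Θ hΘ).2.2
    rw [abs_le] at h1
    constructor <;> linarith)
  refine this.trans (le_of_eq ?_)
  congr 2
  omega

theorem Th_smul (W : Submodule ℚ (Fin s → ℚ)) (b : Fin q → Fin s → ℤ) (I : Fin q → Fin s)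
    (v : Fin q → ℤ) {j : ℤ} (hj : j ≠ 0) : Th W b I (j • v) = Th W b I v := by
  have h1 : fn I (mv b I (j • v)) = (j : ℚ) • fn I (mv b I v) := by
    simp only [fn, mv_smul, Finset.smul_sum, smul_smul, Pi.smul_apply, smul_eq_mul, Int.cast_mul]
  have hjQ : (j : ℚ) ≠ 0 := by exact_mod_cast hj
  unfold Th
  rw [h1, LinearMap.ker_smul _ _ hjQ]

theorem lower_count {W : Submodule ℚ (Fin s → ℚ)} (hW : Module.finrank ℚ W = q + 1) (hq : 1 ≤ q)
    {K : ℕ} (hK : 1 ≤ K) :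
    ∃ 𝒯 : Finset (Submodule ℚ (Fin s → ℚ)), ht (q + 1) W ≤ #𝒯 ∧
      ∀ Θ ∈ 𝒯, Θ ≤ W ∧ Module.finrank ℚ Θ = q ∧ K * ht (q + 1) W ≤ ht q Θ ∧
        ht q Θ ≤ (q + 1) ^ q * (3 * K * ht (q + 1) W) := by
  classical
  obtain ⟨b, hb⟩ := exists_ZB hW
  obtain ⟨I, hI⟩ := exists_mnr_eq_TT hb.1
  rw [hb.ht_eq] at hI
  have hH : 1 ≤ ht (q + 1) W := ht_pos hW
  set H := ht (q + 1) W with hHdef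
  have hD : mnr b I ≠ 0 := by intro h; rw [h] at hI; simp at hI; omega
  have hHz : (0 : ℤ) < H := by exact_mod_cast hH
  obtain ⟨V3, hV3, hc3⟩ := box_lower hI (by omega) (3 * K)
  obtain ⟨V1, hV1, -⟩ := box_lower hI (by omega) K
  have hc1 : #V1 ≤ H * K ^ (q + 1) := by
    have := box_upper hI (by omega) 0 K V1 (by
      intro v hv l
      have := (hV1 v).1 hv l
      simpa using this)
    simpa using this
  have h0mv : mv b I 0 = 0 := Matrix.mulVec_zero _
  have hM1 : 1 ≤ K * H := Nat.mul_pos hK hH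
  have h01 : (0 : Fin (q + 1) → ℤ) ∈ V1 := by
    rw [hV1]; intro l; rw [h0mv]; simp only [Pi.zero_apply, le_refl, true_and]; exact_mod_cast hM1
  have h03 : (0 : Fin (q + 1) → ℤ) ∈ V3 := by
    rw [hV3]; intro l; rw [h0mv]; simp only [Pi.zero_apply, le_refl, true_and]
    have : 0 < 3 * K * H := by positivity
    exact_mod_cast this
  set M := K * H with hM
  let A := (V3.erase 0).image (Th W b I)
  let 𝒯 := A.filter (fun Θ => M ≤ ht q Θ)
  let f3 : Submodule ℚ (Fin s → ℚ) → Finset (Fin (q + 1) → ℤ) :=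
    fun Θ => (V3.erase 0).filter (fun v => Th W b I v = Θ)
  let f1 : Submodule ℚ (Fin s → ℚ) → Finset (Fin (q + 1) → ℤ) :=
    fun Θ => (V1.erase 0).filter (fun v => Th W b I v = Θ)
  -- analysis of one ray
  have hray : ∀ Θ ∈ A, Θ ≤ W ∧ Module.finrank ℚ Θ = q ∧ ht q Θ ≤ (q + 1) ^ q * (3 * K * H) ∧
      #(f3 Θ) ≤ 2 * (if M ≤ ht q Θ then 1 else 0) + 5 * #(f1 Θ) := by
    intro Θ hΘ
    obtain ⟨v0, hv0, rfl⟩ := Finset.mem_image.1 hΘ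
    obtain ⟨hv00, hv0V⟩ := Finset.mem_erase.1 hv0
    set Θ := Th W b I v0 with hΘdef
    have hΘW : Θ ≤ W := inf_le_left
    have hΘq : Module.finrank ℚ Θ = q := finrank_Th hb hD hv00
    obtain ⟨v', hv'0, hv'T, hv'm, hv'1, hv'2⟩ := exists_prim hb hI hΘW hΘq
    obtain ⟨j0, hj0⟩ := hv'm v0 rfl
    have hj00 : j0 ≠ 0 := by rintro rfl; apply hv00; rw [hj0, zero_smul]
    let v := j0.sign • v'
    have hsgn : j0.sign * j0.sign = 1 := by
      rcases lt_or_gt_of_ne hj00 with h | h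
      · rw [Int.sign_eq_neg_one_of_neg h]; norm_num
      · rw [Int.sign_eq_one_of_pos h]; norm_num
    have habsgn : |j0.sign| = 1 := by
      rcases lt_or_gt_of_ne hj00 with h | h
      · rw [Int.sign_eq_neg_one_of_neg h]; norm_num
      · rw [Int.sign_eq_one_of_pos h]; norm_num
    have hvv' : v' = j0.sign • v := by simp only [v, smul_smul, hsgn, one_smul]
    have hsg0 : j0.sign ≠ 0 := by intro h; rw [h] at hsgn; simp at hsgn
    have hvT : Th W b I v = Θ := by rw [← hv'T]; exact Th_smul _ _ _ _ hsg0
    have hv0v : v0 = |j0| • v := by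
      rw [hj0, hvv', smul_smul, mul_comm, Int.sign_mul_self_eq_abs]
    have hmabs : ∀ l, |mv b I v' l| = |mv b I v l| := by
      intro l; rw [hvv', mv_smul, Pi.smul_apply, smul_eq_mul, abs_mul, habsgn, one_mul]
    have hj0p : 1 ≤ |j0| := Int.one_le_abs hj00
    have hvnn : ∀ l, 0 ≤ mv b I v l := by
      intro l
      have := ((hV3 v0).1 hv0V l).1
      rw [hv0v, mv_smul, Pi.smul_apply, smul_eq_mul] at this
      exact nonneg_of_mul_nonneg_right this (by omega)
    have hvle : ∀ l, mv b I v l ≤ mv b I v0 l := by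
      intro l
      have h := congrFun (congrArg (mv b I) hv0v) l
      rw [mv_smul b I |j0| v, Pi.smul_apply, smul_eq_mul] at h
      rw [h]
      nlinarith [hvnn l]
    obtain ⟨l0, -, hl0⟩ := Finset.exists_max_image (univ : Finset (Fin (q + 1))) (mv b I v) ⟨0, mem_univ _⟩
    have hvm : ∀ w, Th W b I w = Θ → ∃ j : ℤ, w = j • v := by
      intro w hw
      obtain ⟨j, hj⟩ := hv'm w hw
      exact ⟨j * j0.sign, by rw [hj, hvv', smul_smul]⟩
    obtain ⟨g, hg⟩ := Int.eq_ofNat_of_zero_le (hvnn l0)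
    have hg0 : 0 < g := by
      rcases Nat.eq_zero_or_pos g with h | h
      · exfalso
        have : mv b I v = mv b I 0 := by
          rw [h0mv]
          ext l
          have h1 := hl0 l (mem_univ _)
          have h2 := hvnn l
          rw [hg, h] at h1
          simp only [Nat.cast_zero] at h1
          exact le_antisymm h1 h2
        have h3 := mv_inj hD this
        apply hv'0; rw [hvv', h3, smul_zero]
      · exact h
    have hgle : ∀ l, mv b I v l ≤ g := fun l => by rw [← hg]; exact hl0 l (mem_univ _)
    have hght : g ≤ ht q Θ := by
      have h1 := hv'1 l0
      rw [hmabs, hg, abs_of_nonneg (by positivity)] at h1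
      exact_mod_cast h1
    have hht : ht q Θ ≤ (q + 1) ^ q * (3 * K * H) := by
      apply hv'2
      intro l
      rw [hmabs, abs_of_nonneg (hvnn l)]
      have h1 := ((hV3 v0).1 hv0V l).2
      push_cast at h1 ⊢
      exact (hvle l).trans h1.le
    refine ⟨hΘW, hΘq, hht, ?_⟩
    -- fibres
    have hinjj : Function.Injective (fun j : ℕ => (j : ℤ) • v) := by
      intro i j hij
      have h1 := congrArg (fun w => mv b I w l0) hij
      simp only [mv_smul, Pi.smul_apply, smul_eq_mul, hg] at h1
      have hgz : (g : ℤ) ≠ 0 := by exact_mod_cast hg0.ne'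
      have h2 := mul_right_cancel₀ hgz h1
      exact_mod_cast h2
    have hf3 : #(f3 Θ) ≤ (3 * M - 1) / g := by
      have hsub : f3 Θ ⊆ (Icc 1 ((3 * M - 1) / g)).image (fun j : ℕ => (j : ℤ) • v) := by
        intro w hw
        obtain ⟨hw1, hwT⟩ := Finset.mem_filter.1 hw
        obtain ⟨hw0, hw3⟩ := Finset.mem_erase.1 hw1
        obtain ⟨j, rfl⟩ := hvm w hwT
        have h1 := (hV3 _).1 hw3 l0
        rw [mv_smul, Pi.smul_apply, smul_eq_mul, hg] at h1
        have hgz : (0 : ℤ) < g := by exact_mod_cast hg0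
        have hj0 : 0 ≤ j := nonneg_of_mul_nonneg_left h1.1 hgz
        obtain ⟨i, rfl⟩ := Int.eq_ofNat_of_zero_le hj0
        rw [Finset.mem_image]
        refine ⟨i, ?_, rfl⟩
        rw [Finset.mem_Icc]
        constructor
        · rcases Nat.eq_zero_or_pos i with h | h
          · exfalso; apply hw0; rw [h]; simp
          · exact h
        · rw [Nat.le_div_iff_mul_le hg0]
          have h2 : i * g < 3 * K * H := by exact_mod_cast h1.2
          have h3 : 3 * M = 3 * K * H := by rw [hM]; ring
          omega
      refine (Finset.card_le_card hsub).trans (Finset.card_image_le.trans ?_)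
      simp
    have hf1 : (M - 1) / g ≤ #(f1 Θ) := by
      have hsub : (Icc 1 ((M - 1) / g)).image (fun j : ℕ => (j : ℤ) • v) ⊆ f1 Θ := by
        intro w hw
        obtain ⟨i, hi, rfl⟩ := Finset.mem_image.1 hw
        rw [Finset.mem_Icc, Nat.le_div_iff_mul_le hg0] at hi
        have hiz : (i : ℤ) ≠ 0 := by omega
        refine Finset.mem_filter.2 ⟨Finset.mem_erase.2 ⟨?_, ?_⟩, ?_⟩
        · intro h
          have := @hinjj i 0 (by simpa using h)
          omega
        · rw [hV1]
          intro l
          rw [mv_smul, Pi.smul_apply, smul_eq_mul]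
          refine ⟨mul_nonneg (by positivity) (hvnn l), ?_⟩
          have h1 : (i : ℤ) * mv b I v l ≤ i * g := mul_le_mul_of_nonneg_left (hgle l) (by positivity)
          have h2 : i * g < K * H := by omega
          have h3 : (i : ℤ) * g < K * H := by exact_mod_cast h2
          linarith
        · rw [Th_smul _ _ _ _ hiz, hvT]
      refine le_trans ?_ (Finset.card_le_card hsub)
      rw [Finset.card_image_of_injective _ hinjj]
      simp
    by_cases hgM : M ≤ g
    · rw [if_pos (hgM.trans hght)]
      have : (3 * M - 1) / g ≤ 2 := by
        have : (3 * M - 1) / g < 3 := by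
          rw [Nat.div_lt_iff_lt_mul hg0]; omega
        omega
      omega
    · push Not at hgM
      have h1 : 1 ≤ (M - 1) / g := by
        rw [Nat.le_div_iff_mul_le hg0]; omega
      have h2 : (3 * M - 1) / g ≤ 3 * ((M - 1) / g) + 2 := by
        have h3 := Nat.lt_mul_of_div_lt (Nat.lt_succ_self ((M - 1) / g)) hg0
        have : (3 * M - 1) / g < 3 * ((M - 1) / g) + 3 := by
          rw [Nat.div_lt_iff_lt_mul hg0]
          have h4 : M ≤ ((M - 1) / g + 1) * g := by
            have : M - 1 < ((M - 1) / g + 1) * g := by simpa using h3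
            omega
          have h5 : (3 * ((M - 1) / g) + 3) * g = 3 * (((M - 1) / g + 1) * g) := by ring
          omega
        omega
      omega
  refine ⟨𝒯, ?_, ?_⟩
  · have hs3 : #(V3.erase 0) = ∑ Θ ∈ A, #(f3 Θ) :=
      Finset.card_eq_sum_card_fiberwise fun v hv => Finset.mem_image_of_mem _ hv
    have hs1 : ∑ Θ ∈ A, #(f1 Θ) ≤ #(V1.erase 0) := by
      rw [← Finset.card_biUnion]
      · apply Finset.card_le_card
        intro v hv
        obtain ⟨Θ, -, h⟩ := Finset.mem_biUnion.1 hv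
        exact (Finset.mem_filter.1 h).1
      · intro Θ _ Θ' _ hne
        refine Finset.disjoint_left.2 ?_
        intro v h h'
        exact hne ((Finset.mem_filter.1 h).2.symm.trans (Finset.mem_filter.1 h').2)
    have hsum : ∑ Θ ∈ A, #(f3 Θ) ≤ 2 * #𝒯 + 5 * ∑ Θ ∈ A, #(f1 Θ) := by
      refine (Finset.sum_le_sum fun Θ h => (hray Θ h).2.2.2).trans ?_
      rw [Finset.sum_add_distrib, ← Finset.mul_sum, ← Finset.mul_sum, Finset.card_filter]
    have e3 := Finset.card_erase_of_mem h03
    have e1 := Finset.card_erase_of_mem h01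
    have hp1 : 1 ≤ #V1 := Finset.card_pos.2 ⟨0, h01⟩
    have hp3 : 1 ≤ #V3 := Finset.card_pos.2 ⟨0, h03⟩
    have h9 : 9 * (H * K ^ (q + 1)) ≤ #V3 := by
      refine le_trans ?_ hc3
      rw [mul_pow]
      have : 3 ^ 2 ≤ 3 ^ (q + 1) := Nat.pow_le_pow_right (by norm_num) (by omega)
      nlinarith [Nat.zero_le (H * K ^ (q + 1))]
    have hHK : H ≤ H * K ^ (q + 1) := Nat.le_mul_of_pos_right _ (by positivity)
    omega
  · intro Θ hΘ
    obtain ⟨hA, hM'⟩ := Finset.mem_filter.1 hΘ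
    obtain ⟨h1, h2, h3, -⟩ := hray Θ hA
    exact ⟨h1, h2, hM', h3⟩

end HB

namespace HB

open Finset

variable {s r : ℕ}

/-- the form vanishes identically on the subspace -/
def XO (F : MvPolynomial (Fin s) ℤ) (W : Submodule ℚ (Fin s → ℚ)) : Prop :=
  ∀ x ∈ W, MvPolynomial.aeval x F = 0

theorem XO.mono {F : MvPolynomial (Fin s) ℤ} {W W' : Submodule ℚ (Fin s → ℚ)} (h : XO F W')
    (hle : W ≤ W') : XO F W := fun x hx => h x (hle hx)

/-- avoid finitely many subspaces not containing `S` -/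
theorem exists_avoid (S : Submodule ℚ (Fin s → ℚ)) (T : Finset (Submodule ℚ (Fin s → ℚ)))
    (hT : ∀ U ∈ T, ¬ S ≤ U) : ∃ e ∈ S, ∀ U ∈ T, e ∉ U := by
  classical
  have h := Subspace.biUnion_ne_univ_of_top_notMem (k := ℚ) (E := S)
    (s := T.image (fun U => U.comap S.subtype)) (by
      intro h
      obtain ⟨U, hU, h2⟩ := Finset.mem_image.1 h
      apply hT U hU
      intro x hx
      have : (⟨x, hx⟩ : S) ∈ U.comap S.subtype := by rw [h2]; trivial
      simpa using this)
  rw [Set.ne_univ_iff_exists_notMem] at h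
  obtain ⟨e, he⟩ := h
  refine ⟨e, e.2, fun U hU hc => he ?_⟩
  simp only [Set.mem_iUnion]
  exact ⟨U.comap S.subtype, Finset.mem_image_of_mem _ hU, by simpa using hc⟩

theorem few_sub (F : MvPolynomial (Fin s) ℤ) {d : ℕ} (hd : F.totalDegree ≤ d)
    {S : Submodule ℚ (Fin s → ℚ)} (hS : Module.finrank ℚ S = r + 1) (hF : ¬ XO F S)
    (T : Finset (Submodule ℚ (Fin s → ℚ)))
    (hT : ∀ W ∈ T, W ≤ S ∧ Module.finrank ℚ W = r ∧ XO F W) : #T ≤ d := by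
  classical
  unfold XO at hF
  push Not at hF
  obtain ⟨q, hqS, hq⟩ := hF
  have hqW : ∀ W ∈ T, q ∉ W := fun W hW hc => hq ((hT W hW).2.2 q hc)
  -- forbidden subspaces
  let A := T ∪ ((T ×ˢ T).filter (fun p => p.1 ≠ p.2)).image (fun p => (p.1 ⊓ p.2) ⊔ Submodule.span ℚ {q})
  obtain ⟨e, heS, he⟩ := exists_avoid S A (by
    intro U hU hle
    rcases Finset.mem_union.1 hU with h | h
    · have := Submodule.finrank_mono hle
      rw [(hT U h).2.1, hS] at this; omega
    · obtain ⟨⟨W, W'⟩, hp, rfl⟩ := Finset.mem_image.1 h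
      obtain ⟨hp1, hne⟩ := Finset.mem_filter.1 hp
      obtain ⟨hW, hW'⟩ := Finset.mem_product.1 hp1
      simp only at hW hW' hne hle
      have h1 := Submodule.finrank_mono hle
      have h2 := Submodule.finrank_add_le_finrank_add_finrank (W ⊓ W') (Submodule.span ℚ {q})
      have h3 := finrank_span_le_card (R := ℚ) ({q} : Set (Fin s → ℚ))
      simp only [Set.toFinset_singleton, Finset.card_singleton] at h3
      have h4 : Module.finrank ℚ (W ⊓ W' : Submodule ℚ (Fin s → ℚ)) < r := by
        rw [← (hT W hW).2.1]
        apply Submodule.finrank_lt_finrank_of_lt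
        refine lt_of_le_of_ne inf_le_left ?_
        intro h5
        have h6 : W ≤ W' := by rw [← h5]; exact inf_le_right
        exact hne (Submodule.eq_of_le_of_finrank_eq h6 (by rw [(hT W hW).2.1, (hT W' hW').2.1]))
      omega)
  have hu : ∀ W ∈ T, ∃ u : ℚ, q - u • e ∈ W := by
    intro W hW
    have heW : e ∉ W := he W (Finset.mem_union_left _ hW)
    have hsup : W ⊔ Submodule.span ℚ {e} = S := by
      apply Submodule.eq_of_le_of_finrank_le
      · exact sup_le (hT W hW).1 (by rw [Submodule.span_le]; simpa using heS)
      · rw [hS, ← (hT W hW).2.1]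
        apply Submodule.finrank_lt_finrank_of_lt
        refine lt_of_le_of_ne le_sup_left ?_
        intro h5
        apply heW; rw [h5]
        exact Submodule.mem_sup_right (Submodule.mem_span_singleton_self e)
    rw [← hsup, Submodule.mem_sup] at hqS
    obtain ⟨w, hw, z, hz, hwz⟩ := hqS
    obtain ⟨u, rfl⟩ := Submodule.mem_span_singleton.1 hz
    exact ⟨u, by rw [← hwz]; simpa using hw⟩
  choose! u hu using hu
  let G : MvPolynomial (Fin s) ℚ := MvPolynomial.map (Int.castRingHom ℚ) F
  let f : Fin s → Polynomial ℚ := fun i => Polynomial.C (q i) - Polynomial.X * Polynomial.C (e i)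
  let g : Polynomial ℚ := MvPolynomial.aeval f G
  have hdeg : g.natDegree ≤ d := by
    have := MvPolynomial.aeval_natDegree_le (m := d) (n := 1) G
      ((Finset.sup_mono (MvPolynomial.support_map_subset _ _)).trans hd) f (by
        intro i
        refine (Polynomial.natDegree_sub_le _ _).trans ?_
        simp only [Polynomial.natDegree_C]
        refine max_le (by norm_num) ?_
        refine Polynomial.natDegree_mul_le.trans ?_
        simp)
    simpa using this
  have heval : ∀ t : ℚ, g.eval t = MvPolynomial.aeval (q - t • e) F := by
    intro t
    have h1 : g.eval t = (Polynomial.aeval t) (MvPolynomial.aeval f G) := by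
      rw [Polynomial.coe_aeval_eq_eval]
    rw [h1, MvPolynomial.comp_aeval_apply]
    simp only [G]
    rw [← algebraMap_int_eq, MvPolynomial.aeval_map_algebraMap]
    congr 2
    ext i
    simp [f]; ring
  have hg0 : g ≠ 0 := by
    intro h
    have := heval 0
    rw [h] at this
    simp at this
    exact hq this.symm
  have hroots : T.image u ⊆ g.roots.toFinset := by
    intro t ht
    obtain ⟨W, hW, rfl⟩ := Finset.mem_image.1 ht
    rw [Multiset.mem_toFinset, Polynomial.mem_roots hg0, Polynomial.IsRoot, heval]
    exact (hT W hW).2.2 _ (hu W hW)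
  have hinj : Set.InjOn u T := by
    intro W hW W' hW' heq
    by_contra hne
    have hW : W ∈ T := hW
    have hW' : W' ∈ T := hW'
    have h1 := hu W hW
    have h2 := hu W' hW'
    rw [← heq] at h2
    have hu0 : u W ≠ 0 := by
      intro h0; rw [h0] at h1; exact hqW W hW (by simpa using h1)
    apply he ((W ⊓ W') ⊔ Submodule.span ℚ {q})
    · exact Finset.mem_union_right _ (Finset.mem_image.2 ⟨(W, W'), Finset.mem_filter.2
        ⟨Finset.mem_product.2 ⟨hW, hW'⟩, hne⟩, rfl⟩)
    · have h3 : e = (u W)⁻¹ • (-(q - u W • e)) + (u W)⁻¹ • q := by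
        ext i
        simp only [Pi.add_apply, Pi.smul_apply, Pi.neg_apply, Pi.sub_apply, smul_eq_mul]
        field_simp
        ring
      rw [h3]
      apply Submodule.add_mem_sup
      · exact Submodule.smul_mem _ _ (Submodule.neg_mem _ ⟨h1, h2⟩)
      · exact Submodule.smul_mem _ _ (Submodule.mem_span_singleton_self q)
  calc #T = #(T.image u) := (Finset.card_image_of_injOn hinj).symm
    _ ≤ #g.roots.toFinset := Finset.card_le_card hroots
    _ ≤ Multiset.card g.roots := Multiset.toFinset_card_le _
    _ ≤ g.natDegree := Polynomial.card_roots' g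
    _ ≤ d := hdeg

end HB

namespace HB

open Finset

variable {s r : ℕ}

def killMap (K : Type*) [Field K] (r k : ℕ) : MvPolynomial (Fin r) K →ₐ[K] MvPolynomial (Fin r) K :=
  MvPolynomial.aeval (fun i => if i.1 < k then 0 else MvPolynomial.X i)

theorem killMap_X (K : Type*) [Field K] (r k : ℕ) (i : Fin r) :
    killMap K r k (MvPolynomial.X i) = if i.1 < k then 0 else MvPolynomial.X i := by
  simp [killMap]

theorem killMap_comp (K : Type*) [Field K] (r k : ℕ) :
    (killMap K r (k + 1)).comp (killMap K r k) = killMap K r (k + 1) := by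
  apply MvPolynomial.algHom_ext
  intro i
  rw [AlgHom.comp_apply, killMap_X, killMap_X]
  split_ifs with h1 h2 h2
  · simp
  · omega
  · rw [killMap_X, if_pos h2]
  · rw [killMap_X, if_neg h2]

theorem height_kill (K : Type*) [Field K] (r : ℕ) : ∀ k ≤ r,
    (k : ℕ∞) ≤ (RingHom.ker (killMap K r k)).height := by
  intro k
  induction k with
  | zero => intro _; simp
  | succ k ih =>
    intro hk
    have h1 := ih (by omega)
    haveI : (RingHom.ker (killMap K r k)).IsPrime := RingHom.ker_isPrime _
    haveI : (RingHom.ker (killMap K r (k + 1))).IsPrime := RingHom.ker_isPrime _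
    have hlt : RingHom.ker (killMap K r k) < RingHom.ker (killMap K r (k + 1)) := by
      refine lt_of_le_of_ne ?_ ?_
      · intro p hp
        rw [RingHom.mem_ker] at hp ⊢
        rw [← killMap_comp, AlgHom.comp_apply, hp, map_zero]
      · intro h
        have h2 : (MvPolynomial.X ⟨k, hk⟩ : MvPolynomial (Fin r) K) ∈ RingHom.ker (killMap K r k) := by
          rw [h, RingHom.mem_ker, killMap_X]; simp
        rw [RingHom.mem_ker, killMap_X] at h2
        simp at h2
    have h2 := Ideal.height_add_one_le_of_lt_of_isPrime hlt
    push_cast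
    exact le_trans (by gcongr) h2

theorem exists_common_zero {K : Type*} [Field K] [IsAlgClosed K] {m : ℕ}
    (f : Fin m → MvPolynomial (Fin r) K) (hmr : m < r)
    (h0 : ∀ j, MvPolynomial.aeval (0 : Fin r → K) (f j) = 0) :
    ∃ a : Fin r → K, a ≠ 0 ∧ ∀ j, MvPolynomial.aeval a (f j) = 0 := by
  by_contra hcon
  push Not at hcon
  let I := Ideal.span (Set.range f)
  have hz : MvPolynomial.zeroLocus K I = {0} := by
    rw [MvPolynomial.zeroLocus_span]
    ext a
    simp only [Set.mem_range, forall_exists_index, forall_apply_eq_imp_iff, Set.mem_setOf_eq,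
      Set.mem_singleton_iff]
    constructor
    · intro h
      by_contra ha
      obtain ⟨j, hj⟩ := hcon a ha
      exact hj (h j)
    · rintro rfl; exact h0
  have hrad := MvPolynomial.vanishingIdeal_zeroLocus_eq_radical (K := K) I
  rw [hz] at hrad
  have hmin : MvPolynomial.vanishingIdeal K ({0} : Set (Fin r → K)) ∈ I.minimalPrimes := by
    refine ⟨⟨inferInstance, ?_⟩, ?_⟩
    · rw [hrad]; exact Ideal.le_radical
    · rintro J ⟨hJ, hIJ⟩ -
      rw [hrad]
      exact (hJ.radical_le_iff).2 hIJ
  have h1 := Ideal.height_le_card_of_mem_minimalPrimes_span (Set.finite_range f) hmin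
  have h2 : (Set.range f).ncard ≤ m := by
    have := Set.ncard_image_le (f := f) (Set.finite_univ)
    simpa [Set.image_univ, Set.ncard_univ] using this
  have h3 := height_kill K r r le_rfl
  have h4 : RingHom.ker (killMap K r r) ≤ MvPolynomial.vanishingIdeal K ({0} : Set (Fin r → K)) := by
    intro p hp
    rw [MvPolynomial.mem_vanishingIdeal_singleton_iff]
    rw [RingHom.mem_ker] at hp
    have h5 := congrArg (MvPolynomial.aeval (0 : Fin r → K)) hp
    rw [killMap, MvPolynomial.comp_aeval_apply, map_zero] at h5
    rw [← h5]
    congr 2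
    ext i
    simp
  have h5 := (h3.trans (Ideal.height_mono h4)).trans h1
  have h6 : r ≤ (Set.range f).ncard := by exact_mod_cast h5
  omega

theorem pderiv_aeval (g : Fin s → MvPolynomial (Fin r) ℤ) (k : Fin r) (F : MvPolynomial (Fin s) ℤ) :
    MvPolynomial.pderiv k (MvPolynomial.aeval g F) =
      ∑ i, MvPolynomial.aeval g (MvPolynomial.pderiv i F) * MvPolynomial.pderiv k (g i) := by
  classical
  induction F using MvPolynomial.induction_on with
  | C a => simp
  | add p q hp hq => simp only [map_add, hp, hq, add_mul, Finset.sum_add_distrib]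
  | mul_X p i hp =>
    simp only [map_mul, Derivation.leibniz, hp, MvPolynomial.aeval_X, MvPolynomial.pderiv_X,
      smul_eq_mul, map_add, add_mul, Finset.sum_add_distrib, Finset.mul_sum]
    congr 1
    · rw [Finset.sum_eq_single i]
      · simp
      · intro j _ hj; simp [Pi.single_apply, hj]
      · simp
    · apply Finset.sum_congr rfl; intro j _; ring

theorem rank_le {K : Type*} [Field K] [IsAlgClosed K] [CharZero K] [Algebra ℚ K]
    {F : MvPolynomial (Fin s) ℤ} {d : ℕ}
    (hF : F.IsHomogeneous d) (hd : 2 ≤ d)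
    (hns : ∀ z : Fin s → K, (∀ i, MvPolynomial.aeval z (MvPolynomial.pderiv i F) = 0) → z = 0)
    {W : Submodule ℚ (Fin s → ℚ)} (hW : Module.finrank ℚ W = r) (hX : XO F W) : 2 * r ≤ s := by
  by_contra hlt
  obtain ⟨b, hb⟩ := exists_ZB hW
  obtain ⟨W', hW'⟩ := Submodule.exists_isCompl W
  have hfr : Module.finrank ℚ W + Module.finrank ℚ W' = s := by
    have := Submodule.finrank_add_eq_of_isCompl hW'
    simpa using this
  obtain ⟨m, hm⟩ : ∃ m, Module.finrank ℚ W' = m := ⟨_, rfl⟩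
  obtain ⟨c, hc⟩ := exists_ZB hm
  let g : Fin s → MvPolynomial (Fin r) ℤ := fun i => ∑ k, MvPolynomial.C (b k i) * MvPolynomial.X k
  have hphi : MvPolynomial.aeval g F = 0 := by
    apply MvPolynomial.funext
    intro z
    rw [map_zero]
    have h1 := hX (toQ (∑ k, z k • b k)) (by
      rw [toQ_sum]
      refine Submodule.sum_mem _ fun k _ => ?_
      rw [toQ_smul]
      exact Submodule.smul_mem _ _ (hb.2.1 k))
    have h2 : MvPolynomial.aeval (toQ (∑ k, z k • b k)) F
        = ((MvPolynomial.aeval (∑ k, z k • b k) F : ℤ) : ℚ) := by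
      have := MvPolynomial.comp_aeval_apply (f := ∑ k, z k • b k) (Int.castRingHom ℚ).toIntAlgHom F
      exact this.symm
    rw [h2] at h1
    have h3 : MvPolynomial.aeval (∑ k, z k • b k) F = 0 := by exact_mod_cast h1
    have h4 := MvPolynomial.comp_aeval_apply (f := g) (MvPolynomial.aeval z : _ →ₐ[ℤ] ℤ) F
    rw [MvPolynomial.aeval_eq_eval] at h4
    change MvPolynomial.eval z _ = _ at h4
    rw [h4, ← h3]
    congr 2
    ext i
    simp [g, mul_comm]
  have hpd : ∀ k, ∑ i, MvPolynomial.aeval g (MvPolynomial.pderiv i F) * MvPolynomial.C (b k i) = 0 := by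
    intro k
    have h := pderiv_aeval g k F
    rw [hphi, map_zero] at h
    rw [h]
    apply Finset.sum_congr rfl
    intro i _
    congr 1
    simp only [g, map_sum, Derivation.leibniz, MvPolynomial.pderiv_X, MvPolynomial.pderiv_C]
    rw [Finset.sum_eq_single k]
    · simp
    · intro j _ hj; simp [Pi.single_apply, hj]
    · simp
  let f : Fin m → MvPolynomial (Fin r) ℤ := fun j =>
    ∑ i, MvPolynomial.aeval g (MvPolynomial.pderiv i F) * MvPolynomial.C (c j i)
  -- evaluation at a point of K^r
  let zz : (Fin r → K) → Fin s → K := fun a i => ∑ k, (b k i : K) * a k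
  have hev : ∀ (a : Fin r → K) (P : MvPolynomial (Fin s) ℤ),
      MvPolynomial.aeval a (MvPolynomial.aeval g P) = MvPolynomial.aeval (zz a) P := by
    intro a P
    have h4 := MvPolynomial.comp_aeval_apply (f := g) (MvPolynomial.aeval a : _ →ₐ[ℤ] K) P
    rw [h4]
    congr 2
    ext i
    simp [g, zz]
  obtain ⟨a, ha0, ha⟩ := exists_common_zero (K := K) (r := r)
    (fun j => MvPolynomial.map (Int.castRingHom K) (f j)) (by omega) (by
      intro j
      rw [← algebraMap_int_eq, MvPolynomial.aeval_map_algebraMap]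
      simp only [f, map_sum, map_mul, hev]
      apply Finset.sum_eq_zero
      intro i _
      have hz0 : zz 0 = 0 := by ext i; simp [zz]
      rw [hz0]
      have hh : (MvPolynomial.pderiv i F).IsHomogeneous (d - 1) := hF.pderiv
      have h5 : MvPolynomial.aeval (0 : Fin s → K) (MvPolynomial.pderiv i F) = 0 := by
        have h6 : MvPolynomial.constantCoeff (MvPolynomial.pderiv i F) = 0 := by
          rw [MvPolynomial.constantCoeff_eq]
          apply hh.coeff_eq_zero
          simp; omega
        rw [MvPolynomial.aeval_zero, h6, map_zero]
      rw [h5, zero_mul])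
  have hz : zz a = 0 := by
    apply hns
    let L : (Fin s → ℚ) →ₗ[ℚ] K := 
      ∑ i, (LinearMap.proj i : (Fin s → ℚ) →ₗ[ℚ] ℚ).smulRight (MvPolynomial.aeval (zz a) (MvPolynomial.pderiv i F))
    have hL : ∀ v : Fin s → ℤ, L (toQ v) = ∑ i, MvPolynomial.aeval (zz a) (MvPolynomial.pderiv i F) * (v i : K) := by
      intro v
      simp only [L, LinearMap.sum_apply, LinearMap.smulRight_apply, LinearMap.proj_apply, toQ]
      apply Finset.sum_congr rfl
      intro i _
      rw [Algebra.smul_def, mul_comm]; simp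
    have hLW : W ≤ LinearMap.ker L := by
      rw [← hb.span_eq, Submodule.span_le]
      rintro _ ⟨k, rfl⟩
      have h5 := congrArg (MvPolynomial.aeval a : _ →ₐ[ℤ] K) (hpd k)
      simp only [map_sum, map_mul, hev, map_zero, MvPolynomial.aeval_C] at h5
      simp only [SetLike.mem_coe, LinearMap.mem_ker, hL]
      simpa using h5
    have hLW' : W' ≤ LinearMap.ker L := by
      rw [← hc.span_eq, Submodule.span_le]
      rintro _ ⟨k, rfl⟩
      have h5 := ha k
      rw [← algebraMap_int_eq, MvPolynomial.aeval_map_algebraMap] at h5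
      simp only [f, map_sum, map_mul, hev, map_zero, MvPolynomial.aeval_C] at h5
      simp only [SetLike.mem_coe, LinearMap.mem_ker, hL]
      simpa using h5
    have htop : ∀ v, L v = 0 := by
      intro v
      have : v ∈ W ⊔ W' := by rw [hW'.sup_eq_top]; trivial
      exact (sup_le hLW hLW') this
    intro i
    have h6 := htop (toQ (Pi.single i 1))
    rw [hL, Finset.sum_eq_single i] at h6
    · simpa using h6
    · intro j _ hj; simp [hj]
    · simp
  apply ha0
  obtain ⟨I, hI⟩ := exists_mnr_eq_TT hb.1
  have hD : mnr b I ≠ 0 := by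
    intro h; rw [h] at hI; exact hb.1 hI.symm
  have hDK : (Matrix.of fun k l => ((b k (I l) : ℤ) : K)).det ≠ 0 := by
    have : (Matrix.of fun k l => ((b k (I l) : ℤ) : K)).det = ((mnr b I : ℤ) : K) := by
      unfold mnr
      exact ((Int.castRingHom K).map_det _).symm
    rw [this]; exact_mod_cast hD
  apply Matrix.eq_zero_of_vecMul_eq_zero hDK
  ext l
  have := congrFun hz (I l)
  simp only [zz] at this
  simpa [Matrix.vecMul, dotProduct, mul_comm] using this

end HB

namespace HB

open Finset

variable {s q : ℕ}

theorem incidence {α β : Type*} [DecidableEq α] [DecidableEq β] (V : Finset α) (T : α → Finset β)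
    (E : ℕ) (h : ∀ w ∈ V, ∑ w' ∈ V.erase w, #(T w ∩ T w') ≤ E * #(T w)) :
    ∑ w ∈ V, #(T w) ≤ (1 + E) * #(V.biUnion T) := by
  set U := V.biUnion T with hU
  let u : β → ℕ := fun θ => ∑ w ∈ V, if θ ∈ T w then 1 else 0
  have hTU : ∀ w ∈ V, T w ⊆ U := fun w hw => Finset.subset_biUnion_of_mem T hw
  have h1 : ∑ θ ∈ U, u θ = ∑ w ∈ V, #(T w) := by
    simp only [u]
    rw [Finset.sum_comm]
    apply Finset.sum_congr rfl
    intro w hw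
    rw [← Finset.card_filter, Finset.filter_mem_eq_inter, Finset.inter_eq_right.2 (hTU w hw)]
  have h2 : ∑ θ ∈ U, u θ ^ 2 = ∑ w ∈ V, ∑ w' ∈ V, #(T w ∩ T w') := by
    have : ∀ θ, u θ ^ 2 = ∑ w ∈ V, ∑ w' ∈ V, if θ ∈ T w ∩ T w' then 1 else 0 := by
      intro θ
      simp only [u]
      rw [sq, Finset.sum_mul_sum]
      apply Finset.sum_congr rfl
      intro w _
      apply Finset.sum_congr rfl
      intro w' _
      by_cases h1 : θ ∈ T w <;> by_cases h2 : θ ∈ T w' <;> simp [h1, h2]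
    simp_rw [this]
    rw [Finset.sum_comm]
    apply Finset.sum_congr rfl
    intro w hw
    rw [Finset.sum_comm]
    apply Finset.sum_congr rfl
    intro w' _
    rw [← Finset.card_filter, Finset.filter_mem_eq_inter, Finset.inter_eq_right.2]
    exact Finset.inter_subset_left.trans (hTU w hw)
  have h3 : (∑ θ ∈ U, u θ) ^ 2 ≤ #U * ∑ θ ∈ U, u θ ^ 2 := sq_sum_le_card_mul_sum_sq
  have h4 : ∑ w ∈ V, ∑ w' ∈ V, #(T w ∩ T w') ≤ (1 + E) * ∑ w ∈ V, #(T w) := by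
    rw [Finset.mul_sum]
    apply Finset.sum_le_sum
    intro w hw
    rw [← Finset.add_sum_erase V _ hw, Finset.inter_self]
    have := h w hw
    linarith
  rw [h1, h2] at h3
  set I := ∑ w ∈ V, #(T w)
  rcases Nat.eq_zero_or_pos I with h0 | h0
  · rw [h0]; exact Nat.zero_le _
  · have h5 : I * I ≤ I * ((1 + E) * #U) := by
      calc I * I = I ^ 2 := by ring
        _ ≤ #U * ((1 + E) * I) := h3.trans (Nat.mul_le_mul_left _ h4)
        _ = _ := by ring
    exact Nat.le_of_mul_le_mul_left h5 h0

theorem finrank_sup {W W' Θ : Submodule ℚ (Fin s → ℚ)} (hW : Module.finrank ℚ W = q + 1)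
    (hW' : Module.finrank ℚ W' = q + 1) (hΘ : Module.finrank ℚ Θ = q) (h1 : Θ ≤ W) (h2 : Θ ≤ W')
    (hne : W ≠ W') : Module.finrank ℚ (W ⊔ W' : Submodule ℚ (Fin s → ℚ)) = q + 2 ∧ Θ = W ⊓ W' := by
  have h3 := Submodule.finrank_sup_add_finrank_inf_eq W W'
  have h4 : Module.finrank ℚ (W ⊓ W' : Submodule ℚ (Fin s → ℚ)) < q + 1 := by
    rw [← hW]
    apply Submodule.finrank_lt_finrank_of_lt
    refine lt_of_le_of_ne inf_le_left ?_
    intro h5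
    have h6 : W ≤ W' := by rw [← h5]; exact inf_le_right
    exact hne (Submodule.eq_of_le_of_finrank_eq h6 (by rw [hW, hW']))
  have h5 := Submodule.finrank_mono (le_inf h1 h2)
  rw [hΘ] at h5
  refine ⟨by omega, Submodule.eq_of_le_of_finrank_eq (le_inf h1 h2) (by omega)⟩

/-- given `W`, few `W'` such that the join has small height and is not in `X` -/
theorem few_neighbours (F : MvPolynomial (Fin s) ℤ) {d : ℕ} (hd : F.totalDegree ≤ d)
    {W : Submodule ℚ (Fin s → ℚ)} (hW : Module.finrank ℚ W = q + 1) (ρ : ℕ)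
    (V : Finset (Submodule ℚ (Fin s → ℚ)))
    (hV : ∀ W' ∈ V, Module.finrank ℚ W' = q + 1 ∧ XO F W' ∧
      Module.finrank ℚ (W ⊔ W' : Submodule ℚ (Fin s → ℚ)) = q + 2 ∧
      ht (q + 2) (W ⊔ W') ≤ ρ * ht (q + 1) W ∧ ¬ XO F (W ⊔ W')) :
    #V ≤ d * (ht (q + 1) W * (2 * ρ + 1) ^ s) := by
  classical
  let S := V.image (fun W' => W ⊔ W')
  have hS : #S ≤ ht (q + 1) W * (2 * ρ + 1) ^ s := by
    apply tube hW
    intro S' hS'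
    obtain ⟨W', hW', rfl⟩ := Finset.mem_image.1 hS'
    exact ⟨le_sup_left, (hV W' hW').2.2.1, (hV W' hW').2.2.2.1⟩
  rw [Finset.card_eq_sum_card_image (fun W' => W ⊔ W') V]
  refine (Finset.sum_le_card_nsmul _ _ d ?_).trans ?_
  · intro S' hS'
    obtain ⟨W0, hW0, rfl⟩ := Finset.mem_image.1 hS'
    apply few_sub F hd (hV W0 hW0).2.2.1 (hV W0 hW0).2.2.2.2
    intro W' hW'
    obtain ⟨h1, h2⟩ := Finset.mem_filter.1 hW'
    refine ⟨?_, (hV W' h1).1, (hV W' h1).2.1⟩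
    rw [← h2]; exact le_sup_right
  · rw [smul_eq_mul, mul_comm]
    exact Nat.mul_le_mul_left _ hS

def lemC (s q d : ℕ) : ℕ := 2 * (1 + 2 * (d * (2 * (2 * ((q + 2) * (q + 1))) + 1) ^ s))

theorem lemma_one (F : MvPolynomial (Fin s) ℤ) {d : ℕ} (hd : F.totalDegree ≤ d) (hq : 1 ≤ q)
    {K : ℕ} (hK : 1 ≤ K) (m L : ℕ) (V : Finset (Submodule ℚ (Fin s → ℚ)))
    (hV : ∀ W ∈ V, Module.finrank ℚ W = q + 1 ∧ XO F W ∧ ht (q + 1) W ≤ m ∧ m ≤ 2 * ht (q + 1) W ∧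
      ∀ S' : Submodule ℚ (Fin s → ℚ), W ≤ S' → Module.finrank ℚ S' = q + 2 →
        ht (q + 2) S' * K ≤ (q + 2) * (q + 1) * m → ¬ XO F S')
    (hL : ∀ U : Finset (Submodule ℚ (Fin s → ℚ)),
      (∀ Θ ∈ U, Module.finrank ℚ Θ = q ∧ XO F Θ ∧ ht q Θ ≤ 3 * (q + 1) ^ q * K * m) → #U ≤ L) :
    #V * m ≤ lemC s q d * L := by
  classical
  choose! T hT1 hT2 using fun W hW => lower_count (K := K) (hV W hW).1 hq hK
  have hUL : #(V.biUnion T) ≤ L := by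
    apply hL
    intro Θ hΘ
    obtain ⟨W, hW, hΘW⟩ := Finset.mem_biUnion.1 hΘ
    obtain ⟨h1, h2, h3, h4⟩ := hT2 W hW Θ hΘW
    refine ⟨h2, (hV W hW).2.1.mono h1, h4.trans ?_⟩
    have := (hV W hW).2.2.1
    calc (q + 1) ^ q * (3 * K * ht (q + 1) W) = 3 * (q + 1) ^ q * K * ht (q + 1) W := by ring
      _ ≤ _ := Nat.mul_le_mul_left _ this
  set c := d * (2 * (2 * ((q + 2) * (q + 1))) + 1) ^ s with hc
  have hinc := incidence V T (2 * c) (by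
    intro W hW
    obtain ⟨hr, hX, hm, hm2, hno⟩ := hV W hW
    let N := (V.erase W).filter (fun W' => (T W ∩ T W').Nonempty)
    have hkey : ∀ W' ∈ V.erase W, ∀ Θ ∈ T W ∩ T W', Θ = W ⊓ W' ∧ 
        Module.finrank ℚ W' = q + 1 ∧ XO F W' ∧
        Module.finrank ℚ (W ⊔ W' : Submodule ℚ (Fin s → ℚ)) = q + 2 ∧
        ht (q + 2) (W ⊔ W') ≤ (2 * ((q + 2) * (q + 1))) * ht (q + 1) W ∧ ¬ XO F (W ⊔ W') := by
      intro W' hW' Θ hΘ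
      obtain ⟨hne, hW'⟩ := Finset.mem_erase.1 hW'
      obtain ⟨hΘ1, hΘ2⟩ := Finset.mem_inter.1 hΘ
      obtain ⟨hr', hX', hm', -, -⟩ := hV W' hW'
      obtain ⟨g1, g2, g3, g4⟩ := hT2 W hW Θ hΘ1
      obtain ⟨k1, -, -, -⟩ := hT2 W' hW' Θ hΘ2
      obtain ⟨f1, f2⟩ := finrank_sup hr hr' g2 g1 k1 hne.symm
      have hsub := submod g2 hr hr' g1 k1 hne.symm
      have hHp : 1 ≤ ht (q + 1) W := ht_pos hr
      have hh : ht (q + 2) (W ⊔ W') * K ≤ (q + 2) * (q + 1) * ht (q + 1) W' := by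
        have h1 : ht (q + 1) W * (ht (q + 2) (W ⊔ W') * K) ≤
            ht (q + 1) W * ((q + 2) * (q + 1) * ht (q + 1) W') := by
          calc ht (q + 1) W * (ht (q + 2) (W ⊔ W') * K)
              = ht (q + 2) (W ⊔ W') * (K * ht (q + 1) W) := by ring
            _ ≤ ht (q + 2) (W ⊔ W') * ht q Θ := Nat.mul_le_mul_left _ g3
            _ ≤ _ := hsub
            _ = _ := by ring
        exact Nat.le_of_mul_le_mul_left h1 hHp
      have hh2 : ht (q + 2) (W ⊔ W') * K ≤ (q + 2) * (q + 1) * m :=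
        hh.trans (Nat.mul_le_mul_left _ hm')
      refine ⟨f2, hr', hX', f1, ?_, hno _ le_sup_left f1 hh2⟩
      calc ht (q + 2) (W ⊔ W') ≤ ht (q + 2) (W ⊔ W') * K := Nat.le_mul_of_pos_right _ hK
        _ ≤ (q + 2) * (q + 1) * m := hh2
        _ ≤ (q + 2) * (q + 1) * (2 * ht (q + 1) W) := Nat.mul_le_mul_left _ hm2
        _ = _ := by ring
    have hN : #N ≤ d * (ht (q + 1) W * (2 * (2 * ((q + 2) * (q + 1))) + 1) ^ s) := by
      apply few_neighbours F hd hr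
      intro W' hW'
      obtain ⟨h1, Θ, hΘ⟩ := Finset.mem_filter.1 hW'
      exact (hkey W' h1 Θ hΘ).2
    have hsum : ∑ w' ∈ V.erase W, #(T W ∩ T w') ≤ #N := by
      rw [Finset.card_filter]
      apply Finset.sum_le_sum
      intro W' hW'
      by_cases hne : (T W ∩ T W').Nonempty
      · rw [if_pos hne]
        apply Finset.card_le_one.2
        intro a ha b hb
        rw [(hkey W' hW' a ha).1, (hkey W' hW' b hb).1]
      · rw [if_neg hne, Finset.not_nonempty_iff_eq_empty.1 hne]; simp
    calc _ ≤ #N := hsum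
      _ ≤ _ := hN
      _ = c * ht (q + 1) W := by rw [hc]; ring
      _ ≤ 2 * c * ht (q + 1) W := by nlinarith [Nat.zero_le (c * ht (q + 1) W)]
      _ ≤ 2 * c * #(T W) := Nat.mul_le_mul_left _ (hT1 W hW))
  have hlow : #V * m ≤ 2 * ∑ W ∈ V, #(T W) := by
    rw [Finset.mul_sum, ← smul_eq_mul]
    apply Finset.card_nsmul_le_sum
    intro W hW
    have := (hV W hW).2.2.2.1
    have h2 := hT1 W hW
    omega
  calc #V * m ≤ 2 * ((1 + 2 * c) * L) := 
        hlow.trans (Nat.mul_le_mul_left _ (hinc.trans (Nat.mul_le_mul_left _ hUL)))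
    _ = lemC s q d * L := by unfold lemC; rw [← hc]; ring

end HB

namespace HB

open Finset

/-- primes between P and 4 * P -/
def QP (P : ℕ) : Finset ℕ := (Icc P (4 * P)).filter Nat.Prime

theorem theta_diff (P : ℕ) (hP : 1 ≤ P) :
    Chebyshev.theta (4 * P : ℕ) - Chebyshev.theta (P : ℕ) ≤ #(QP P) * Real.log (4 * P : ℕ) := by
  have h1 : ∀ N : ℕ, Chebyshev.theta (N : ℝ) = ∑ p ∈ (Ioc 0 N).filter Nat.Prime, Real.log p := by
    intro N; simp [Chebyshev.theta]
  rw [h1, h1]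
  have hsub : (Ioc 0 P).filter Nat.Prime ⊆ (Ioc 0 (4 * P)).filter Nat.Prime :=
    Finset.filter_subset_filter _ (Finset.Ioc_subset_Ioc_right (by omega))
  rw [← Finset.sum_sdiff hsub, add_sub_cancel_right]
  have h2 : ∀ p ∈ (Ioc 0 (4 * P)).filter Nat.Prime \ (Ioc 0 P).filter Nat.Prime, p ∈ QP P := by
    intro p hp
    rw [Finset.mem_sdiff, Finset.mem_filter, Finset.mem_filter, Finset.mem_Ioc, Finset.mem_Ioc] at hp
    rw [QP, Finset.mem_filter, Finset.mem_Icc]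
    obtain ⟨⟨⟨a, b⟩, c⟩, e⟩ := hp
    refine ⟨⟨?_, b⟩, c⟩
    by_contra h
    exact e ⟨⟨a, by omega⟩, c⟩
  calc _ ≤ ∑ p ∈ QP P, Real.log p := 
        Finset.sum_le_sum_of_subset_of_nonneg h2 (fun p _ _ => Real.log_natCast_nonneg p)
    _ ≤ #(QP P) • Real.log (4 * P : ℕ) := by
        apply Finset.sum_le_card_nsmul
        intro p hp
        rw [QP, Finset.mem_filter, Finset.mem_Icc] at hp
        apply Real.log_le_log
        · exact_mod_cast hp.2.pos
        · exact_mod_cast hp.1.2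
    _ = _ := by rw [nsmul_eq_mul]

theorem QP_pos (P : ℕ) (hP : 1 ≤ P) : 1 ≤ #(QP P) := by
  obtain ⟨p, hp, h1, h2⟩ := Nat.exists_prime_lt_and_le_two_mul P (by omega)
  exact Finset.card_pos.2 ⟨p, by rw [QP, Finset.mem_filter, Finset.mem_Icc]; exact ⟨⟨h1.le, by omega⟩, hp⟩⟩

theorem many_primes (δ : ℝ) (hδ : 0 < δ) : ∃ C : ℝ, 0 < C ∧ ∀ P : ℕ, 1 ≤ P →
    (P : ℝ) ≤ C * (P : ℝ) ^ δ * #(QP P) := by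
  have hl2 : 0 < Real.log 2 := Real.log_pos (by norm_num)
  have e1 : ∀ᶠ x : ℝ in Filter.atTop, Real.log x ≤ Real.log 2 / 12 * x ^ (1 / 2 : ℝ) := by
    have := (isLittleO_log_rpow_atTop (r := 1 / 2) (by norm_num)).bound (c := Real.log 2 / 12) (by positivity)
    filter_upwards [this, Filter.eventually_ge_atTop 1] with x hx hx1
    rw [Real.norm_of_nonneg (Real.log_nonneg hx1), Real.norm_of_nonneg (by positivity)] at hx
    exact hx
  rw [Filter.eventually_atTop] at e1
  obtain ⟨x0, hx0⟩ := e1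
  obtain ⟨N, hN⟩ := exists_nat_ge (max x0 1)
  -- small P cost N, large P cost 4^δ/(δ log 2)
  refine ⟨N + 4 ^ δ / δ / Real.log 2 + 1, by positivity, ?_⟩
  intro P hP
  have hPr : (1 : ℝ) ≤ P := by exact_mod_cast hP
  have hQ : (1 : ℝ) ≤ #(QP P) := by exact_mod_cast QP_pos P hP
  have hPδ : (1 : ℝ) ≤ (P : ℝ) ^ δ := Real.one_le_rpow hPr hδ.le
  have hc : (0 : ℝ) ≤ 4 ^ δ / δ / Real.log 2 := by positivity
  by_cases hPN : P ≤ N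
  · have h1 : (P : ℝ) ≤ N := by exact_mod_cast hPN
    have h2 : (1 : ℝ) ≤ (P : ℝ) ^ δ * #(QP P) := one_le_mul_of_one_le_of_one_le hPδ hQ
    rw [mul_assoc]
    nlinarith
  · push Not at hPN
    have hNP : (N : ℝ) ≤ P := by exact_mod_cast hPN.le
    have hx := hx0 ((4 * P : ℕ) : ℝ) (by
      push_cast
      have := le_max_left x0 1
      linarith)
    have hd := theta_diff P hP
    have hlow := Chebyshev.theta_ge (4 * P)
    have hup := Chebyshev.theta_le_log4_mul_x (x := (P : ℝ)) (by positivity)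
    have hlog4 : Real.log 4 = 2 * Real.log 2 := by
      rw [show (4 : ℝ) = 2 ^ 2 by norm_num, Real.log_pow]; norm_num
    rw [hlog4] at hup
    set x : ℝ := ((4 * P : ℕ) : ℝ) with hxdef
    have hx4 : (4 : ℝ) ≤ x := by rw [hxdef]; push_cast; linarith
    have hsq : x ^ (1 / 2 : ℝ) = √x := (Real.sqrt_eq_rpow x).symm
    rw [hsq] at hx
    have hsqx : √x * √x = x := Real.mul_self_sqrt (by linarith)
    have hs2 : 2 ≤ √x := by
      rw [show (2 : ℝ) = √4 by rw [show (4 : ℝ) = 2 ^ 2 by norm_num]; simp]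
      exact Real.sqrt_le_sqrt hx4
    have hlogx : 0 ≤ Real.log x := Real.log_nonneg (by linarith)
    have hl1 : Real.log (x + 1) ≤ 2 * Real.log x := by
      have : Real.log (x ^ 2) = 2 * Real.log x := by rw [Real.log_pow]; norm_num
      rw [← this]
      apply Real.log_le_log (by linarith)
      nlinarith
    have hmain : (P : ℝ) * Real.log 2 ≤ #(QP P) * Real.log x := by
      have h3 : √x * Real.log x ≤ Real.log 2 / 12 * x := by
        calc √x * Real.log x ≤ √x * (Real.log 2 / 12 * √x) := by gcongr
          _ = Real.log 2 / 12 * (√x * √x) := by ring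
          _ = _ := by rw [hsqx]
      have h4 : 2 * Real.log x ≤ √x * Real.log x := by gcongr
      have h5 : x = 4 * P := by rw [hxdef]; push_cast; ring
      have h6 : 2 * √x * Real.log x = 2 * (√x * Real.log x) := by ring
      rw [h6] at hlow
      have h7 : x * Real.log 2 = 4 * (P * Real.log 2) := by rw [h5]; ring
      have h8 : Real.log 2 / 12 * x = (P * Real.log 2) / 3 := by rw [h5]; ring
      have h9 : 2 * Real.log 2 * P = 2 * (P * Real.log 2) := by ring
      linarith
    have hlogle : Real.log x ≤ x ^ δ / δ := Real.log_le_rpow_div (by linarith) hδ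
    have hxδ : x ^ δ = 4 ^ δ * (P : ℝ) ^ δ := by
      rw [hxdef]; push_cast; exact Real.mul_rpow (by norm_num) (by positivity)
    rw [hxδ] at hlogle
    have h10 : (P : ℝ) ≤ 4 ^ δ / δ / Real.log 2 * (P : ℝ) ^ δ * #(QP P) := by
      have h11 : (P : ℝ) * Real.log 2 ≤ #(QP P) * (4 ^ δ * (P : ℝ) ^ δ / δ) := hmain.trans (by gcongr)
      rw [← le_div_iff₀ hl2] at h11
      refine h11.trans (le_of_eq ?_)
      ring
    refine h10.trans ?_
    gcongr
    have : (0 : ℝ) ≤ N := by positivity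
    linarith

end HB

namespace HB

open Finset

variable {s n : ℕ}

theorem exists_primitive_part (F : MvPolynomial (Fin s) ℤ) (hF : F ≠ 0) :
    ∃ (c : ℤ) (G : MvPolynomial (Fin s) ℤ), c ≠ 0 ∧ F = MvPolynomial.C c * G ∧
      G.totalDegree ≤ F.totalDegree ∧
      ∀ p : ℕ, p.Prime → MvPolynomial.map (Int.castRingHom (ZMod p)) G ≠ 0 := by
  classical
  let c : ℤ := F.support.gcd (fun m => F.coeff m)
  have hc0 : c ≠ 0 := by
    intro h
    rw [Finset.gcd_eq_zero_iff] at h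
    obtain ⟨m, hm⟩ := MvPolynomial.exists_coeff_ne_zero hF
    exact hm (h m (MvPolynomial.mem_support_iff.2 hm))
  have hdvd : ∀ m, c ∣ F.coeff m := by
    intro m
    by_cases hm : m ∈ F.support
    · exact Finset.gcd_dvd hm
    · rw [MvPolynomial.notMem_support_iff.1 hm]; exact dvd_zero _
  obtain ⟨G, hG⟩ := (MvPolynomial.C_dvd_iff_dvd_coeff c F).2 hdvd
  have hco : ∀ m, F.coeff m = c * G.coeff m := by
    intro m; rw [hG, MvPolynomial.coeff_C_mul]
  refine ⟨c, G, hc0, hG, ?_, ?_⟩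
  · apply Finset.sup_mono
    intro m hm
    rw [MvPolynomial.mem_support_iff] at hm ⊢
    rw [hco]; exact mul_ne_zero hc0 hm
  · intro p hp h
    have h1 : ∀ m, (p : ℤ) ∣ G.coeff m := by
      intro m
      have := congrArg (MvPolynomial.coeff m) h
      rw [MvPolynomial.coeff_map, MvPolynomial.coeff_zero] at this
      exact (ZMod.intCast_zmod_eq_zero_iff_dvd _ _).1 this
    have h2 : c * p ∣ c := by
      apply Finset.dvd_gcd
      intro m _
      rw [hco]
      exact mul_dvd_mul_left c (h1 m)
    have h3 : (p : ℤ) ∣ 1 := by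
      rw [← mul_dvd_mul_iff_left hc0, mul_one]; exact h2
    have h4 := Int.natAbs_dvd_natAbs.2 h3
    simp at h4
    exact hp.one_lt.ne' h4

theorem zeros_mod_p (G : MvPolynomial (Fin (n + 1)) ℤ) {d : ℕ} (hd : G.totalDegree ≤ d) {p : ℕ}
    (hp : p.Prime) (h0 : MvPolynomial.map (Int.castRingHom (ZMod p)) G ≠ 0)
    (Z : Finset (Fin (n + 1) → ℤ))
    (hZ : ∀ v ∈ Z, (∀ i, 0 ≤ v i ∧ v i < p) ∧ (p : ℤ) ∣ MvPolynomial.eval v G) :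
    #Z ≤ d * p ^ n := by
  classical
  haveI := Fact.mk hp
  have hsz := MvPolynomial.schwartz_zippel_totalDegree h0 (univ : Finset (ZMod p))
  rw [Finset.card_univ, ZMod.card] at hsz
  set A := (Fintype.piFinset fun _ : Fin (n + 1) => (univ : Finset (ZMod p))).filter
    (fun f => MvPolynomial.eval f (MvPolynomial.map (Int.castRingHom (ZMod p)) G) = 0) with hA
  have hpp : (0 : ℚ≥0) < p := by exact_mod_cast hp.pos
  have hcA : #A ≤ d * p ^ n := by
    rw [div_le_div_iff₀ (by positivity) hpp, pow_succ, ← mul_assoc] at hsz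
    have h1 := le_of_mul_le_mul_right hsz hpp
    have h2 : #A ≤ (MvPolynomial.map (Int.castRingHom (ZMod p)) G).totalDegree * p ^ n := by
      exact_mod_cast h1
    refine h2.trans (Nat.mul_le_mul_right _ ?_)
    exact (Finset.sup_mono (MvPolynomial.support_map_subset _ _)).trans hd
  refine le_trans ?_ hcA
  apply Finset.card_le_card_of_injOn (fun v i => ((v i : ℤ) : ZMod p))
  · intro v hv
    rw [hA, Finset.mem_coe, Finset.mem_filter]
    refine ⟨by simp, ?_⟩
    have := (ZMod.intCast_zmod_eq_zero_iff_dvd (MvPolynomial.eval v G) p).2 (hZ v hv).2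
    rw [MvPolynomial.eval_map]
    have h := MvPolynomial.eval₂_comp_left (Int.castRingHom (ZMod p)) (RingHom.id ℤ) v G
    rw [MvPolynomial.eval₂_id] at h
    rw [eq_intCast, this] at h
    exact h.symm
  · intro v hv w hw hvw
    ext i
    have h1 := congrFun hvw i
    simp only at h1
    rw [ZMod.intCast_eq_intCast_iff] at h1
    obtain ⟨a, b⟩ := (hZ v hv).1 i
    obtain ⟨a', b'⟩ := (hZ w hw).1 i
    unfold Int.ModEq at h1
    rwa [Int.emod_eq_of_lt a b, Int.emod_eq_of_lt a' b'] at h1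

/-- primitive generator of a line -/
theorem exists_gen {W : Submodule ℚ (Fin s → ℚ)} (hW : Module.finrank ℚ W = 1) :
    ∃ x : Fin s → ℤ, toQ x ∈ W ∧ (∀ i, |x i| ≤ ht 1 W) ∧ ∃ i, |x i| = ht 1 W := by
  obtain ⟨b, hb⟩ := exists_ZB hW
  have hm : ∀ J, mnr b J = b 0 (J 0) := by intro J; simp [mnr]
  refine ⟨b 0, hb.2.1 0, ?_, ?_⟩
  · intro i
    have := abs_mnr_le_TT b (fun _ => i)
    rwa [hm, hb.ht_eq] at this
  · obtain ⟨J, hJ⟩ := exists_mnr_eq_TT hb.1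
    refine ⟨J 0, ?_⟩
    rw [hm, hb.ht_eq] at hJ
    rw [Int.abs_eq_natAbs, hJ]

theorem line_ht {W W' : Submodule ℚ (Fin s → ℚ)} (hW : Module.finrank ℚ W = 1)
    (hW' : Module.finrank ℚ W' = 1) (hne : W ≠ W') {x x' : Fin s → ℤ} (hx : toQ x ∈ W)
    (hx' : toQ x' ∈ W') (hx0 : x ≠ 0) (hx0' : x' ≠ 0) {A B : ℕ} (hA : ∀ i, |x i| ≤ A)
    (hB : ∀ i, |x' i| ≤ B) {N : ℕ} (hN : 1 ≤ N) (μ : ℤ) (hdvd : ∀ i, (N : ℤ) ∣ x' i - μ * x i) :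
    ht 2 (W ⊔ W') * N ≤ 2 * (A * B) := by
  choose y hy using hdvd
  have hspan : ∀ (W : Submodule ℚ (Fin s → ℚ)) (x : Fin s → ℤ), Module.finrank ℚ W = 1 → x ≠ 0 →
      toQ x ∈ W → Submodule.span ℚ {toQ x} = W := by
    intro W x hW hx0 hx
    apply Submodule.eq_of_le_of_finrank_eq
    · rw [Submodule.span_le]; simpa using hx
    · rw [hW]; apply finrank_span_singleton
      intro h; apply hx0; apply toQ_inj; rw [h]; ext i; simp [toQ]
  have hli : LinearIndependent ℚ (fun k => toQ ((![x, x'] : Fin 2 → Fin s → ℤ) k)) := by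
    have h1 : (fun k => toQ ((![x, x'] : Fin 2 → Fin s → ℤ) k)) = ![toQ x, toQ x'] := by
      ext k i; fin_cases k <;> rfl
    rw [h1, LinearIndependent.pair_iff' (by
      intro h; apply hx0; apply toQ_inj; rw [h]; ext i; simp [toQ])]
    intro a ha
    apply hne
    rw [← hspan W x hW hx0 hx, ← hspan W' x' hW' hx0' hx']
    symm
    apply Submodule.eq_of_le_of_finrank_eq
    · rw [Submodule.span_le, ← ha]
      simp only [Set.singleton_subset_iff, SetLike.mem_coe]
      exact Submodule.smul_mem _ _ (Submodule.mem_span_singleton_self _)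
    · rw [hspan W x hW hx0 hx, hspan W' x' hW' hx0' hx', hW, hW']
  have hTT := TT_of_linInd hli
  have hm : ∀ J, mnr ![x, x'] J = N * mnr ![x, y] J := by
    intro J
    unfold mnr
    rw [Matrix.det_fin_two, Matrix.det_fin_two]
    simp only [Matrix.of_apply, Matrix.cons_val_zero, Matrix.cons_val_one]
    have h0 : x' (J 0) = N * y (J 0) + μ * x (J 0) := by linarith [hy (J 0)]
    have h1 : x' (J 1) = N * y (J 1) + μ * x (J 1) := by linarith [hy (J 1)]
    rw [h0, h1]; ring
  obtain ⟨J0, hJ0⟩ := exists_mnr_eq_TT hTT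
  have hTT2 : TT ![x, y] ≠ 0 := by
    apply TT_ne_zero_of_mnr (J := J0)
    intro h
    rw [hm, h] at hJ0
    simp at hJ0
    exact hTT hJ0.symm
  have hNQ : (N : ℚ) ≠ 0 := by exact_mod_cast (by omega : N ≠ 0)
  have hmem : ∀ k, toQ ((![x, y] : Fin 2 → Fin s → ℤ) k) ∈ W ⊔ W' := by
    intro k
    fin_cases k
    · exact Submodule.mem_sup_left hx
    · have h2 : toQ y = (N : ℚ)⁻¹ • (toQ x' - (μ : ℚ) • toQ x) := by
        ext i
        simp only [toQ, Pi.smul_apply, Pi.sub_apply, smul_eq_mul]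
        have := hy i
        have h3 : ((x' i : ℚ) - μ * x i) = N * y i := by exact_mod_cast this
        rw [h3]; field_simp
      change toQ y ∈ _
      rw [h2]
      exact Submodule.smul_mem _ _ (Submodule.sub_mem _ (Submodule.mem_sup_right hx')
        (Submodule.smul_mem _ _ (Submodule.mem_sup_left hx)))
  have h3 := ht_le hmem hTT2
  obtain ⟨J, hJ⟩ := exists_mnr_eq_TT hTT2
  have h4 : |mnr ![x, x'] J| ≤ 2 * (A * B) := by
    unfold mnr
    rw [Matrix.det_fin_two]
    simp only [Matrix.of_apply, Matrix.cons_val_zero, Matrix.cons_val_one]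
    refine (abs_sub _ _).trans ?_
    rw [abs_mul, abs_mul]
    have e1 : |x (J 0)| * |x' (J 1)| ≤ A * B := mul_le_mul (hA _) (hB _) (abs_nonneg _) (by positivity)
    have e2 : |x (J 1)| * |x' (J 0)| ≤ A * B := mul_le_mul (hA _) (hB _) (abs_nonneg _) (by positivity)
    linarith
  rw [hm, abs_mul, Int.abs_eq_natAbs (mnr _ _), hJ] at h4
  have h5 : N * TT ![x, y] ≤ 2 * (A * B) := by
    rw [abs_of_nonneg (by positivity)] at h4
    exact_mod_cast h4
  calc ht 2 (W ⊔ W') * N ≤ TT ![x, y] * N := Nat.mul_le_mul_right _ h3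
    _ ≤ _ := by rw [mul_comm]; exact h5

end HB

namespace HB

open Finset

variable {s n : ℕ}

theorem cast_eval_zmod (p : ℕ) (v : Fin s → ℤ) (G : MvPolynomial (Fin s) ℤ) :
    ((MvPolynomial.eval v G : ℤ) : ZMod p) =
      MvPolynomial.eval₂ (Int.castRingHom (ZMod p)) (fun i => ((v i : ℤ) : ZMod p)) G := by
  have h := MvPolynomial.eval₂_comp_left (Int.castRingHom (ZMod p)) (RingHom.id ℤ) v G
  rw [MvPolynomial.eval₂_id] at h
  rw [eq_intCast] at h
  exact h

theorem cast_eval_rat (v : Fin s → ℤ) (G : MvPolynomial (Fin s) ℤ) :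
    ((MvPolynomial.eval v G : ℤ) : ℚ) = MvPolynomial.aeval (toQ v) G := by
  have h := MvPolynomial.eval₂_comp_left (Int.castRingHom ℚ) (RingHom.id ℤ) v G
  rw [MvPolynomial.eval₂_id] at h
  rw [eq_intCast] at h
  exact h

/-- the incidence set of a point -/
def TP (P : ℕ) (x : Fin s → ℤ) : Finset (Σ _ : ℕ, Fin s → ℤ) :=
  (QP P).sigma (fun p => (Ico 1 p).image (fun l : ℕ => fun i => ((l : ℤ) * x i) % (p : ℤ)))

theorem mem_TP {P : ℕ} {x : Fin s → ℤ} {t : Σ _ : ℕ, Fin s → ℤ} :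
    t ∈ TP P x ↔ t.1 ∈ QP P ∧ ∃ l : ℕ, 1 ≤ l ∧ l < t.1 ∧
      (fun i => ((l : ℤ) * x i) % (t.1 : ℤ)) = t.2 := by
  unfold TP
  rw [Finset.mem_sigma, Finset.mem_image]
  simp only [Finset.mem_Ico, and_assoc]

theorem mem_QP {P p : ℕ} : p ∈ QP P ↔ P ≤ p ∧ p ≤ 4 * P ∧ p.Prime := by
  rw [QP, Finset.mem_filter, Finset.mem_Icc, and_assoc]

theorem card_TP {P m : ℕ} (hP : m < P) {x : Fin s → ℤ} (hx : ∀ i, |x i| ≤ m) (hx0 : x ≠ 0) :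
    #(TP P x) = ∑ p ∈ QP P, (p - 1) := by
  unfold TP
  rw [Finset.card_sigma]
  apply Finset.sum_congr rfl
  intro p hp
  obtain ⟨h1, h2, h3⟩ := mem_QP.1 hp
  rw [Finset.card_image_of_injOn, Nat.card_Ico]
  intro l hl l' hl' h
  simp only [Finset.coe_Ico, Set.mem_Ico] at hl hl'
  obtain ⟨i, hi⟩ := Function.ne_iff.1 hx0
  have h4 := congrFun h i
  simp only at h4
  have h5 : (p : ℤ) ∣ l' * x i - l * x i := Int.ModEq.dvd h4
  rw [← sub_mul] at h5
  rcases (Nat.prime_iff_prime_int.1 h3).dvd_or_dvd h5 with h6 | h6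
  · have := Int.eq_zero_of_abs_lt_dvd h6 (by rw [abs_lt]; omega)
    omega
  · exact absurd (Int.eq_zero_of_abs_lt_dvd h6 (by have := hx i; omega)) hi

theorem TP_collision {P : ℕ} {x x' : Fin s → ℤ} {t : Σ _ : ℕ, Fin s → ℤ} (h : t ∈ TP P x)
    (h' : t ∈ TP P x') : ∃ μ : ℤ, ∀ i, (t.1 : ℤ) ∣ x' i - μ * x i := by
  obtain ⟨hp, l, h1, h2, h3⟩ := mem_TP.1 h
  obtain ⟨-, l', h1', h2', h3'⟩ := mem_TP.1 h'
  obtain ⟨-, -, hp⟩ := mem_QP.1 hp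
  have hc : IsCoprime (l' : ℤ) (t.1 : ℤ) := by
    rw [Nat.isCoprime_iff_coprime]
    exact (Nat.coprime_of_lt_prime (by omega) h2' hp).symm
  obtain ⟨a, b, hab⟩ := hc
  refine ⟨a * l, fun i => ?_⟩
  have h4 : (t.1 : ℤ) ∣ l' * x' i - l * x i := by
    apply Int.ModEq.dvd
    exact congrFun (h3.trans h3'.symm) i
  obtain ⟨c, hc⟩ := h4
  refine ⟨b * x' i + a * c, ?_⟩
  linear_combination (-x' i) * hab + a * hc

theorem points_count (F : MvPolynomial (Fin (n + 1)) ℤ) (hF : F ≠ 0) {d : ℕ}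
    (hd : F.totalDegree ≤ d) {K m E : ℕ} (hK : 2 ≤ K) (hm : 1 ≤ m)
    (V : Finset (Submodule ℚ (Fin (n + 1) → ℚ)))
    (hV : ∀ W ∈ V, Module.finrank ℚ W = 1 ∧ XO F W ∧ ht 1 W ≤ m ∧ m ≤ 2 * ht 1 W ∧
      ∀ S' : Submodule ℚ (Fin (n + 1) → ℚ), W ≤ S' → Module.finrank ℚ S' = 2 →
        ht 2 S' * K ≤ 2 * m → ¬ XO F S')
    (hE : 8 * d * 9 ^ (n + 1) * m ≤ E * #(QP (K * m))) :
    #V * (K * m) ≤ 2 * (1 + E) * d * (4 * (K * m)) ^ n := by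
  classical
  obtain ⟨c, G, hc0, hFG, hGd, hGp⟩ := exists_primitive_part F hF
  set P := K * m with hP
  have hP2m : 2 * m ≤ P := Nat.mul_le_mul_right _ hK
  choose! x hx1 hx2 hx3 using fun W (hW : W ∈ V) => exists_gen (hV W hW).1
  have hxm : ∀ W ∈ V, ∀ i, |x W i| ≤ m := by
    intro W hW i
    exact (hx2 W hW i).trans (by exact_mod_cast (hV W hW).2.2.1)
  have hx0 : ∀ W ∈ V, x W ≠ 0 := by
    intro W hW h
    obtain ⟨i, hi⟩ := hx3 W hW
    rw [h] at hi
    have := ht_pos (hV W hW).1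
    simp at hi
    omega
  have hG0 : ∀ W ∈ V, ∀ l : ℕ, MvPolynomial.eval (fun i => (l : ℤ) * x W i) G = 0 := by
    intro W hW l
    have h1 : toQ (fun i => (l : ℤ) * x W i) ∈ W := by
      have : toQ (fun i => (l : ℤ) * x W i) = (l : ℚ) • toQ (x W) := by
        ext i; simp [toQ]
      rw [this]; exact Submodule.smul_mem _ _ (hx1 W hW)
    have h2 := (hV W hW).2.1 _ h1
    rw [← cast_eval_rat, hFG] at h2
    have h3 : MvPolynomial.eval (fun i => (l : ℤ) * x W i) (MvPolynomial.C c * G) = 0 := by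
      exact_mod_cast h2
    rw [map_mul, MvPolynomial.eval_C] at h3
    exact (mul_eq_zero.1 h3).resolve_left hc0
  have hcard : ∀ W ∈ V, P * #(QP P) ≤ 2 * #(TP P (x W)) := by
    intro W hW
    rw [card_TP (m := m) (by omega) (hxm W hW) (hx0 W hW), Finset.mul_sum, mul_comm, ← smul_eq_mul]
    apply Finset.card_nsmul_le_sum
    intro p hp
    have := (mem_QP.1 hp).1
    omega
  have hU : #(V.biUnion (fun W => TP P (x W))) ≤ #(QP P) * (d * (4 * P) ^ n) := by
    let Z : ℕ → Finset (Fin (n + 1) → ℤ) := fun p =>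
      (Fintype.piFinset (fun _ : Fin (n + 1) => Ico (0 : ℤ) p)).filter
        (fun v => (p : ℤ) ∣ MvPolynomial.eval v G)
    have h1 : V.biUnion (fun W => TP P (x W)) ⊆ (QP P).sigma Z := by
      intro t ht
      obtain ⟨W, hW, ht⟩ := Finset.mem_biUnion.1 ht
      obtain ⟨hp, l, h1, h2, h3⟩ := mem_TP.1 ht
      have hpp := (mem_QP.1 hp).2.2.pos
      rw [Finset.mem_sigma]
      refine ⟨hp, ?_⟩
      simp only [Z]
      rw [Finset.mem_filter, Fintype.mem_piFinset]
      refine ⟨fun i => ?_, ?_⟩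
      · rw [Finset.mem_Ico, ← h3]
        exact ⟨Int.emod_nonneg _ (by omega), Int.emod_lt_of_pos _ (by omega)⟩
      · rw [← ZMod.intCast_zmod_eq_zero_iff_dvd, cast_eval_zmod, ← h3]
        have h4 : ∀ i, ((((l : ℤ) * x W i) % (t.1 : ℤ) : ℤ) : ZMod t.1) =
            (((l : ℤ) * x W i : ℤ) : ZMod t.1) := by
          intro i; exact ZMod.intCast_mod _ _
        simp only [h4]
        rw [← cast_eval_zmod, hG0 W hW, Int.cast_zero]
    refine (Finset.card_le_card h1).trans ?_
    rw [Finset.card_sigma]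
    rw [← smul_eq_mul (a := #(QP P))]
    apply Finset.sum_le_card_nsmul
    intro p hp
    obtain ⟨h2, h3, h4⟩ := mem_QP.1 hp
    refine (zeros_mod_p G (hGd.trans hd) h4 (hGp p h4) (Z p) ?_).trans
      (Nat.mul_le_mul_left _ (Nat.pow_le_pow_left h3 n))
    intro v hv
    simp only [Z] at hv
    rw [Finset.mem_filter, Fintype.mem_piFinset] at hv
    exact ⟨fun i => Finset.mem_Ico.1 (hv.1 i), hv.2⟩
  have hpair : ∀ W ∈ V, ∀ W' ∈ V, W ≠ W' → #(TP P (x W) ∩ TP P (x W')) ≤ 4 * P := by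
    intro W hW W' hW' hne
    by_cases hemp : TP P (x W) ∩ TP P (x W') = ∅
    · rw [hemp]; simp
    obtain ⟨t, htt⟩ := Finset.nonempty_iff_ne_empty.2 hemp
    obtain ⟨ht1, ht2⟩ := Finset.mem_inter.1 htt
    obtain ⟨hp1, hp2, hp3⟩ := mem_QP.1 (mem_TP.1 ht1).1
    have hsame : ∀ t' ∈ TP P (x W) ∩ TP P (x W'), t'.1 = t.1 := by
      intro t' ht'
      by_contra hpne
      obtain ⟨ht1', ht2'⟩ := Finset.mem_inter.1 ht'
      obtain ⟨hp1', hp2', hp3'⟩ := mem_QP.1 (mem_TP.1 ht1').1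
      obtain ⟨μ, hμ⟩ := TP_collision ht1 ht2
      obtain ⟨μ', hμ'⟩ := TP_collision ht1' ht2'
      have hco : IsCoprime (t.1 : ℤ) (t'.1 : ℤ) := by
        rw [Nat.isCoprime_iff_coprime]
        exact (Nat.coprime_primes hp3 hp3').2 (Ne.symm hpne)
      obtain ⟨a, b, hab⟩ := id hco
      have hdv : ∀ i, ((t.1 * t'.1 : ℕ) : ℤ) ∣
          x W' i - (μ * (b * t'.1) + μ' * (a * t.1)) * x W i := by
        intro i
        rw [Nat.cast_mul]
        apply IsCoprime.mul_dvd hco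
        · obtain ⟨e, he⟩ := hμ i
          refine ⟨e + (μ - μ') * a * x W i, ?_⟩
          linear_combination he - μ * x W i * hab
        · obtain ⟨e, he⟩ := hμ' i
          refine ⟨e + (μ' - μ) * b * x W i, ?_⟩
          linear_combination he - μ' * x W i * hab
      have h1 := line_ht (hV W hW).1 (hV W' hW').1 hne (hx1 W hW) (hx1 W' hW') (hx0 W hW)
        (hx0 W' hW') (hxm W hW) (hxm W' hW') (Nat.mul_pos hp3.pos hp3'.pos) _ hdv
      have h2 := (finrank_sup (q := 0) (Θ := ⊥) (hV W hW).1 (hV W' hW').1 (finrank_bot _ _)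
        bot_le bot_le hne).1
      have h3 := ht_pos h2
      have h4 : (2 * m) * (2 * m) ≤ t.1 * t'.1 :=
        Nat.mul_le_mul (hP2m.trans hp1) (hP2m.trans hp1')
      have h5 : 1 * (t.1 * t'.1) ≤ ht 2 (W ⊔ W') * (t.1 * t'.1) := Nat.mul_le_mul_right _ h3
      nlinarith
    have hsub : TP P (x W) ∩ TP P (x W') ⊆ ({t.1} : Finset ℕ).sigma
        (fun p => (Ico 1 p).image (fun l : ℕ => fun i => ((l : ℤ) * x W i) % (p : ℤ))) := by
      intro t' ht'
      have h1 := hsame t' ht'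
      rw [Finset.mem_sigma]
      refine ⟨by simp [h1], ?_⟩
      have h2 := (Finset.mem_inter.1 ht').1
      unfold TP at h2
      exact (Finset.mem_sigma.1 h2).2
    refine (Finset.card_le_card hsub).trans ?_
    rw [Finset.card_sigma, Finset.sum_singleton]
    refine Finset.card_image_le.trans ?_
    rw [Nat.card_Ico]; omega
  have hinc := incidence V (fun W => TP P (x W)) E (by
    intro W hW
    let V' := (V.erase W).filter (fun W' => (TP P (x W) ∩ TP P (x W')).Nonempty)
    have hV' : #V' ≤ d * (ht 1 W * 9 ^ (n + 1)) := by
      apply few_neighbours F hd (q := 0) (hV W hW).1 4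
      intro W' hW'
      obtain ⟨h1, t, h2⟩ := Finset.mem_filter.1 hW'
      obtain ⟨hne, hW'V⟩ := Finset.mem_erase.1 h1
      obtain ⟨ht1, ht2⟩ := Finset.mem_inter.1 h2
      obtain ⟨hp1, hp2, hp3⟩ := mem_QP.1 (mem_TP.1 ht1).1
      obtain ⟨μ, hμ⟩ := TP_collision ht1 ht2
      have h3 := line_ht (hV W hW).1 (hV W' hW'V).1 hne.symm (hx1 W hW) (hx1 W' hW'V) (hx0 W hW)
        (hx0 W' hW'V) (hxm W hW) (hxm W' hW'V) hp3.pos _ hμ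
      have h4 := (finrank_sup (q := 0) (Θ := ⊥) (hV W hW).1 (hV W' hW'V).1 (finrank_bot _ _)
        bot_le bot_le hne.symm).1
      have h5 : ht 2 (W ⊔ W') * K ≤ 2 * m := by
        have h6 : ht 2 (W ⊔ W') * P ≤ ht 2 (W ⊔ W') * t.1 := Nat.mul_le_mul_left _ hp1
        have h7 : (ht 2 (W ⊔ W') * K) * m ≤ (2 * m) * m := by
          rw [hP] at h6; nlinarith
        exact Nat.le_of_mul_le_mul_right h7 hm
      refine ⟨(hV W' hW'V).1, (hV W' hW'V).2.1, h4, ?_, ?_⟩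
      · have h6 : ht 2 (W ⊔ W') * 2 ≤ ht 2 (W ⊔ W') * K := Nat.mul_le_mul_left _ hK
        have h7 := (hV W hW).2.2.2.1
        simp only [Nat.zero_add]
        omega
      · exact (hV W hW).2.2.2.2 _ le_sup_left h4 h5
    have h1 : ∑ W' ∈ V.erase W, #(TP P (x W) ∩ TP P (x W')) ≤ #V' * (4 * P) := by
      have h2 : ∑ W' ∈ V.erase W, #(TP P (x W) ∩ TP P (x W')) =
          ∑ W' ∈ V', #(TP P (x W) ∩ TP P (x W')) := by
        symm
        apply Finset.sum_filter_of_ne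
        intro W' _ h
        exact Finset.card_pos.1 (Nat.pos_of_ne_zero h)
      rw [h2, ← smul_eq_mul (a := #V')]
      apply Finset.sum_le_card_nsmul
      intro W' hW'
      obtain ⟨hne, hW'V⟩ := Finset.mem_erase.1 (Finset.mem_filter.1 hW').1
      exact hpair W hW W' hW'V hne.symm
    have h2 := hcard W hW
    have h3 : #V' ≤ d * (m * 9 ^ (n + 1)) := hV'.trans
      (Nat.mul_le_mul_left _ (Nat.mul_le_mul_right _ (hV W hW).2.2.1))
    have h4 : #V' * (4 * P) ≤ d * (m * 9 ^ (n + 1)) * (4 * P) := Nat.mul_le_mul_right _ h3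
    have h5 := Nat.mul_le_mul_right P hE
    have h6 := Nat.mul_le_mul_left E h2
    have h7 : 2 * (d * (m * 9 ^ (n + 1)) * (4 * P)) = 8 * d * 9 ^ (n + 1) * m * P := by ring
    have h8 : E * #(QP P) * P = E * (P * #(QP P)) := by ring
    have h9 : E * (2 * #(TP P (x W))) = 2 * (E * #(TP P (x W))) := by ring
    show _ ≤ E * #(TP P (x W))
    omega)
  have h1 : #V * (P * #(QP P)) ≤ ∑ W ∈ V, 2 * #(TP P (x W)) := by
    rw [← smul_eq_mul (a := #V)]
    exact Finset.card_nsmul_le_sum _ _ _ hcard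
  rw [← Finset.mul_sum] at h1
  have h2 := Nat.mul_le_mul_left (1 + E) hU
  have hQ := QP_pos P (by omega)
  have h3 : #V * P * #(QP P) ≤ 2 * (1 + E) * d * (4 * P) ^ n * #(QP P) := by
    calc #V * P * #(QP P) = #V * (P * #(QP P)) := by ring
      _ ≤ 2 * ((1 + E) * (#(QP P) * (d * (4 * P) ^ n))) := by
        refine h1.trans (Nat.mul_le_mul_left 2 (hinc.trans h2))
      _ = _ := by ring
  exact Nat.le_of_mul_le_mul_right h3 hQ

end HB

namespace HB

open Finset

variable {s n : ℕ}

theorem dyadic {α : Type*} (S : Finset α) (h : α → ℝ) (h1 : ∀ i ∈ S, 1 ≤ h i) {C r a D0 : ℝ}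
    (ha : 0 < a) (hr : 0 ≤ r) (hC : 0 ≤ C)
    (hcount : ∀ D, 0 < D → D ≤ D0 → (#(S.filter (fun i => h i ≤ D)) : ℝ) ≤ C * D ^ (r + a)) :
    ∀ D, 0 < D → D ≤ D0 →
      ∑ i ∈ S.filter (fun i => h i ≤ D), (h i) ^ (-r) ≤ C * 2 ^ r / (1 - 2 ^ (-a)) * D ^ a := by
  classical
  have h2a : (2 : ℝ) ^ (-a) < 1 := Real.rpow_lt_one_of_one_lt_of_neg (by norm_num) (by linarith)
  set C' := C * 2 ^ r / (1 - 2 ^ (-a)) with hC'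
  have hC'0 : 0 ≤ C' := div_nonneg (by positivity) (by linarith)
  have hrec : C' * 2 ^ (-a) + C * 2 ^ r = C' := by
    have : C' * (1 - 2 ^ (-a)) = C * 2 ^ r := by
      rw [hC']; field_simp [(by linarith : (1 : ℝ) - 2 ^ (-a) ≠ 0)]
    linarith
  have key : ∀ k : ℕ, ∀ D, 0 < D → D ≤ D0 → D < 2 ^ k →
      ∑ i ∈ S.filter (fun i => h i ≤ D), (h i) ^ (-r) ≤ C' * D ^ a := by
    intro k
    induction k with
    | zero =>
      intro D hD hD0 hDk
      rw [Finset.filter_false_of_mem]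
      · rw [Finset.sum_empty]; positivity
      · intro i hi hle
        have := h1 i hi
        simp at hDk
        linarith
    | succ k ih =>
      intro D hD hD0 hDk
      have e1 := ih (D / 2) (by positivity) (by linarith) (by rw [pow_succ] at hDk; linarith)
      have e2 : S.filter (fun i => h i ≤ D) = S.filter (fun i => h i ≤ D / 2) ∪
          (S.filter (fun i => h i ≤ D)).filter (fun i => D / 2 < h i) := by
        ext i
        simp only [Finset.mem_union, Finset.mem_filter]
        constructor
        · rintro ⟨a1, a2⟩
          rcases le_or_gt (h i) (D / 2) with a3 | a3
          · exact Or.inl ⟨a1, a3⟩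
          · exact Or.inr ⟨⟨a1, a2⟩, a3⟩
        · rintro (⟨a1, a2⟩ | ⟨a1, a2⟩)
          · exact ⟨a1, by linarith⟩
          · exact a1
      have e3 : ∑ i ∈ (S.filter (fun i => h i ≤ D)).filter (fun i => D / 2 < h i), (h i) ^ (-r) ≤
          C * 2 ^ r * D ^ a := by
        have f1 : ∑ i ∈ (S.filter (fun i => h i ≤ D)).filter (fun i => D / 2 < h i), (h i) ^ (-r) ≤
            #((S.filter (fun i => h i ≤ D)).filter (fun i => D / 2 < h i)) • (D / 2) ^ (-r) := by
          apply Finset.sum_le_card_nsmul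
          intro i hi
          exact Real.rpow_le_rpow_of_nonpos (by positivity) (Finset.mem_filter.1 hi).2.le
            (by linarith)
        have f2 : (#((S.filter (fun i => h i ≤ D)).filter (fun i => D / 2 < h i)) : ℝ) ≤
            C * D ^ (r + a) := by
          refine le_trans ?_ (hcount D hD hD0)
          exact_mod_cast Finset.card_le_card (Finset.filter_subset _ _)
        rw [nsmul_eq_mul] at f1
        refine f1.trans ((mul_le_mul_of_nonneg_right f2 (by positivity)).trans (le_of_eq ?_))
        rw [Real.div_rpow hD.le (by norm_num), Real.rpow_add hD, Real.rpow_neg hD.le,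
          Real.rpow_neg (by norm_num : (0 : ℝ) ≤ 2)]
        have : D ^ r ≠ 0 := by positivity
        have : (2 : ℝ) ^ r ≠ 0 := by positivity
        field_simp
      rw [e2]
      have e4 : ∑ i ∈ S.filter (fun i => h i ≤ D / 2) ∪
          (S.filter (fun i => h i ≤ D)).filter (fun i => D / 2 < h i), (h i) ^ (-r) =
          ∑ i ∈ S.filter (fun i => h i ≤ D / 2), (h i) ^ (-r) +
          ∑ i ∈ (S.filter (fun i => h i ≤ D)).filter (fun i => D / 2 < h i), (h i) ^ (-r) := by
        apply Finset.sum_union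
        rw [Finset.disjoint_left]
        intro i hi hi'
        have := (Finset.mem_filter.1 hi).2
        have := (Finset.mem_filter.1 hi').2
        linarith
      rw [e4]
      have e5 : (D / 2) ^ a = 2 ^ (-a) * D ^ a := by
        rw [Real.div_rpow hD.le (by norm_num), Real.rpow_neg (by norm_num : (0 : ℝ) ≤ 2)]
        field_simp
      rw [e5] at e1
      calc _ ≤ C' * (2 ^ (-a) * D ^ a) + C * 2 ^ r * D ^ a := add_le_add e1 e3
        _ = (C' * 2 ^ (-a) + C * 2 ^ r) * D ^ a := by ring
        _ = _ := by rw [hrec]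
  intro D hD hD0
  obtain ⟨k, hk⟩ := pow_unbounded_of_one_lt D (by norm_num : (1 : ℝ) < 2)
  exact key k D hD hD0 hk

/-- bounds for the number of `X`-subspaces of rank `r` up to height `Δ` -/
def BdUp (F : MvPolynomial (Fin s) ℤ) (r : ℕ) (e M Δ : ℝ) : Prop :=
  ∀ D, 0 < D → D ≤ Δ → ∀ U : Finset (Submodule ℚ (Fin s → ℚ)),
    (∀ W ∈ U, Module.finrank ℚ W = r ∧ XO F W ∧ (ht r W : ℝ) ≤ D) → (#U : ℝ) ≤ M * D ^ e

/-- the constant in the exceptional set bound -/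
def excC (r : ℕ) (a : ℝ) : ℝ :=
  4 ^ (r + 1) * (2 ^ (r : ℝ) / (1 - 2 ^ (-a))) * ((r + 1) * r : ℝ) ^ a

theorem excC_nonneg (r : ℕ) {a : ℝ} (ha : 0 < a) : 0 ≤ excC r a := by
  have h2a : (2 : ℝ) ^ (-a) < 1 := Real.rpow_lt_one_of_one_lt_of_neg (by norm_num) (by linarith)
  unfold excC
  have : 0 ≤ 2 ^ (r : ℝ) / (1 - (2 : ℝ) ^ (-a)) := div_nonneg (by positivity) (by linarith)
  positivity

theorem exceptional (F : MvPolynomial (Fin s) ℤ) {r : ℕ} (hr : 1 ≤ r) {a M D D0 : ℝ} (ha : 0 < a)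
    (hM : 0 ≤ M) {m K : ℕ} (hm : 1 ≤ m) (hmD : (m : ℝ) ≤ D) (hK : (r + 1) * r ≤ K)
    (hKD : ((r + 1) * r : ℝ) * D / K ≤ D0) (hb : BdUp F (r + 1) (r + a) M D0)
    (V : Finset (Submodule ℚ (Fin s → ℚ)))
    (hV : ∀ W ∈ V, Module.finrank ℚ W = r ∧ ht r W ≤ m ∧
      ∃ S' : Submodule ℚ (Fin s → ℚ), W ≤ S' ∧ Module.finrank ℚ S' = r + 1 ∧
        ht (r + 1) S' * K ≤ (r + 1) * r * m ∧ XO F S') :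
    (#V : ℝ) ≤ excC r a * M * (K : ℝ) ^ (-a) * D ^ (r + 1 + a) := by
  classical
  choose! S hS1 hS2 hS3 hS4 using fun W hW => (hV W hW).2.2
  have hD0 : 0 < D := lt_of_lt_of_le (by exact_mod_cast hm) hmD
  have hrr : 0 < (r + 1) * r := by positivity
  have hKpos : 0 < K := by omega
  have hKR : (0 : ℝ) < K := by exact_mod_cast hKpos
  set D1 : ℝ := ((r + 1) * r : ℝ) * D / K with hD1
  have hrrR : (0 : ℝ) < (r + 1) * r := by exact_mod_cast hrr
  have hD1pos : 0 < D1 := by positivity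
  let I := V.image S
  have hI : ∀ T ∈ I, Module.finrank ℚ T = r + 1 ∧ XO F T ∧ ht (r + 1) T * K ≤ (r + 1) * r * m := by
    intro T hT
    obtain ⟨W, hW, rfl⟩ := Finset.mem_image.1 hT
    exact ⟨hS2 W hW, hS4 W hW, hS3 W hW⟩
  have hI1 : ∀ T ∈ I, (1 : ℝ) ≤ ht (r + 1) T := by
    intro T hT
    exact_mod_cast ht_pos (hI T hT).1
  have hId : ∀ T ∈ I, (ht (r + 1) T : ℝ) ≤ D1 := by
    intro T hT
    rw [hD1, le_div_iff₀ hKR]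
    have := (hI T hT).2.2
    have h2 : (ht (r + 1) T : ℝ) * K ≤ ((r + 1) * r : ℝ) * m := by exact_mod_cast this
    exact h2.trans (mul_le_mul_of_nonneg_left hmD hrrR.le)
  have hdy := dyadic I (fun T => (ht (r + 1) T : ℝ)) hI1 (r := (r : ℝ)) (a := a) (C := M) (D0 := D1)
    ha (by positivity) hM (by
      intro D' hD' hD'1
      apply hb D' hD' (hD'1.trans hKD)
      intro W hW
      obtain ⟨h1, h2⟩ := Finset.mem_filter.1 hW
      exact ⟨(hI W h1).1, (hI W h1).2.1, h2⟩) D1 hD1pos le_rfl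
  rw [Finset.filter_true_of_mem hId] at hdy
  have hfib : ∀ T ∈ I, (#(V.filter (fun W => S W = T)) : ℝ) ≤
      4 ^ (r + 1) * D ^ (r + 1) * (ht (r + 1) T : ℝ) ^ (-(r : ℝ)) := by
    intro T hT
    have h1 := upper_count (hI T hT).1 m (V.filter (fun W => S W = T)) (by
      intro W hW
      obtain ⟨h1, h2⟩ := Finset.mem_filter.1 hW
      exact ⟨h2 ▸ hS1 W h1, (hV W h1).1, (hV W h1).2.1⟩)
    set h := ht (r + 1) T with hh
    have hpos : 1 ≤ h := ht_pos (hI T hT).1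
    have hhm : h ≤ m := by
      have h2 := (hI T hT).2.2
      have h3 : (r + 1) * r * m ≤ K * m := Nat.mul_le_mul_right _ hK
      have h4 : h * K ≤ m * K := by rw [mul_comm m K]; exact h2.trans h3
      exact Nat.le_of_mul_le_mul_right h4 hKpos
    have hhR : (0 : ℝ) < h := by exact_mod_cast hpos
    have h5 : ((2 * (m / h + 1) : ℕ) : ℝ) ≤ 4 * D / h := by
      have h6 : ((m / h : ℕ) : ℝ) ≤ m / h := Nat.cast_div_le
      have h7 : (1 : ℝ) ≤ m / h := by
        rw [le_div_iff₀ hhR, one_mul]; exact_mod_cast hhm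
      have h8 : (m : ℝ) / h ≤ D / h := div_le_div_of_nonneg_right hmD hhR.le
      push_cast
      have h9 : 4 * D / h = 4 * (D / h) := by ring
      rw [h9]
      linarith
    calc (#(V.filter (fun W => S W = T)) : ℝ) ≤ ((h * (2 * (m / h + 1)) ^ (r + 1) : ℕ) : ℝ) := by
          exact_mod_cast h1
      _ = h * ((2 * (m / h + 1) : ℕ) : ℝ) ^ (r + 1) := by push_cast; ring
      _ ≤ h * (4 * D / h) ^ (r + 1) := by gcongr
      _ = 4 ^ (r + 1) * D ^ (r + 1) * (h : ℝ) ^ (-(r : ℝ)) := by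
        rw [Real.rpow_neg hhR.le, Real.rpow_natCast, div_pow, mul_pow, pow_succ (h : ℝ) r]
        field_simp
  have hsum : (#V : ℝ) = ∑ T ∈ I, (#(V.filter (fun W => S W = T)) : ℝ) := by
    rw [← Nat.cast_sum]
    congr 1
    exact Finset.card_eq_sum_card_image S V
  rw [hsum]
  refine (Finset.sum_le_sum hfib).trans ?_
  rw [← Finset.mul_sum]
  refine (mul_le_mul_of_nonneg_left hdy (by positivity)).trans (le_of_eq ?_)
  unfold excC
  have e1 : D1 ^ a = ((r + 1) * r : ℝ) ^ a * D ^ a * (K : ℝ) ^ (-a) := by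
    rw [hD1, Real.div_rpow (by positivity) hKR.le, Real.mul_rpow hrrR.le hD0.le,
      Real.rpow_neg hKR.le]
    rfl
  have e2 : D ^ ((r : ℝ) + 1 + a) = D ^ (r + 1) * D ^ a := by
    rw [Real.rpow_add hD0]
    congr 1
    exact_mod_cast Real.rpow_natCast D (r + 1)
  rw [e1, e2]
  ring

end HB

namespace HB

open Finset

variable {s n : ℕ}

/-- generic sets of subspaces -/
def Gen (F : MvPolynomial (Fin s) ℤ) (r K m : ℕ) (V : Finset (Submodule ℚ (Fin s → ℚ))) : Prop :=
  ∀ W ∈ V, Module.finrank ℚ W = r ∧ XO F W ∧ ht r W ≤ m ∧ m ≤ 2 * ht r W ∧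
    ∀ S' : Submodule ℚ (Fin s → ℚ), W ≤ S' → Module.finrank ℚ S' = r + 1 →
      ht (r + 1) S' * K ≤ (r + 1) * r * m → ¬ XO F S'

/-- the class of forms considered -/
structure Good (n d : ℕ) (F : MvPolynomial (Fin (n + 1)) ℤ) : Prop where
  ne : F ≠ 0
  deg : F.totalDegree ≤ d
  rk : ∀ (r : ℕ) (W : Submodule ℚ (Fin (n + 1) → ℚ)), Module.finrank ℚ W = r → XO F W →
    2 * r ≤ n + 1

theorem scale_step {d : ℕ} {F : MvPolynomial (Fin (n + 1)) ℤ} (hF : Good n d F) {r : ℕ}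
    (hr : 1 ≤ r) (hrn : r + 1 ≤ n) {ε : ℝ} (hε : 0 < ε) {T Cn cn G Δ : ℝ} (hT : 0 < T)
    (hCn : 0 < Cn) (hcn : 1 ≤ cn) {K : ℕ} (hK1 : 2 * cn * ((r + 1) * r) ≤ K)
    (hK2 : excC r ((n : ℝ) - 2 * r - 1 + ε) * Cn * (K : ℝ) ^ (-ε) ≤ 1 / 4)
    (hG : G ≤ T / 4)
    (hgen : ∀ (D : ℝ) (m : ℕ), 1 ≤ m → (m : ℝ) ≤ D → D ≤ Δ → ∀ V, Gen F r K m V →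
      (#V : ℝ) ≤ G * D ^ ((n : ℝ) - r + ε))
    (hnext : ∀ D : ℝ, 0 < D → BdUp F r ((n : ℝ) - r + ε) T (cn * D) →
      BdUp F (r + 1) ((n : ℝ) - (r + 1) + ε) (Cn * T) D) :
    BdUp F r ((n : ℝ) - r + ε) T Δ := by
  classical
  set e : ℝ := (n : ℝ) - r + ε with he
  have he1 : 1 ≤ e := by
    have : (r : ℝ) + 1 ≤ n := by exact_mod_cast hrn
    rw [he]; linarith
  have key : ∀ k : ℕ, ∀ D, 0 < D → D ≤ Δ → D < 2 ^ k → ∀ U : Finset (Submodule ℚ (Fin (n + 1) → ℚ)),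
    (∀ W ∈ U, Module.finrank ℚ W = r ∧ XO F W ∧ (ht r W : ℝ) ≤ D) → (#U : ℝ) ≤ T * D ^ e := by
    intro k
    induction k with
    | zero =>
      intro D hD hD0 hDk U hU
      have : U = ∅ := by
        apply Finset.eq_empty_of_forall_notMem
        intro W hW
        obtain ⟨h1, -, h2⟩ := hU W hW
        have h3 : (1 : ℝ) ≤ ht r W := by exact_mod_cast ht_pos h1
        simp at hDk
        linarith
      rw [this]; simp; positivity
    | succ k ih =>
      intro D hD hD0 hDk U hU
      by_cases hDlt : D < 1
      · have : U = ∅ := by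
          apply Finset.eq_empty_of_forall_notMem
          intro W hW
          obtain ⟨h1, -, h2⟩ := hU W hW
          have h3 : (1 : ℝ) ≤ ht r W := by exact_mod_cast ht_pos h1
          linarith
        rw [this]; simp; positivity
      have hD1 : 1 ≤ D := not_lt.1 hDlt
      set m := ⌊D⌋₊ with hmdef
      have hm1 : 1 ≤ m := by rw [hmdef]; exact Nat.le_floor (by simpa using hD1)
      have hmD : (m : ℝ) ≤ D := Nat.floor_le hD.le
      have hhalf : BdUp F r e T (D / 2) := by
        intro D' hD' hD'2
        exact ih D' hD' (by linarith) (by rw [pow_succ] at hDk; linarith)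
      let ex : Submodule ℚ (Fin (n + 1) → ℚ) → Prop := fun W =>
        ∃ S' : Submodule ℚ (Fin (n + 1) → ℚ), W ≤ S' ∧ Module.finrank ℚ S' = r + 1 ∧
        ht (r + 1) S' * K ≤ (r + 1) * r * m ∧ XO F S'
      let U1 := U.filter (fun W => (ht r W : ℝ) ≤ D / 2)
      let U2 := U.filter (fun W => ¬ (ht r W : ℝ) ≤ D / 2)
      let U3 := U2.filter ex
      let U4 := U2.filter (fun W => ¬ ex W)
      have hc1 : #U1 + #U2 = #U := Finset.card_filter_add_card_filter_not _
      have hc2 : #U3 + #U4 = #U2 := Finset.card_filter_add_card_filter_not _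
      have hmem : ∀ W ∈ U, ht r W ≤ m := by
        intro W hW
        exact Nat.le_floor (hU W hW).2.2
      have b1 : (#U1 : ℝ) ≤ T * D ^ e / 2 := by
        have h1 := hhalf (D / 2) (by positivity) le_rfl U1 (by
          intro W hW
          obtain ⟨a1, a2⟩ := Finset.mem_filter.1 hW
          exact ⟨(hU W a1).1, (hU W a1).2.1, a2⟩)
        refine h1.trans ?_
        rw [mul_div_assoc]
        apply mul_le_mul_of_nonneg_left _ hT.le
        rw [Real.div_rpow hD.le (by norm_num)]
        apply div_le_div_of_nonneg_left (by positivity) (by norm_num)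
        calc (2 : ℝ) = 2 ^ (1 : ℝ) := by simp
          _ ≤ 2 ^ e := Real.rpow_le_rpow_of_exponent_le (by norm_num) he1
      have b4 : (#U4 : ℝ) ≤ T * D ^ e / 4 := by
        have h1 := hgen D m hm1 hmD hD0 U4 (by
          intro W hW
          obtain ⟨a1, a2⟩ := Finset.mem_filter.1 hW
          obtain ⟨a1, a3⟩ := Finset.mem_filter.1 a1
          refine ⟨(hU W a1).1, (hU W a1).2.1, hmem W a1, ?_, ?_⟩
          · have : (m : ℝ) ≤ 2 * ht r W := by
              push Not at a3
              linarith
            exact_mod_cast this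
          · intro S' b1 b2 b3 b4
            exact a2 ⟨S', b1, b2, b3, b4⟩)
        refine h1.trans ?_
        have : 0 < D ^ e := by positivity
        nlinarith
      have b3 : (#U3 : ℝ) ≤ T * D ^ e / 4 := by
        by_cases hrk : 2 * (r + 1) ≤ n + 1
        · set a : ℝ := (n : ℝ) - 2 * r - 1 + ε with ha
          have hεa : ε ≤ a := by
            have : 2 * ((r : ℝ) + 1) ≤ n + 1 := by exact_mod_cast hrk
            rw [ha]; linarith
          have hKpos : (0 : ℝ) < K := by
            have : (1 : ℝ) ≤ r := by exact_mod_cast hr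
            have : 0 < 2 * cn * (((r : ℝ) + 1) * r) := by positivity
            linarith
          have hK1' : (1 : ℝ) ≤ K := by
            have : 0 < K := by exact_mod_cast hKpos
            exact_mod_cast this
          have hn' := hnext (D / (2 * cn)) (by positivity) (by
            have : cn * (D / (2 * cn)) = D / 2 := by field_simp
            rw [this]; exact hhalf)
          have hea : (n : ℝ) - (r + 1) + ε = r + a := by rw [ha]; ring
          rw [hea] at hn'
          have h1 := exceptional F hr (a := a) (M := Cn * T) (D := D) (D0 := D / (2 * cn)) (K := K)
            (by linarith) (by positivity) hm1 hmD (by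
              have h2 : (((r + 1) * r : ℕ) : ℝ) ≤ K := by
                push_cast
                have : 0 ≤ ((r : ℝ) + 1) * r := by positivity
                nlinarith
              exact_mod_cast h2) (by
              rw [div_le_div_iff₀ hKpos (by positivity)]
              nlinarith) hn' U3 (by
              intro W hW
              obtain ⟨a1, a2⟩ := Finset.mem_filter.1 hW
              obtain ⟨a1, a3⟩ := Finset.mem_filter.1 a1
              exact ⟨(hU W a1).1, hmem W a1, a2⟩)
          have h2 : (r : ℝ) + 1 + a = e := by rw [ha, he]; ring
          rw [h2] at h1
          have h3 : (K : ℝ) ^ (-a) ≤ (K : ℝ) ^ (-ε) :=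
            Real.rpow_le_rpow_of_exponent_le hK1' (by linarith)
          have h4 := excC_nonneg r (a := a) (by linarith)
          calc (#U3 : ℝ) ≤ excC r a * (Cn * T) * (K : ℝ) ^ (-a) * D ^ e := h1
            _ ≤ excC r a * (Cn * T) * (K : ℝ) ^ (-ε) * D ^ e := by gcongr
            _ = (excC r a * Cn * (K : ℝ) ^ (-ε)) * (T * D ^ e) := by ring
            _ ≤ 1 / 4 * (T * D ^ e) := by gcongr
            _ = _ := by ring
        · have : U3 = ∅ := by
            apply Finset.eq_empty_of_forall_notMem
            intro W hW
            obtain ⟨a1, S', a2, a3, a4, a5⟩ := Finset.mem_filter.1 hW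
            exact hrk (hF.rk _ S' a3 a5)
          rw [this]; simp; positivity
      have : (#U : ℝ) = #U1 + (#U3 + #U4) := by
        rw [← hc1, ← hc2]; push_cast; ring
      rw [this]; linarith
  intro D hD hD0
  obtain ⟨k, hk⟩ := pow_unbounded_of_one_lt D (by norm_num : (1 : ℝ) < 2)
  exact key k D hD hD0 hk

/-- the inductive statement relating ranks `q` and `q+1` -/
def QQ (n d : ℕ) (ε : ℝ) (q : ℕ) : Prop :=
  ∃ C c : ℝ, 0 < C ∧ 1 ≤ c ∧ ∀ F : MvPolynomial (Fin (n + 1)) ℤ, Good n d F → ∀ M : ℝ, 0 < M →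
    ∀ D : ℝ, 0 < D → BdUp F q ((n : ℝ) - q + ε) M (c * D) →
      BdUp F (q + 1) ((n : ℝ) - (q + 1) + ε) (C * M) D

theorem QQ_triv {d : ℕ} {ε : ℝ} {q : ℕ} (hq : n + 1 < 2 * (q + 1)) : QQ n d ε q := by
  refine ⟨1, 1, one_pos, le_rfl, ?_⟩
  intro F hF M hM D hD _ D' hD' _ U hU
  have : U = ∅ := by
    apply Finset.eq_empty_of_forall_notMem
    intro W hW
    obtain ⟨h1, h2, -⟩ := hU W hW
    have := hF.rk _ W h1 h2
    omega
  rw [this]; simp; positivity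

theorem exists_K {ε : ℝ} (hε : 0 < ε) (A B : ℝ) : ∃ K : ℕ, 2 ≤ K ∧ A ≤ K ∧ B * (K : ℝ) ^ (-ε) ≤ 1 / 4 := by
  have h1 : Filter.Tendsto (fun K : ℕ => B * (K : ℝ) ^ (-ε)) Filter.atTop (nhds (B * 0)) :=
    ((tendsto_rpow_neg_atTop hε).comp tendsto_natCast_atTop_atTop).const_mul B
  rw [mul_zero] at h1
  have h2 := h1.eventually (eventually_le_nhds (show (0 : ℝ) < 1 / 4 by norm_num))
  obtain ⟨K, h3, h4, h5⟩ := (h2.and ((Filter.eventually_ge_atTop 2).and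
    (tendsto_natCast_atTop_atTop.eventually (Filter.eventually_ge_atTop A)))).exists
  exact ⟨K, h4, h5, h3⟩

theorem QQ_step {d : ℕ} {ε : ℝ} (hε : 0 < ε) {q : ℕ} (hq : 1 ≤ q) (hqn : q + 2 ≤ n)
    (h : QQ n d ε (q + 1)) : QQ n d ε q := by
  obtain ⟨Cn, cn, hCn, hcn, hnext⟩ := h
  obtain ⟨K, hK2, hK1, hK3⟩ := exists_K hε (2 * cn * (((q + 1 : ℕ) + 1 : ℝ) * (q + 1 : ℕ)))
    (excC (q + 1) ((n : ℝ) - 2 * (q + 1 : ℕ) - 1 + ε) * Cn)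
  let c : ℕ := 3 * (q + 1) ^ q * K
  have hc1 : 1 ≤ c := by
    have : 0 < c := by positivity
    exact this
  have hcR : (1 : ℝ) ≤ c := by exact_mod_cast hc1
  let A : ℝ := lemC (n + 1) q d * (c : ℝ) ^ ((n : ℝ) - q + ε)
  have hA : 0 ≤ A := by positivity
  refine ⟨4 * A + 1, c, by positivity, hcR, ?_⟩
  intro F hF M hM D hD hb
  have hcast : (n : ℝ) - (q + 1) + ε = (n : ℝ) - ((q + 1 : ℕ) : ℝ) + ε := by push_cast; ring
  rw [hcast]
  apply scale_step hF (by omega) (by omega) hε (G := A * M) (by positivity) hCn hcn hK1 hK3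
    (by nlinarith)
  · intro D' m hm hmD hD' V hV
    have hmpos : (0 : ℝ) < m := by exact_mod_cast hm
    have hL := lemma_one F hF.deg hq (K := K) (by omega) m
      ⌊M * ((c * m : ℕ) : ℝ) ^ ((n : ℝ) - q + ε)⌋₊ V hV (by
        intro U hU
        apply Nat.le_floor
        apply hb ((c * m : ℕ) : ℝ) (by push_cast; positivity)
        · push_cast
          have : (m : ℝ) ≤ D := hmD.trans hD'
          gcongr
        · intro Θ hΘ
          obtain ⟨a1, a2, a3⟩ := hU Θ hΘ
          refine ⟨a1, a2, ?_⟩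
          exact_mod_cast a3)
    have hL2 : (#V : ℝ) * m ≤ lemC (n + 1) q d * (M * ((c * m : ℕ) : ℝ) ^ ((n : ℝ) - q + ε)) := by
      calc (#V : ℝ) * m ≤ ((lemC (n + 1) q d * ⌊M * ((c * m : ℕ) : ℝ) ^ ((n : ℝ) - q + ε)⌋₊ : ℕ) : ℝ) := by
            exact_mod_cast hL
        _ ≤ _ := by
            rw [Nat.cast_mul]
            exact mul_le_mul_of_nonneg_left (Nat.floor_le (by positivity)) (by positivity)
    have e1 : ((c * m : ℕ) : ℝ) ^ ((n : ℝ) - q + ε) =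
        (c : ℝ) ^ ((n : ℝ) - q + ε) * ((m : ℝ) ^ ((n : ℝ) - (q + 1 : ℕ) + ε) * m) := by
      rw [Nat.cast_mul, Real.mul_rpow (by positivity) (by positivity)]
      congr 1
      rw [← Real.rpow_add_one hmpos.ne']
      congr 1; push_cast; ring
    rw [e1] at hL2
    have e2 : (#V : ℝ) ≤ A * M * (m : ℝ) ^ ((n : ℝ) - (q + 1 : ℕ) + ε) := by
      apply le_of_mul_le_mul_right _ hmpos
      refine hL2.trans (le_of_eq ?_)
      simp only [A]; ring
    refine e2.trans ?_
    have : (0 : ℝ) ≤ (n : ℝ) - (q + 1 : ℕ) + ε := by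
      have : ((q + 1 : ℕ) : ℝ) ≤ n := by exact_mod_cast (by omega : q + 1 ≤ n)
      linarith
    gcongr
  · intro D' hD' hb'
    exact hnext F hF _ (by positivity) D' hD' hb'

theorem QQ_all {d : ℕ} {ε : ℝ} (hε : 0 < ε) (hn : 3 ≤ n) : ∀ j q : ℕ, 1 ≤ q → n + 1 ≤ q + j → QQ n d ε q := by
  intro j
  induction j with
  | zero => intro q hq h; exact QQ_triv (by omega)
  | succ j ih =>
    intro q hq h
    by_cases h2 : n + 1 < 2 * (q + 1)
    · exact QQ_triv h2
    · exact QQ_step hε hq (by omega) (ih (q + 1) (by omega) (by omega))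

theorem points_final {d : ℕ} {ε : ℝ} (hε : 0 < ε) (hn : 3 ≤ n) : ∃ C : ℝ, 0 < C ∧
    ∀ F : MvPolynomial (Fin (n + 1)) ℤ, Good n d F → ∀ Δ : ℝ, BdUp F 1 ((n : ℝ) - (1 : ℕ) + ε) C Δ := by
  obtain ⟨Cn, cn, hCn, hcn, hnext⟩ := QQ_all (d := d) hε hn (n + 1) 1 le_rfl (by omega)
  obtain ⟨K, hK2, hK1, hK3⟩ := exists_K hε (2 * cn * (((1 : ℕ) + 1 : ℝ) * (1 : ℕ)))
    (excC 1 ((n : ℝ) - 2 * (1 : ℕ) - 1 + ε) * Cn)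
  obtain ⟨C0, hC0, hpr⟩ := many_primes ε hε
  let A : ℝ := 2 * d * 4 ^ n * (2 + 8 * d * 9 ^ (n + 1) * C0) * (K : ℝ) ^ ((n : ℝ) - (1 : ℕ) + ε)
  have hA : 0 ≤ A := by positivity
  refine ⟨4 * A + 1, by positivity, ?_⟩
  intro F hF Δ
  apply scale_step hF le_rfl (by omega) hε (G := A) (by positivity) hCn hcn hK1 hK3 (by linarith)
  · intro D m hm hmD hD V hV
    set P := K * m with hP
    have hP1 : 1 ≤ P := by
      have : 2 * 1 ≤ K * m := Nat.mul_le_mul hK2 hm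
      omega
    have hPR : (1 : ℝ) ≤ P := by exact_mod_cast hP1
    have hPpos : (0 : ℝ) < P := by linarith
    have hPe : 1 ≤ (P : ℝ) ^ ε := Real.one_le_rpow hPR hε.le
    set E : ℕ := ⌈8 * d * 9 ^ (n + 1) * C0 * (P : ℝ) ^ ε⌉₊ with hE
    have hE1 : 8 * d * 9 ^ (n + 1) * C0 * (P : ℝ) ^ ε ≤ E := Nat.le_ceil _
    have hE2 : (E : ℝ) ≤ 8 * d * 9 ^ (n + 1) * C0 * (P : ℝ) ^ ε + 1 :=
      (Nat.ceil_lt_add_one (by positivity)).le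
    have hmP : (m : ℝ) ≤ P := by
      have : m ≤ K * m := Nat.le_mul_of_pos_left _ (by omega)
      exact_mod_cast this
    have h1 := points_count F hF.ne hF.deg (E := E) hK2 hm V (by
      intro W hW
      obtain ⟨a1, a2, a3, a4, a5⟩ := hV W hW
      refine ⟨a1, a2, a3, a4, ?_⟩
      intro S' b1 b2 b3
      exact a5 S' b1 b2 (by simpa using b3)) (by
      rw [← hP]
      have h2 : (8 : ℝ) * d * 9 ^ (n + 1) * m ≤ E * #(QP P) := by
        calc (8 : ℝ) * d * 9 ^ (n + 1) * m ≤ 8 * d * 9 ^ (n + 1) * (C0 * (P : ℝ) ^ ε * #(QP P)) := by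
              apply mul_le_mul_of_nonneg_left (hmP.trans (hpr P hP1)) (by positivity)
          _ = (8 * d * 9 ^ (n + 1) * C0 * (P : ℝ) ^ ε) * #(QP P) := by ring
          _ ≤ _ := mul_le_mul_of_nonneg_right hE1 (by positivity)
      exact_mod_cast h2)
    rw [← hP] at h1
    have h2 : (#V : ℝ) * P ≤ 2 * (1 + E) * d * (4 * P) ^ n := by exact_mod_cast h1
    have h3 : (1 + E : ℝ) ≤ (2 + 8 * d * 9 ^ (n + 1) * C0) * (P : ℝ) ^ ε := by linarith
    have h4 : (P : ℝ) ^ n * (P : ℝ) ^ ε = (P : ℝ) ^ ((n : ℝ) - (1 : ℕ) + ε) * P := by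
      rw [← Real.rpow_natCast, ← Real.rpow_add hPpos, ← Real.rpow_add_one hPpos.ne']
      congr 1; push_cast; ring
    have h5 : (#V : ℝ) * P ≤ (2 * d * 4 ^ n * (2 + 8 * d * 9 ^ (n + 1) * C0)) *
        (P : ℝ) ^ ((n : ℝ) - (1 : ℕ) + ε) * P := by
      calc (#V : ℝ) * P ≤ 2 * (1 + E) * d * (4 * P) ^ n := h2
        _ ≤ 2 * ((2 + 8 * d * 9 ^ (n + 1) * C0) * (P : ℝ) ^ ε) * d * (4 * P) ^ n := by gcongr
        _ = (2 * d * 4 ^ n * (2 + 8 * d * 9 ^ (n + 1) * C0)) * ((P : ℝ) ^ n * (P : ℝ) ^ ε) := by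
            rw [mul_pow]; ring
        _ = _ := by rw [h4]; ring
    have h6 := le_of_mul_le_mul_right h5 hPpos
    refine h6.trans ?_
    have h7 : (P : ℝ) ^ ((n : ℝ) - (1 : ℕ) + ε) ≤ (K : ℝ) ^ ((n : ℝ) - (1 : ℕ) + ε) *
        D ^ ((n : ℝ) - (1 : ℕ) + ε) := by
      rw [hP, Nat.cast_mul, Real.mul_rpow (by positivity) (by positivity)]
      have : (0 : ℝ) ≤ (n : ℝ) - (1 : ℕ) + ε := by
        have : ((1 : ℕ) : ℝ) ≤ n := by exact_mod_cast (by omega : 1 ≤ n)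
        linarith
      gcongr
    calc _ ≤ (2 * d * 4 ^ n * (2 + 8 * d * 9 ^ (n + 1) * C0)) *
        ((K : ℝ) ^ ((n : ℝ) - (1 : ℕ) + ε) * D ^ ((n : ℝ) - (1 : ℕ) + ε)) :=
          mul_le_mul_of_nonneg_left h7 (by positivity)
      _ = _ := by simp only [A]; ring
  · intro D' hD' hb'
    exact hnext F hF _ (by positivity) D' hD' hb'

end HB

namespace HB

open Finset

variable {s n : ℕ}

theorem aeval_smul {F : MvPolynomial (Fin s) ℤ} {d : ℕ} (hF : F.IsHomogeneous d) (a : ℚ)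
    (x : Fin s → ℚ) : MvPolynomial.aeval (a • x) F = a ^ d * MvPolynomial.aeval x F := by
  rw [MvPolynomial.aeval_def, MvPolynomial.aeval_def, MvPolynomial.eval₂_eq', MvPolynomial.eval₂_eq',
    Finset.mul_sum]
  apply Finset.sum_congr rfl
  intro m hm
  have h1 := hF (MvPolynomial.mem_support_iff.1 hm)
  have h2 : ∑ i, m i = d := by
    rw [← h1, Finsupp.weight_apply, Finsupp.sum_fintype _ _ (by simp)]
    simp
  simp only [Pi.smul_apply, smul_eq_mul, mul_pow]
  rw [Finset.prod_mul_distrib, Finset.prod_pow_eq_pow_sum, h2]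
  ring

theorem good_of {d : ℕ} (hd : 2 ≤ d) {F : MvPolynomial (Fin (n + 1)) ℤ} (hF : F.IsHomogeneous d)
    (hns : NonsingularZ F) : Good n d F := by
  refine ⟨?_, hF.totalDegree_le, ?_⟩
  · intro h
    have h1 := hns (fun _ => 1) (by intro i; rw [h]; simp)
    have := congrFun h1 0
    simp at this
  · intro r W hW hX
    exact rank_le (K := KK) hF hd hns hW hX

theorem prim_pm {x y : Fin s → ℤ} (hx : IsPrimitiveVec x) (hy : IsPrimitiveVec y) {a : ℚ}
    (h : toQ y = a • toQ x) : y = x ∨ y = -x := by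
  have h1 : ∀ i, (a.den : ℤ) * y i = a.num * x i := by
    intro i
    have h2 := congrFun h i
    simp only [toQ, Pi.smul_apply, smul_eq_mul] at h2
    have h3 : (a.den : ℚ) * y i = a.num * x i := by
      rw [h2, ← mul_assoc, Rat.den_mul_eq_num]
    exact_mod_cast h3
  have h2 : (univ.gcd fun i => (a.den : ℤ) * y i) = univ.gcd fun i => a.num * x i := by
    congr 1; funext i; exact h1 i
  rw [Finset.gcd_mul_left, Finset.gcd_mul_left] at h2
  unfold IsPrimitiveVec at hx hy
  rw [hx, hy, mul_one, mul_one, Int.normalize_of_nonneg (by positivity)] at h2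
  have hden : (a.den : ℤ) ≠ 0 := by exact_mod_cast a.den_ne_zero
  rcases le_total 0 a.num with h3 | h3
  · left
    rw [Int.normalize_of_nonneg h3] at h2
    ext i
    have := h1 i
    rw [← h2] at this
    exact mul_left_cancel₀ hden this
  · right
    rw [Int.normalize_of_nonpos h3] at h2
    ext i
    have h4 := h1 i
    have h5 : a.num = -(a.den : ℤ) := by omega
    rw [h5] at h4
    apply mul_left_cancel₀ hden
    rw [h4, Pi.neg_apply]; ring

theorem final {d : ℕ} (hd : 2 ≤ d) (hn : 3 ≤ n) {ε : ℝ} (hε : 0 < ε) :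
    ∃ C : ℝ, 0 < C ∧ ∀ F : MvPolynomial (Fin (n + 1)) ℤ,
      F.IsHomogeneous d → NonsingularZ F → ∀ B : ℝ, 1 ≤ B →
      (Set.ncard {x : Fin (n + 1) → ℤ | IsPrimitiveVec x ∧ heightVec x ≤ B ∧
          MvPolynomial.eval x F = 0} : ℝ) ≤ C * B ^ ((n : ℝ) - 1 + ε) := by
  classical
  obtain ⟨C, hC, hmain⟩ := points_final (d := d) hε hn
  refine ⟨2 * C, by positivity, ?_⟩
  intro F hF hns B hB
  set A := {x : Fin (n + 1) → ℤ | IsPrimitiveVec x ∧ heightVec x ≤ B ∧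
          MvPolynomial.eval x F = 0} with hA
  have hbd : ∀ x ∈ A, ∀ i, |x i| ≤ (⌊B⌋₊ : ℤ) := by
    intro x hx i
    have h1 := hx.2.1
    unfold heightVec at h1
    have h2 := Nat.le_floor h1
    have h3 : (x i).natAbs ≤ univ.sup fun i => (x i).natAbs :=
      Finset.le_sup (f := fun i => (x i).natAbs) (Finset.mem_univ i)
    rw [Int.abs_eq_natAbs]
    exact_mod_cast h3.trans h2
  have hfin : A.Finite := by
    apply Set.Finite.subset (Finset.finite_toSet
      (Fintype.piFinset (fun _ : Fin (n + 1) => Icc (-(⌊B⌋₊ : ℤ)) ⌊B⌋₊)))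
    intro x hx
    rw [Finset.mem_coe, Fintype.mem_piFinset]
    intro i
    rw [Finset.mem_Icc]
    exact abs_le.1 (hbd x hx i)
  rw [Set.ncard_eq_toFinset_card A hfin]
  set A' := hfin.toFinset with hA'
  have hmem : ∀ x, x ∈ A' ↔ x ∈ A := fun x => hfin.mem_toFinset
  let f : (Fin (n + 1) → ℤ) → Submodule ℚ (Fin (n + 1) → ℚ) := fun x => Submodule.span ℚ {toQ x}
  have hx0 : ∀ x ∈ A, toQ x ≠ 0 := by
    intro x hx h
    have h1 : x = 0 := by apply toQ_inj; rw [h]; ext i; simp [toQ]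
    have h2 := hx.1
    unfold IsPrimitiveVec at h2
    rw [h1] at h2
    have h3 : (univ.gcd (0 : Fin (n + 1) → ℤ)) = 0 := by
      rw [Finset.gcd_eq_zero_iff]; simp
    rw [h3] at h2
    exact absurd h2 (by norm_num)
  have hfib : #A' ≤ 2 * #(A'.image f) := by
    apply Finset.card_le_mul_card_image
    intro W hW
    obtain ⟨x, hx, rfl⟩ := Finset.mem_image.1 hW
    have hsub : A'.filter (fun y => f y = f x) ⊆ {x, -x} := by
      intro y hy
      obtain ⟨h1, h2⟩ := Finset.mem_filter.1 hy
      have h3 : toQ y ∈ Submodule.span ℚ {toQ x} := by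
        rw [show Submodule.span ℚ {toQ x} = f x from rfl, ← h2]
        exact Submodule.mem_span_singleton_self _
      obtain ⟨a, ha⟩ := Submodule.mem_span_singleton.1 h3
      have := prim_pm ((hmem x).1 hx).1 ((hmem y).1 h1).1 ha.symm
      simpa using this
    exact (Finset.card_le_card hsub).trans Finset.card_le_two
  have hU := hmain F (good_of hd hF hns) B B (by linarith) le_rfl (A'.image f) (by
    intro W hW
    obtain ⟨x, hx, rfl⟩ := Finset.mem_image.1 hW
    have hxA := (hmem x).1 hx
    refine ⟨finrank_span_singleton (hx0 x hxA), ?_, ?_⟩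
    · intro y hy
      obtain ⟨a, rfl⟩ := Submodule.mem_span_singleton.1 hy
      rw [aeval_smul hF, ← cast_eval_rat, hxA.2.2]
      simp
    · have h1 : TT (fun _ : Fin 1 => x) ≠ 0 := by
        apply TT_of_linInd
        rw [linearIndependent_unique_iff]
        exact hx0 x hxA
      have h2 := ht_le (W := f x) (b := fun _ : Fin 1 => x)
        (fun _ => Submodule.mem_span_singleton_self _) h1
      have h3 : TT (fun _ : Fin 1 => x) ≤ ⌊B⌋₊ := by
        apply TT_le
        intro J
        have : mnr (fun _ : Fin 1 => x) J = x (J 0) := by simp [mnr]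
        rw [this]; exact hbd x hxA _
      calc (ht 1 (f x) : ℝ) ≤ (⌊B⌋₊ : ℝ) := by exact_mod_cast h2.trans h3
        _ ≤ B := Nat.floor_le (by linarith))
  rw [Nat.cast_one] at hU
  calc (#A' : ℝ) ≤ 2 * (#(A'.image f) : ℝ) := by exact_mod_cast hfib
    _ ≤ 2 * (C * B ^ ((n : ℝ) - 1 + ε)) := by linarith
    _ = _ := by ring

end HB

/-- **Theorem 1 (main theorem).** For d ∈ {3,4}, n ∈ {5,6,7,8}, ε > 0 and any
non-singular form F of degree d in n+1 variables, the number of rational points of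
height at most B on the hypersurface X = {F = 0} satisfies
N_X(B) = O_{d,ε,n}(B^{n-1+ε}).  Rational points of height at most B are counted via
primitive integer solutions x of F(x) = 0 with max|x_i| ≤ B (each projective point
corresponds to exactly two such vectors). -/
theorem statement0 (ε : ℝ) (hε : 0 < ε) (d n : ℕ) (hd : d = 3 ∨ d = 4)
    (hn : n = 5 ∨ n = 6 ∨ n = 7 ∨ n = 8) :
    ∃ C : ℝ, 0 < C ∧ ∀ F : MvPolynomial (Fin (n + 1)) ℤ,
      F.IsHomogeneous d → NonsingularZ F → ∀ B : ℝ, 1 ≤ B →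
      (Set.ncard {x : Fin (n + 1) → ℤ | IsPrimitiveVec x ∧ heightVec x ≤ B ∧
          MvPolynomial.eval x F = 0} : ℝ) ≤ C * B ^ ((n : ℝ) - 1 + ε) := by
  exact HB.final (by omega) (by omega) hε

end
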